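/- arXiv:1402.0401 — 4 statements merged into one kernel-verified Lean document; each statement's English description precedes it below -/
import Mathlib

section
/- Let G = S_1 ∗ ... ∗ S_t be the free product of finitely many groups S_1, ..., S_t, where each S_i admits a subnormal series with all quotients infinite cyclic of length h_i (i.e., each S_i is strongly polycyclic with Hirsch number h_i), and let M = max{h_1, ..., h_t}. Then for all n_1, n_2 ≥ 1 and all subgroups H_1, H_2 of G generated by at most n_1 and n_2 elements respectively, the intersection H_1 ∩ H_2 is generated by at most M(n_1 − 1)(n_2 − 1) + M elements. In particular, G is strongly Howson. -/
/-- `c` is a subnormal series `G = c 0 ⊳ c 1 ⊳ … ⊳ c n = {1}` with all quotients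
infinite cyclic, i.e. a witness that `G` is strongly polycyclic with Hirsch number `n`. -/
def IsInfiniteCyclicSeries {G : Type*} [Group G] (n : ℕ) (c : Fin (n + 1) → Subgroup G) :
    Prop :=
  c 0 = ⊤ ∧ c (Fin.last n) = ⊥ ∧
    ∀ i : Fin n, c i.succ ≤ c i.castSucc ∧
      ∃ _h : ((c i.succ).subgroupOf (c i.castSucc)).Normal,
        IsCyclic (↥(c i.castSucc) ⧸ (c i.succ).subgroupOf (c i.castSucc)) ∧
          Infinite (↥(c i.castSucc) ⧸ (c i.succ).subgroupOf (c i.castSucc))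


namespace HN

structure GTree (G V E : Type*) [Group G] [MulAction G V] [MulAction G E] where
  src : E → V
  tgt : E → V
  half : E → Set V
  src_not : ∀ e, src e ∉ half e
  tgt_mem : ∀ e, tgt e ∈ half e
  cross : ∀ e f, f ≠ e → (src f ∈ half e ↔ tgt f ∈ half e)
  conn : ∀ p : V → Prop, (∀ e, p (src e) ↔ p (tgt e)) → ∀ u v, p u → p v
  src_smul : ∀ (g : G) (e : E), src (g • e) = g • src e
  tgt_smul : ∀ (g : G) (e : E), tgt (g • e) = g • tgt e
  half_smul : ∀ (g : G) (v : V) (e : E), g • v ∈ half (g • e) ↔ v ∈ half e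
  free : ∀ (g : G) (e : E), g • e = e → g = 1

namespace GTree

variable {G V E : Type*} [Group G] [MulAction G V] [MulAction G E] (T : GTree G V E)

/-- edges separating two vertices -/
def sep (u v : V) : Set E := {e | ¬ (u ∈ T.half e ↔ v ∈ T.half e)}

theorem mem_sep {u v : V} {e : E} : e ∈ T.sep u v ↔ ¬ (u ∈ T.half e ↔ v ∈ T.half e) := Iff.rfl

theorem sep_comm (u v : V) : T.sep u v = T.sep v u := by
  ext e; simp only [mem_sep]; tauto

@[simp] theorem sep_self (u : V) : T.sep u u = ∅ := by
  ext e; simp [mem_sep]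

theorem sep_tri (u v w : V) : T.sep u w ⊆ T.sep u v ∪ T.sep v w := by
  intro e; simp only [Set.mem_union, mem_sep]; tauto

theorem sep_smul {g : G} {u v : V} {e : E} : g • e ∈ T.sep (g • u) (g • v) ↔ e ∈ T.sep u v := by
  simp only [mem_sep, half_smul]

theorem sep_smul' {g : G} {u v : V} {e : E} : e ∈ T.sep (g • u) (g • v) ↔ g⁻¹ • e ∈ T.sep u v := by
  rw [← T.sep_smul (g := g) (e := g⁻¹ • e), smul_inv_smul]

theorem sep_edge (e : E) : T.sep (T.src e) (T.tgt e) = {e} := by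
  ext f
  simp only [mem_sep, Set.mem_singleton_iff]
  constructor
  · intro h
    by_contra hne
    exact h (T.cross f e (Ne.symm hne))
  · rintro rfl
    have := T.src_not f
    have := T.tgt_mem f
    tauto

theorem sep_finite (u v : V) : (T.sep u v).Finite := by
  refine T.conn (fun v => (T.sep u v).Finite) ?_ u v (by simp)
  intro e
  constructor
  · intro h
    exact (h.union (Set.finite_singleton e)).subset (by rw [← T.sep_edge]; exact T.sep_tri _ _ _)
  · intro h
    refine (h.union (Set.finite_singleton e)).subset ?_
    rw [← T.sep_edge, T.sep_comm (T.src e)]; exact T.sep_tri _ _ _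

/-- `e` joins `u` and `v` -/
def Joins (e : E) (u v : V) : Prop := (T.src e = u ∧ T.tgt e = v) ∨ (T.src e = v ∧ T.tgt e = u)

theorem Joins.sep {T : GTree G V E} {e : E} {u v : V} (h : T.Joins e u v) : T.sep u v = {e} := by
  rcases h with ⟨rfl, rfl⟩ | ⟨rfl, rfl⟩
  · exact T.sep_edge e
  · rw [T.sep_comm]; exact T.sep_edge e

theorem Joins.symm {T : GTree G V E} {e : E} {u v : V} (h : T.Joins e u v) : T.Joins e v u := by
  unfold Joins at *; tauto

theorem geo {u v : V} (h : u ≠ v) : ∃ e w, T.Joins e u w ∧ e ∈ T.sep u v := by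
  have := T.conn (fun v => u = v ∨ ∃ e w, T.Joins e u w ∧ e ∈ T.sep u v) ?_ u v (Or.inl rfl)
  · tauto
  · intro g
    have key : ∀ w w', T.Joins g w w' → (u = w ∨ ∃ e x, T.Joins e u x ∧ e ∈ T.sep u w) →
        (u = w' ∨ ∃ e x, T.Joins e u x ∧ e ∈ T.sep u w') := by
      intro w w' hj hp
      rcases hp with rfl | ⟨e, x, hx, he⟩
      · right
        exact ⟨g, w', hj, by rw [hj.sep]; rfl⟩
      · by_cases hge : g = e
        · subst hge
          have hx' := hx
          unfold Joins at hx hj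
          have hw : u ≠ w := by
            rintro rfl; simp at he
          left
          rcases hx with ⟨a, b⟩ | ⟨a, b⟩ <;> rcases hj with ⟨c, d⟩ | ⟨c, d⟩ <;> grind
        · right
          refine ⟨e, x, hx, ?_⟩
          have h1 : e ∉ T.sep w w' := by
            rw [hj.sep]; intro h; exact hge h.symm
          simp only [mem_sep] at *
          tauto
    exact ⟨key _ _ (Or.inl ⟨rfl, rfl⟩), key _ _ (Or.inr ⟨rfl, rfl⟩)⟩

/-- Path induction towards a fixed vertex. -/
theorem path_ind (v : V) (p : V → Prop) (h0 : p v)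
    (hs : ∀ u w e, T.Joins e u w → e ∈ T.sep u v → T.sep w v ⊆ T.sep u v → p w → p u) :
    ∀ u, p u := by
  have key : ∀ n : ℕ, ∀ u, (T.sep u v).ncard ≤ n → p u := by
    intro n
    induction n with
    | zero =>
      intro u hu
      by_cases huv : u = v
      · exact huv ▸ h0
      · obtain ⟨e, w, _, he⟩ := T.geo huv
        have : (T.sep u v).ncard = 0 := by omega
        rw [Set.ncard_eq_zero (T.sep_finite u v)] at this
        simp [this] at he
    | succ n ih =>
      intro u hu
      by_cases huv : u = v
      · exact huv ▸ h0
      · obtain ⟨e, w, hj, he⟩ := T.geo huv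
        have hsub : T.sep w v ⊆ T.sep u v \ {e} := by
          intro f hf
          have h1 : f ∈ T.sep u w ↔ f = e := by rw [hj.sep]; rfl
          have h2 : e ∈ T.sep u w := by rw [hj.sep]; rfl
          simp only [mem_sep, Set.mem_sdiff, Set.mem_singleton_iff] at *
          by_cases hfe : f = e
          · subst hfe; tauto
          · tauto
        refine hs u w e hj he (hsub.trans Set.sdiff_subset) (ih w ?_)
        have h3 := Set.ncard_le_ncard hsub ((T.sep_finite u v).subset Set.sdiff_subset)
        have h4 := Set.ncard_sdiff_singleton_add_one he (T.sep_finite u v)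
        omega
  intro u
  exact key _ u le_rfl

/-- leaving a set -/
theorem exit (Q : Set V) {u v : V} (hv : v ∈ Q) (hu : u ∉ Q) :
    ∃ e a b, T.Joins e a b ∧ a ∈ Q ∧ b ∉ Q ∧ e ∈ T.sep u v := by
  refine T.path_ind v (fun u => u ∉ Q → ∃ e a b, T.Joins e a b ∧ a ∈ Q ∧ b ∉ Q ∧ e ∈ T.sep u v)
    (fun h => absurd hv h) ?_ u hu
  intro u w e hj he hsub ih hu
  by_cases hw : w ∈ Q
  · exact ⟨e, w, u, hj.symm, hw, hu, he⟩
  · obtain ⟨f, a, b, h1, h2, h3, h4⟩ := ih hw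
    exact ⟨f, a, b, h1, h2, h3, hsub h4⟩

/-- component of `u` in the forest with edge set `S` -/
def comp (S : Set E) (u : V) : Set V := {w | T.sep u w ⊆ S}

variable {T} {S S' : Set E} {u v w : V}

theorem mem_comp : w ∈ T.comp S u ↔ T.sep u w ⊆ S := Iff.rfl

theorem self_mem_comp : u ∈ T.comp S u := by simp [mem_comp]

theorem comp_symm (h : w ∈ T.comp S u) : u ∈ T.comp S w := by
  rw [mem_comp, T.sep_comm]; exact h

theorem comp_trans (h : v ∈ T.comp S u) (h' : w ∈ T.comp S v) : w ∈ T.comp S u :=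
  (T.sep_tri u v w).trans (Set.union_subset h h')

theorem comp_eq (h : v ∈ T.comp S u) : T.comp S v = T.comp S u := by
  ext w
  exact ⟨comp_trans h, comp_trans (comp_symm h)⟩

theorem comp_mono (h : S ⊆ S') : T.comp S u ⊆ T.comp S' u := fun _ hw => Set.Subset.trans hw h

theorem Joins.mem_comp {e : E} (h : T.Joins e u v) (he : e ∈ S) : v ∈ T.comp S u := by
  rw [GTree.mem_comp, h.sep]; simpa using he

theorem Joins.smul {e : E} (h : T.Joins e u v) (g : G) : T.Joins (g • e) (g • u) (g • v) := by
  unfold Joins at *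
  simp only [src_smul, tgt_smul]
  rcases h with ⟨rfl, rfl⟩ | ⟨rfl, rfl⟩ <;> simp

theorem joins_src_tgt (e : E) : T.Joins e (T.src e) (T.tgt e) := Or.inl ⟨rfl, rfl⟩

theorem smul_mem_comp {g : G} : g • w ∈ T.comp ((g⁻¹ • ·) ⁻¹' S) (g • u) ↔ w ∈ T.comp S u := by
  simp only [mem_comp]
  constructor
  · intro h e he
    have := h (T.sep_smul.2 he : g • e ∈ _)
    simpa using this
  · intro h e he
    rw [T.sep_smul'] at he
    exact h he

/-- invariance of an edge set under a subgroup -/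
def Inv (H : Subgroup G) (S : Set E) : Prop := ∀ h ∈ H, ∀ e ∈ S, h • e ∈ S

theorem Inv.iff {H : Subgroup G} (hS : Inv H S) {h : G} (hh : h ∈ H) {e : E} :
    h • e ∈ S ↔ e ∈ S :=
  ⟨fun h' => by simpa using hS h⁻¹ (H.inv_mem hh) _ h', hS h hh e⟩

theorem Inv.smul_comp {H : Subgroup G} (hS : Inv H S) {h : G} (hh : h ∈ H) :
    h • w ∈ T.comp S (h • u) ↔ w ∈ T.comp S u := by
  have : ((h⁻¹ • ·) ⁻¹' S) = S := by
    ext e; exact hS.iff (H.inv_mem hh)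
  conv_lhs => rw [← this]
  exact smul_mem_comp

/-- number of orbits -/
noncomputable def orb {X : Type*} [MulAction G X] (H : Subgroup G) (A : Set X) : Set (Set X) :=
  Set.image (fun x => MulAction.orbit H x) A

theorem orbit_eq_iff' {X : Type*} [MulAction G X] {H : Subgroup G} {x y : X} :
    MulAction.orbit H x = MulAction.orbit H y ↔ ∃ h ∈ H, h • y = x := by
  rw [MulAction.orbit_eq_iff, MulAction.mem_orbit_iff]
  constructor
  · rintro ⟨⟨h, hh⟩, e⟩; exact ⟨h, hh, e⟩
  · rintro ⟨h, hh, e⟩; exact ⟨⟨h, hh⟩, e⟩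

theorem mem_orb {X : Type*} [MulAction G X] {H : Subgroup G} {A : Set X} {x : X} :
    MulAction.orbit H x ∈ orb H A ↔ ∃ h ∈ H, h • x ∈ A := by
  constructor
  · rintro ⟨a, ha, e⟩
    obtain ⟨h, hh, e⟩ := orbit_eq_iff'.1 e
    exact ⟨h, hh, e ▸ ha⟩
  · rintro ⟨h, hh, ha⟩
    exact ⟨_, ha, orbit_eq_iff'.2 ⟨h, hh, rfl⟩⟩

/-- counting by an equivariant relation -/
theorem orb_le {X Y : Type*} [MulAction G X] [MulAction G Y] {H : Subgroup G} {A : Set X} {B : Set Y}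
    (R : X → Y → Prop) (hR : ∀ h ∈ H, ∀ x y, R x y → R (h • x) (h • y))
    (hex : ∀ x ∈ A, ∃ y ∈ B, R x y) (huniq : ∀ x x' y, R x y → R x' y → x = x')
    (hB : (orb H B).Finite) : (orb H A).Finite ∧ (orb H A).ncard ≤ (orb H B).ncard := by
  classical
  have h1 : ∀ o ∈ orb H A, ∃ x y, x ∈ A ∧ y ∈ B ∧ R x y ∧ o = MulAction.orbit H x := by
    rintro _ ⟨x, hx, rfl⟩
    obtain ⟨y, hy, hxy⟩ := hex x hx
    exact ⟨x, y, hx, hy, hxy, rfl⟩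
  rcases A.eq_empty_or_nonempty with rfl | ⟨x0, hx0⟩
  · simp [orb]
  obtain ⟨y0, hy0, -⟩ := hex x0 hx0
  have : Nonempty X := ⟨x0⟩
  have : Nonempty Y := ⟨y0⟩
  choose! fx fy hfx hfy hf ho using h1
  have hm : Set.MapsTo (fun o => MulAction.orbit H (fy o)) (orb H A) (orb H B) := by
    intro o hoA
    exact ⟨_, hfy o hoA, rfl⟩
  have hi : Set.InjOn (fun o => MulAction.orbit H (fy o)) (orb H A) := by
    intro o h1 o' h2 heq
    obtain ⟨h, hh, e⟩ := orbit_eq_iff'.1 heq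
    rw [ho o h1, ho o' h2, orbit_eq_iff']
    refine ⟨h, hh, huniq _ _ (fy o) ?_ (hf o h1)⟩
    rw [← e]
    exact hR h hh _ _ (hf o' h2)
  exact ⟨Set.Finite.of_injOn hm hi hB, Set.ncard_le_ncard_of_injOn _ hm hi hB⟩

end GTree
end HN


namespace HN
namespace GTree

variable {G V E : Type*} [Group G] [MulAction G V] [MulAction G E] (T : GTree G V E)

/-- Essential vertex sets. -/
def Ess (H : Subgroup G) (C : Set V) : Prop := ∃ x ∈ H, x ≠ 1 ∧ ∃ w ∈ C, x • w ∈ C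

theorem Ess.mono {H H' : Subgroup G} {C C' : Set V} (hH : H ≤ H') (hC : C ⊆ C') (h : Ess H C) :
    Ess H' C' := by
  obtain ⟨x, hx, h1, w, hw, hxw⟩ := h
  exact ⟨x, hH hx, h1, w, hC hw, hC hxw⟩

/-- free vertices -/
def freeV (H : Subgroup G) (C : Set V) : Set V := {w | w ∈ C ∧ ∀ x ∈ H, x • w = w → x = 1}

/-- the data of a cofinite subtree -/
structure Cof (H : Subgroup G) (X : Set E) (v0 : V) : Prop where
  inv : Inv H X
  base : ∀ h ∈ H, h • v0 ∈ T.comp X v0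
  fin : (orb H X).Finite

variable {T} {H : Subgroup G} {X : Set E} {v0 : V}

theorem Cof.smul_mem (hX : T.Cof H X v0) {h : G} (hh : h ∈ H) {w : V} (hw : w ∈ T.comp X v0) :
    h • w ∈ T.comp X v0 :=
  comp_trans (hX.base h hh) ((hX.inv.smul_comp hh).2 hw)

theorem orb_mono {Y : Type*} [MulAction G Y] {A B : Set Y} (h : A ⊆ B) : orb H A ⊆ orb H B :=
  Set.image_mono h

theorem orb_image_finite {Y Z : Type*} [MulAction G Y] [MulAction G Z] {A : Set Y} (f : Y → Z)
    (hf : ∀ (g : G) y, f (g • y) = g • f y) (h : (orb H A).Finite) : (orb H (Set.image f A)).Finite := by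
  refine (h.image (fun o => Set.image f o)).subset ?_
  rintro _ ⟨_, ⟨a, ha, rfl⟩, rfl⟩
  refine ⟨MulAction.orbit H a, ⟨a, ha, rfl⟩, ?_⟩
  ext z
  constructor
  · rintro ⟨_, ⟨g, rfl⟩, rfl⟩
    refine ⟨g, ?_⟩
    exact (hf g a).symm
  · rintro ⟨g, rfl⟩
    refine ⟨g • a, ⟨g, rfl⟩, ?_⟩
    exact hf g a

theorem Cof.finV (hX : T.Cof H X v0) : (orb H (T.comp X v0)).Finite := by
  have h1 := orb_image_finite T.src T.src_smul hX.fin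
  have h2 := orb_image_finite T.tgt T.tgt_smul hX.fin
  refine (((Set.finite_singleton (MulAction.orbit H v0)).union h1).union h2).subset ?_
  rintro _ ⟨w, hw, rfl⟩
  by_cases h : w = v0
  · subst h; simp
  · obtain ⟨e, b, hj, he⟩ := T.geo h
    have heX : e ∈ X := by
      rw [T.sep_comm] at he; exact hw he
    rcases hj with ⟨rfl, -⟩ | ⟨-, rfl⟩
    · left; right; exact ⟨_, ⟨e, heX, rfl⟩, rfl⟩
    · right; exact ⟨_, ⟨e, heX, rfl⟩, rfl⟩

theorem Cof.finVf (hX : T.Cof H X v0) : (orb H (freeV H (T.comp X v0))).Finite :=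
  hX.finV.subset (orb_mono fun _ h => h.1)

theorem mem_freeV_of_not_ess {C D : Set V} (hC : ¬ Ess H C) (hCD : C ⊆ D) {w : V} (hw : w ∈ C) :
    w ∈ freeV H D := by
  refine ⟨hCD hw, fun x hx hxw => ?_⟩
  by_contra h1
  exact hC ⟨x, hx, h1, w, hw, hxw.symm ▸ hw⟩

theorem eq_of_not_ess {C : Set V} (hC : ¬ Ess H C) {u w : V} (hu : u ∈ C) (hw : w ∈ C)
    (h : MulAction.orbit H u = MulAction.orbit H w) : u = w := by
  obtain ⟨x, hx, rfl⟩ := orbit_eq_iff'.1 h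
  by_cases h1 : x = 1
  · simp [h1]
  · exact absurd ⟨x, hx, h1, w, hw, hu⟩ hC

theorem Cof.finite_of_not_ess (hX : T.Cof H X v0) {C : Set V} (hC : ¬ Ess H C)
    (hCX : C ⊆ T.comp X v0) : C.Finite :=
  Set.Finite.of_injOn (f := fun w => MulAction.orbit H w) (t := orb H (T.comp X v0))
    (fun w hw => ⟨w, hCX hw, rfl⟩) (fun _ hu _ hw h => eq_of_not_ess hC hu hw h) hX.finV

theorem Cof.finite_edges (hX : T.Cof H X v0) {u : V} (hu : ∀ x ∈ H, x • u = u → x = 1) :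
    {e | e ∈ X ∧ ∃ b, T.Joins e u b}.Finite := by
  have key : ∀ f : E → V, (∀ (g : G) (e : E), f (g • e) = g • f e) →
      {e | e ∈ X ∧ f e = u}.Finite := by
    intro f hf
    refine Set.Finite.of_injOn (f := fun w => MulAction.orbit H w) (t := orb H X)
      (fun w hw => ⟨w, hw.1, rfl⟩) ?_ hX.fin
    intro e he e' he' h
    obtain ⟨x, hx, rfl⟩ := orbit_eq_iff'.1 h
    have h2 : f (x • e') = u := he.2
    rw [hf, he'.2] at h2
    simp [hu x hx h2]
  refine ((key T.src T.src_smul).union (key T.tgt T.tgt_smul)).subset ?_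
  rintro e ⟨he, b, ⟨h1, -⟩ | ⟨-, h1⟩⟩
  · left; exact ⟨he, h1⟩
  · right; exact ⟨he, h1⟩

variable [LinearOrder E]

def low (X : Set E) (e : E) : Set E := {f | f ∈ X ∧ f < e}
def lowe (X : Set E) (e : E) : Set E := {f | f ∈ X ∧ f ≤ e}

theorem low_sub_lowe {X : Set E} {e : E} : low X e ⊆ lowe X e := fun _ h => ⟨h.1, h.2.le⟩
theorem low_sub {X : Set E} {e : E} : low X e ⊆ X := fun _ h => h.1
theorem lowe_sub {X : Set E} {e : E} : lowe X e ⊆ X := fun _ h => h.1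
theorem lowe_sub_low {X : Set E} {e f : E} (h : e < f) : lowe X e ⊆ low X f :=
  fun _ h' => ⟨h'.1, h'.2.trans_lt h⟩

variable (T) in
/-- bridges -/
def bridges (H : Subgroup G) (X : Set E) : Set E :=
  {e | e ∈ X ∧ Ess H (T.comp (low X e) (T.src e)) ∧ Ess H (T.comp (low X e) (T.tgt e))}

theorem bridges_mono {H' : Subgroup G} {X' : Set E} (hH : H ≤ H') (hX : X ⊆ X') :
    T.bridges H X ⊆ T.bridges H' X' := by
  rintro e ⟨h0, h1, h2⟩
  have : low X e ⊆ low X' e := fun f hf => ⟨hX hf.1, hf.2⟩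
  exact ⟨hX h0, h1.mono hH (comp_mono this), h2.mono hH (comp_mono this)⟩

def Good (H : Subgroup G) (a : Set V → ℕ) (C : Set V) (v : V) : Prop :=
  ¬ Ess H C ∧ ∀ u ∈ C, a (MulAction.orbit H u) ≤ a (MulAction.orbit H v)

theorem Good.anti {a : Set V → ℕ} {C D : Set V} {v : V} (h : Good H a D v) (hCD : C ⊆ D) :
    Good H a C v :=
  ⟨fun h' => h.1 (h'.mono le_rfl hCD), fun u hu => h.2 u (hCD hu)⟩

variable (T) in
/-- the matching relation -/
def Mat (H : Subgroup G) (X : Set E) (v0 : V) (a : Set V → ℕ) (v : V) (e : E) : Prop :=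
  e ∈ X ∧ v ∈ T.comp X v0 ∧ Good H a (T.comp (low X e) v) v ∧ ¬ Good H a (T.comp (lowe X e) v) v

theorem comp_lowe_cases {e : E} {w : V} (hw : w ∈ T.comp (lowe X e) (T.src e)) :
    w ∈ T.comp (low X e) (T.src e) ∨ w ∈ T.comp (low X e) (T.tgt e) := by
  have hh := T.sep_edge e
  by_cases he : e ∈ T.sep (T.src e) w
  · right
    intro f hf
    have h3 : f ∈ T.sep (T.src e) (T.tgt e) ↔ f = e := by rw [hh]; rfl
    have h4 : e ∈ T.sep (T.src e) (T.tgt e) := by rw [hh]; rfl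
    have h6 : f ≠ e := by
      rintro rfl
      simp only [mem_sep] at *
      tauto
    have h5 : f ∈ T.sep (T.src e) w := by
      simp only [mem_sep] at *
      tauto
    have := hw h5
    exact ⟨this.1, lt_of_le_of_ne this.2 h6⟩
  · left
    intro f hf
    have := hw hf
    exact ⟨this.1, lt_of_le_of_ne this.2 (fun h => he (h ▸ hf))⟩

theorem Mat.side {a : Set V → ℕ} {v : V} {e : E} (h : T.Mat H X v0 a v e) :
    v ∈ T.comp (low X e) (T.src e) ∨ v ∈ T.comp (low X e) (T.tgt e) := by
  obtain ⟨heX, hv, hg, hb⟩ := h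
  have : ¬ (T.comp (lowe X e) v ⊆ T.comp (low X e) v) := fun h => hb (hg.anti h)
  obtain ⟨w, hw, hw'⟩ := Set.not_subset.1 this
  obtain ⟨f, p, q, hj, hp, hq, hf⟩ := T.exit (T.comp (low X e) v) (u := w) self_mem_comp hw'
  rw [T.sep_comm] at hf
  have hf' := hw hf
  have : f = e := by
    by_contra hne
    exact hq (comp_trans hp (hj.mem_comp ⟨hf'.1, lt_of_le_of_ne hf'.2 hne⟩))
  subst this
  rcases hj with ⟨rfl, -⟩ | ⟨-, rfl⟩
  · left; exact comp_symm hp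
  · right; exact comp_symm hp

section

theorem smul_lt_iff (hord : ∀ (g : G) (e f : E), e < f → g • e < g • f)
    (g : G) (e f : E) : g • e < g • f ↔ e < f :=
  ⟨fun h => by simpa using hord g⁻¹ _ _ h, hord g e f⟩

theorem smul_le_iff (hord : ∀ (g : G) (e f : E), e < f → g • e < g • f)
    (g : G) (e f : E) : g • e ≤ g • f ↔ e ≤ f := by
  rw [← not_lt, ← not_lt, smul_lt_iff hord]

theorem comp_low_smul (hord : ∀ (g : G) (e f : E), e < f → g • e < g • f)
    (hX : Inv H X) {h : G} (hh : h ∈ H) {e : E} {u w : V} :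
    h • w ∈ T.comp (low X (h • e)) (h • u) ↔ w ∈ T.comp (low X e) u := by
  rw [← smul_mem_comp (T := T) (S := low X e) (g := h)]
  have : ((h⁻¹ • ·) ⁻¹' (low X e)) = low X (h • e) := by
    ext f
    simp only [low, Set.mem_preimage, Set.mem_setOf_eq, hX.iff (H.inv_mem hh)]
    rw [← smul_lt_iff hord h, smul_inv_smul]
  rw [this]

theorem comp_lowe_smul (hord : ∀ (g : G) (e f : E), e < f → g • e < g • f)
    (hX : Inv H X) {h : G} (hh : h ∈ H) {e : E} {u w : V} :
    h • w ∈ T.comp (lowe X (h • e)) (h • u) ↔ w ∈ T.comp (lowe X e) u := by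
  rw [← smul_mem_comp (T := T) (S := lowe X e) (g := h)]
  have : ((h⁻¹ • ·) ⁻¹' (lowe X e)) = lowe X (h • e) := by
    ext f
    simp only [lowe, Set.mem_preimage, Set.mem_setOf_eq, hX.iff (H.inv_mem hh)]
    rw [← smul_le_iff hord h, smul_inv_smul]
  rw [this]

theorem Good.smul_aux {a : Set V → ℕ} {v : V} {C D : Set V} {h : G} (hh : h ∈ H)
    (hCD : ∀ w, h • w ∈ D ↔ w ∈ C) : Good H a D (h • v) ↔ Good H a C v := by
  have ho : ∀ w : V, MulAction.orbit H (h • w) = MulAction.orbit H w :=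
    fun w => orbit_eq_iff'.2 ⟨h, hh, rfl⟩
  have hE : Ess H D ↔ Ess H C := by
    constructor
    · rintro ⟨x, hx, h1, w, hw, hxw⟩
      refine ⟨h⁻¹ * x * h, H.mul_mem (H.mul_mem (H.inv_mem hh) hx) hh, ?_, h⁻¹ • w, ?_, ?_⟩
      · intro h2
        apply h1
        have : x = h * (h⁻¹ * x * h) * h⁻¹ := by group
        rw [this, h2]; group
      · rw [← hCD]; simpa using hw
      · rw [← hCD]; simpa [mul_smul] using hxw
    · rintro ⟨x, hx, h1, w, hw, hxw⟩
      refine ⟨h * x * h⁻¹, H.mul_mem (H.mul_mem hh hx) (H.inv_mem hh), ?_, h • w, (hCD _).2 hw, ?_⟩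
      · intro h2
        apply h1
        have : x = h⁻¹ * (h * x * h⁻¹) * h := by group
        rw [this, h2]; group
      · rw [← (hCD _)] at hxw; simpa [mul_smul] using hxw
  unfold Good
  rw [hE, ho v]
  refine and_congr_right fun _ => ⟨fun h1 u hu => ?_, fun h1 u hu => ?_⟩
  · rw [← ho u]; exact h1 _ ((hCD u).2 hu)
  · have := h1 (h⁻¹ • u) (by rw [← hCD]; simpa using hu)
    rw [← ho] at this
    simpa using this

theorem Mat.smul (hord : ∀ (g : G) (e f : E), e < f → g • e < g • f)
    (hX : T.Cof H X v0) {a : Set V → ℕ} {v : V} {e : E} (h : T.Mat H X v0 a v e)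
    {g : G} (hg : g ∈ H) : T.Mat H X v0 a (g • v) (g • e) := by
  obtain ⟨h1, h2, h3, h4⟩ := h
  refine ⟨hX.inv g hg _ h1, hX.smul_mem hg h2, ?_, ?_⟩
  · exact (Good.smul_aux hg fun w => comp_low_smul hord hX.inv hg).2 h3
  · intro h5
    exact h4 ((Good.smul_aux hg fun w => comp_lowe_smul hord hX.inv hg).1 h5)

/-- if the `≤ e` component is essential then it contains an essential `< e` component -/
theorem ess_low_of_ess_lowe (hord : ∀ (g : G) (e f : E), e < f → g • e < g • f)
    (hX : T.Cof H X v0) {u : V} {e : E}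
    (h : Ess H (T.comp (lowe X e) u)) :
    ∃ z ∈ T.comp (lowe X e) u, Ess H (T.comp (low X e) z) := by
  obtain ⟨x, hx, h1, w, hw, hxw⟩ := h
  have hwx : x • w ∈ T.comp (lowe X e) w := comp_trans (comp_symm hw) hxw
  rcases lt_trichotomy (x • e) e with hlt | heq | hgt
  · refine ⟨x • w, hxw, x, hx, h1, x • w, self_mem_comp, ?_⟩
    have := (comp_lowe_smul (T := T) hord hX.inv hx (e := e)).2 hwx
    exact comp_mono (lowe_sub_low hlt) this
  · exact absurd (T.free x e heq) h1
  · have hlt : x⁻¹ • e < e := by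
      have := hord x⁻¹ _ _ hgt
      simpa using this
    refine ⟨w, hw, x⁻¹, H.inv_mem hx, by simpa using h1, w, self_mem_comp, ?_⟩
    have := (comp_lowe_smul (T := T) hord hX.inv (H.inv_mem hx) (e := e)).2 (comp_symm hwx)
    rw [inv_smul_smul] at this
    exact comp_mono (lowe_sub_low hlt) this

theorem not_ess_union (hord : ∀ (g : G) (e f : E), e < f → g • e < g • f)
    (hX : T.Cof H X v0) {e : E}
    (h1 : ¬ Ess H (T.comp (low X e) (T.src e))) (h2 : ¬ Ess H (T.comp (low X e) (T.tgt e))) :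
    ¬ Ess H (T.comp (lowe X e) (T.src e)) := by
  intro h
  obtain ⟨z, hz, hE⟩ := ess_low_of_ess_lowe hord hX h
  rcases comp_lowe_cases hz with h' | h'
  · rw [comp_eq h'] at hE; exact h1 hE
  · rw [comp_eq h'] at hE; exact h2 hE

theorem tgt_mem_lowe {e : E} (he : e ∈ X) : T.tgt e ∈ T.comp (lowe X e) (T.src e) :=
  (joins_src_tgt e).mem_comp ⟨he, le_rfl⟩

theorem Mat.not_bridge {a : Set V → ℕ} {v : V} {e : E} (h : T.Mat H X v0 a v e) :
    e ∉ T.bridges H X := by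
  rintro ⟨-, h1, h2⟩
  rcases h.side with h' | h'
  · rw [← comp_eq h'] at h1; exact h.2.2.1.1 h1
  · rw [← comp_eq h'] at h2; exact h.2.2.1.1 h2

theorem Mat.uniq (hord : ∀ (g : G) (e f : E), e < f → g • e < g • f)
    (hX : T.Cof H X v0) {a : Set V → ℕ}
    (ha : Set.InjOn a (orb H (freeV H (T.comp X v0)))) {v v' : V} {e : E}
    (h : T.Mat H X v0 a v e) (h' : T.Mat H X v0 a v' e) : v = v' := by
  have hsub : ∀ {v}, T.Mat H X v0 a v e → T.comp (low X e) v ⊆ T.comp X v0 := by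
    intro v hv w hw
    exact comp_trans hv.2.1 (comp_mono low_sub hw)
  have hfree : ∀ {v}, T.Mat H X v0 a v e → v ∈ freeV H (T.comp X v0) := fun hv =>
    mem_freeV_of_not_ess hv.2.2.1.1 (hsub hv) self_mem_comp
  by_cases hc : v' ∈ T.comp (low X e) v
  · have e1 := h.2.2.1.2 v' hc
    have e2 := h'.2.2.1.2 v (comp_symm hc)
    have := ha ⟨v, hfree h, rfl⟩ ⟨v', hfree h', rfl⟩ (le_antisymm e2 e1)
    exact eq_of_not_ess h.2.2.1.1 self_mem_comp hc this
  · exfalso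
    -- auxiliary: symmetrical statement
    have key : ∀ p q : V, T.Mat H X v0 a p e → T.Mat H X v0 a q e →
        p ∈ T.comp (low X e) (T.src e) → q ∈ T.comp (low X e) (T.tgt e) → False := by
      intro p q hp hq hps hqt
      have n1 := hp.2.2.1.1
      have n2 := hq.2.2.1.1
      rw [comp_eq hps] at n1
      rw [comp_eq hqt] at n2
      have n3 := not_ess_union hord hX n1 n2
      have hpl : p ∈ T.comp (lowe X e) (T.src e) := comp_mono low_sub_lowe hps
      have hql : q ∈ T.comp (lowe X e) (T.src e) :=
        comp_trans (tgt_mem_lowe hp.1) (comp_mono low_sub_lowe hqt)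
      have b1 := hp.2.2.2
      have b2 := hq.2.2.2
      have g1 := hp.2.2.1.2
      have g2 := hq.2.2.1.2
      rw [comp_eq hpl] at b1
      rw [comp_eq hql] at b2
      rw [comp_eq hps] at g1
      rw [comp_eq hqt] at g2
      have c1 : a (MulAction.orbit H p) < a (MulAction.orbit H q) := by
        by_contra hle
        refine b1 ⟨n3, fun u hu => ?_⟩
        rcases comp_lowe_cases hu with hu | hu
        · exact g1 u hu
        · exact (g2 u hu).trans (not_lt.1 hle)
      refine b2 ⟨n3, fun u hu => ?_⟩
      rcases comp_lowe_cases hu with hu | hu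
      · exact (g1 u hu).trans c1.le
      · exact g2 u hu
    rcases h.side with s1 | s1 <;> rcases h'.side with s2 | s2
    · exact hc (comp_trans (comp_symm s1) s2)
    · exact key v v' h h' s1 s2
    · exact key v' v h' h s2 s1
    · exact hc (comp_trans (comp_symm s1) s2)

theorem Mat.uniq' {a : Set V → ℕ} {v : V} {e e' : E}
    (h : T.Mat H X v0 a v e) (h' : T.Mat H X v0 a v e') : e = e' := by
  rcases lt_trichotomy e e' with hlt | heq | hgt
  · exact absurd (h'.2.2.1.anti (comp_mono (lowe_sub_low hlt))) h.2.2.2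
  · exact heq
  · exact absurd (h.2.2.1.anti (comp_mono (lowe_sub_low hgt))) h'.2.2.2

theorem ends_mem (hX : T.Cof H X v0) {e : E} (he : e ∈ X) (hs : ∀ e ∈ X, T.src e ∈ T.comp X v0) :
    T.src e ∈ T.comp X v0 ∧ T.tgt e ∈ T.comp X v0 :=
  ⟨hs e he, comp_trans (hs e he) ((joins_src_tgt e).mem_comp he)⟩

theorem exists_mat_of_not_bridge (hord : ∀ (g : G) (e f : E), e < f → g • e < g • f)
    (hX : T.Cof H X v0) (hs : ∀ e ∈ X, T.src e ∈ T.comp X v0)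
    {a : Set V → ℕ} (ha : Set.InjOn a (orb H (freeV H (T.comp X v0)))) {e : E}
    (he : e ∈ X) (heb : e ∉ T.bridges H X) :
    ∃ v ∈ freeV H (T.comp X v0), T.Mat H X v0 a v e := by
  obtain ⟨hsrc, htgt⟩ := ends_mem hX he hs
  have hsub : ∀ {v}, v ∈ T.comp X v0 → T.comp (low X e) v ⊆ T.comp X v0 := by
    intro v hv w hw
    exact comp_trans hv (comp_mono low_sub hw)
  -- eldest vertex of a nonessential component
  have eld : ∀ u ∈ T.comp X v0, ¬ Ess H (T.comp (low X e) u) → ∃ v ∈ T.comp (low X e) u,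
      v ∈ freeV H (T.comp X v0) ∧ Good H a (T.comp (low X e) v) v := by
    intro u hu hn
    obtain ⟨v, hv, hmax⟩ := Set.exists_max_image (T.comp (low X e) u)
      (fun w => a (MulAction.orbit H w)) (hX.finite_of_not_ess hn (hsub hu)) ⟨u, self_mem_comp⟩
    refine ⟨v, hv, mem_freeV_of_not_ess hn (hsub hu) hv, ?_⟩
    rw [comp_eq hv]
    exact ⟨hn, hmax⟩
  have hst : T.tgt e ∈ T.comp (lowe X e) (T.src e) := tgt_mem_lowe he
  -- one side essential
  have one : ∀ u u', u ∈ T.comp X v0 → u' ∈ T.comp (lowe X e) u →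
      ¬ Ess H (T.comp (low X e) u) → Ess H (T.comp (low X e) u') →
      ∃ v ∈ freeV H (T.comp X v0), T.Mat H X v0 a v e := by
    intro u u' hu huu hn hE
    obtain ⟨v, hv, hvf, hg⟩ := eld u hu hn
    refine ⟨v, hvf, he, hvf.1, hg, fun hb => hb.1 (hE.mono le_rfl ?_)⟩
    rw [comp_eq (comp_mono low_sub_lowe hv), ← comp_eq huu]
    exact comp_mono low_sub_lowe
  by_cases h1 : Ess H (T.comp (low X e) (T.src e))
  · have h2 : ¬ Ess H (T.comp (low X e) (T.tgt e)) := fun h2 => heb ⟨he, h1, h2⟩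
    exact one _ _ htgt (comp_symm hst) h2 h1
  · by_cases h2 : Ess H (T.comp (low X e) (T.tgt e))
    · exact one _ _ hsrc hst h1 h2
    · obtain ⟨v, hv, hvf, hg⟩ := eld _ hsrc h1
      obtain ⟨v', hv', hvf', hg'⟩ := eld _ htgt h2
      have n3 := not_ess_union hord hX h1 h2
      have hvl : v ∈ T.comp (lowe X e) (T.src e) := comp_mono low_sub_lowe hv
      have hvl' : v' ∈ T.comp (lowe X e) (T.src e) :=
        comp_trans hst (comp_mono low_sub_lowe hv')
      have hne : a (MulAction.orbit H v) ≠ a (MulAction.orbit H v') := by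
        intro h
        have h3 := ha ⟨v, hvf, rfl⟩ ⟨v', hvf', rfl⟩ h
        have h4 := eq_of_not_ess n3 hvl hvl' h3
        subst h4
        have h5 : T.tgt e ∈ T.comp (low X e) (T.src e) := comp_trans hv (comp_symm hv')
        have h6 : e ∈ T.sep (T.src e) (T.tgt e) := by rw [T.sep_edge]; rfl
        exact lt_irrefl _ (h5 h6).2
      rcases lt_or_gt_of_ne hne with hlt | hlt
      · refine ⟨v, hvf, he, hvf.1, hg, fun hb => ?_⟩
        rw [comp_eq hvl] at hb
        exact absurd (hb.2 v' hvl') (not_le.2 hlt)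
      · refine ⟨v', hvf', he, hvf'.1, hg', fun hb => ?_⟩
        rw [comp_eq hvl'] at hb
        exact absurd (hb.2 v hvl) (not_le.2 hlt)

theorem exists_mat_of_free (hX : T.Cof H X v0) (hH : H ≠ ⊥)
    {a : Set V → ℕ} {v : V} (hv : v ∈ freeV H (T.comp X v0)) :
    ∃ e ∈ X \ T.bridges H X, T.Mat H X v0 a v e := by
  classical
  suffices ∃ e, T.Mat H X v0 a v e by
    obtain ⟨e, he⟩ := this
    exact ⟨e, ⟨he.1, he.not_bridge⟩, he⟩
  set S : Set E := {f | f ∈ X ∧ Good H a (T.comp (lowe X f) v) v} with hS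
  set Q := T.comp S v with hQ
  have hQX : Q ⊆ T.comp X v0 := fun w hw => comp_trans hv.1 (comp_mono (fun f hf => hf.1) hw)
  have hself : Good H a {v} v := by
    refine ⟨?_, by simp⟩
    rintro ⟨x, hx, h1, w, hw, hxw⟩
    simp only [Set.mem_singleton_iff] at hw hxw
    subst hw
    exact h1 (hv.2 x hx hxw)
  -- two points of Q lie in a common good component
  have hpair : ∀ p ∈ Q, ∀ q ∈ Q, ∃ C, p ∈ C ∧ q ∈ C ∧ Good H a C v := by
    intro p hp q hq
    have hfin := (T.sep_finite v p).union (T.sep_finite v q)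
    rcases (T.sep v p ∪ T.sep v q).eq_empty_or_nonempty with h0 | hne
    · have hp' : p = v := by
        by_contra h
        obtain ⟨e, _, _, he⟩ := T.geo h
        have : e ∈ T.sep v p ∪ T.sep v q := Or.inl (by rwa [T.sep_comm])
        simp [h0] at this
      have hq' : q = v := by
        by_contra h
        obtain ⟨e, _, _, he⟩ := T.geo h
        have : e ∈ T.sep v p ∪ T.sep v q := Or.inr (by rwa [T.sep_comm])
        simp [h0] at this
      exact ⟨{v}, hp', hq', hself⟩
    · obtain ⟨f, hf, hmax⟩ := Set.exists_max_image _ id hfin hne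
      have hfS : f ∈ S := (Set.union_subset hp hq) hf
      exact ⟨T.comp (lowe X f) v, fun g hg => ⟨(hp hg).1, hmax g (Or.inl hg)⟩,
        fun g hg => ⟨(hq hg).1, hmax g (Or.inr hg)⟩, hfS.2⟩
  have hQg : Good H a Q v := by
    constructor
    · rintro ⟨x, hx, h1, w, hw, hxw⟩
      obtain ⟨C, hC1, hC2, hC⟩ := hpair _ hw _ hxw
      exact hC.1 ⟨x, hx, h1, w, hC1, hC2⟩
    · intro u hu
      obtain ⟨C, hC1, hC2, hC⟩ := hpair _ hu _ hu
      exact hC.2 u hC1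
  -- boundary edges
  set D : Set E := {e | e ∈ X ∧ ∃ p q, T.Joins e p q ∧ p ∈ Q ∧ q ∉ Q} with hD
  have hQfin : Q.Finite := hX.finite_of_not_ess hQg.1 hQX
  have hDfin : D.Finite := by
    refine (hQfin.biUnion (t := fun p => {e | e ∈ X ∧ ∃ b, T.Joins e p b}) ?_).subset ?_
    · intro p hp
      exact hX.finite_edges (mem_freeV_of_not_ess hQg.1 hQX hp).2
    · rintro e ⟨he, p, q, hj, hp, hq⟩
      simp only [Set.mem_iUnion]
      exact ⟨p, hp, he, q, hj⟩
  have hDne : D.Nonempty := by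
    obtain ⟨x, hx, h1⟩ := (Subgroup.ne_bot_iff_exists_ne_one.1 hH : ∃ x : H, x ≠ 1) |>.elim
      fun x hx => (⟨x.1, x.2, fun h => hx (Subtype.ext h)⟩ : ∃ x, x ∈ H ∧ x ≠ 1)
    have hxQ : x • v ∉ Q := fun h => hQg.1 ⟨x, hx, h1, v, self_mem_comp, h⟩
    obtain ⟨e, p, q, hj, hp, hq, he⟩ := T.exit Q (u := x • v) (v := v) self_mem_comp hxQ
    refine ⟨e, ?_, p, q, hj, hp, hq⟩
    have : v ∈ T.comp X (x • v) :=
      comp_trans (comp_symm (hX.smul_mem hx hv.1)) hv.1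
    exact this he
  obtain ⟨e, he, hmin⟩ := Set.exists_min_image D id hDfin hDne
  obtain ⟨heX, p, q, hj, hp, hq⟩ := he
  have heS : e ∉ S := fun h => hq (comp_trans hp (hj.mem_comp h))
  refine ⟨e, heX, hv.1, hQg.anti ?_, fun hg => heS ⟨heX, hg⟩⟩
  intro w hw
  by_contra hwQ
  obtain ⟨f, p', q', hj', hp', hq', hf⟩ := T.exit Q (u := w) (v := v) self_mem_comp hwQ
  rw [T.sep_comm] at hf
  have hf' := hw hf
  exact absurd (hmin f ⟨hf'.1, p', q', hj', hp', hq'⟩) (not_le.2 hf'.2)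

theorem exists_age (hord : ∀ (g : G) (e f : E), e < f → g • e < g • f)
    (hX : T.Cof H X v0) :
    ∃ a : Set V → ℕ, Set.InjOn a (orb H (freeV H (T.comp X v0))) :=
  Set.countable_iff_exists_injOn.1 hX.finVf.countable

/-- edges = bridges + non bridges -/
theorem card_edges (hord : ∀ (g : G) (e f : E), e < f → g • e < g • f)
    (hX : T.Cof H X v0) :
    (orb H X).ncard = (orb H (T.bridges H X)).ncard + (orb H (X \ T.bridges H X)).ncard := by
  have hb : T.bridges H X ⊆ X := fun e he => he.1
  have hinv : ∀ h ∈ H, ∀ e, e ∈ T.bridges H X → h • e ∈ T.bridges H X := by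
    intro h hh e he
    have hE : ∀ u : V, Ess H (T.comp (low X e) u) → Ess H (T.comp (low X (h • e)) (h • u)) := by
      intro u hu
      by_contra hn
      have h1 := (Good.smul_aux (H := H) (a := fun _ => 0) (v := u) hh
        (fun w => comp_low_smul (T := T) hord hX.inv hh (e := e) (u := u) (w := w))).1
        ⟨hn, fun _ _ => le_rfl⟩
      exact h1.1 hu
    exact ⟨hX.inv h hh e he.1, by rw [T.src_smul]; exact hE _ he.2.1,
      by rw [T.tgt_smul]; exact hE _ he.2.2⟩
  rw [← Set.ncard_union_eq ?_ (hX.fin.subset (orb_mono hb)) (hX.fin.subset (orb_mono Set.sdiff_subset))]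
  · congr 1
    unfold orb
    rw [← Set.image_union, Set.union_sdiff_cancel hb]
  · rw [Set.disjoint_left]
    rintro _ ⟨e, he, rfl⟩ h2
    obtain ⟨h, hh, hd⟩ := mem_orb.1 h2
    exact hd.2 (hinv h hh e he)

theorem card_le (hord : ∀ (g : G) (e f : E), e < f → g • e < g • f)
    (hX : T.Cof H X v0) (hs : ∀ e ∈ X, T.src e ∈ T.comp X v0) :
    (orb H X).ncard ≤ (orb H (T.bridges H X)).ncard + (orb H (freeV H (T.comp X v0))).ncard := by
  obtain ⟨a, ha⟩ := exists_age hord hX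
  rw [card_edges hord hX]
  refine Nat.add_le_add_left ?_ _
  refine (orb_le (fun e v => T.Mat H X v0 a v e) (fun h hh e v hm => hm.smul hord hX hh) ?_ ?_
    hX.finVf).2
  · rintro e ⟨he, hb⟩
    exact exists_mat_of_not_bridge hord hX hs ha he hb
  · intro e e' v h h'
    exact h.uniq' h'

theorem card_ge (hord : ∀ (g : G) (e f : E), e < f → g • e < g • f)
    (hX : T.Cof H X v0) (hH : H ≠ ⊥) :
    (orb H (T.bridges H X)).ncard + (orb H (freeV H (T.comp X v0))).ncard ≤ (orb H X).ncard := by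
  obtain ⟨a, ha⟩ := exists_age hord hX
  rw [card_edges hord hX]
  refine Nat.add_le_add_left ?_ _
  refine (orb_le (fun v e => T.Mat H X v0 a v e) (fun h hh e v hm => hm.smul hord hX hh) ?_ ?_
    (hX.fin.subset (orb_mono Set.sdiff_subset))).2
  · intro v hv
    exact exists_mat_of_free hX hH hv
  · intro e e' v h h'
    exact h.uniq hord hX ha h'

end
end GTree
end HN


namespace HN
namespace GTree
section Hulls

variable {G V E : Type*} [Group G] [MulAction G V] [MulAction G E] {T : GTree G V E}

/-- `A` is a side of the edge `e`. -/
def Side (T : GTree G V E) (e : E) (A : Set V) : Prop :=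
  ∀ k, k ≠ e → (T.src k ∈ A ↔ T.tgt k ∈ A)

theorem side_half (e : E) : T.Side e (T.half e) := fun k hk => T.cross e k hk

theorem Side.compl {e : E} {A : Set V} (h : T.Side e A) : T.Side e Aᶜ := by
  intro k hk
  simp only [Set.mem_compl_iff, h k hk]

theorem side_disjoint {f g : E} {A B : Set V} (hA : T.Side f A) (hB : T.Side g B)
    (hf1 : T.src f ∉ B) (hf2 : T.tgt f ∉ B) (hg1 : T.src g ∉ A) (hg2 : T.tgt g ∉ A)
    {w : V} (h1 : w ∈ A) (h2 : w ∈ B) : False := by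
  have := T.conn (fun w => w ∈ A ∧ w ∈ B) ?_ w (T.src f) ⟨h1, h2⟩
  · exact hf1 this.2
  · intro k
    by_cases hkf : k = f
    · subst hkf; simp [hf1, hf2]
    · by_cases hkg : k = g
      · subst hkg; simp [hg1, hg2]
      · simp only [hA k hkf, hB k hkg]

theorem sep_src_sub {u v : V} {e : E} (he : e ∈ T.sep u v) : T.sep u (T.src e) ⊆ T.sep u v := by
  intro f hf
  by_cases hfe : f = e
  · rw [hfe]; exact he
  by_contra hn
  have hc := T.cross f e (Ne.symm hfe)
  have hc' := T.cross e f hfe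
  simp only [mem_sep, not_not] at he hf hn
  have key : ∀ A B : Set V, T.Side f A → T.Side e B → T.src e ∉ A → T.tgt e ∉ A → T.src f ∉ B →
      T.tgt f ∉ B → u ∈ A → v ∈ A → (u ∈ B ∨ v ∈ B) → False := by
    intro A B h1 h2 h3 h4 h5 h6 h7 h8 h9
    rcases h9 with h9 | h9
    · exact side_disjoint h1 h2 h5 h6 h3 h4 h7 h9
    · exact side_disjoint h1 h2 h5 h6 h3 h4 h8 h9
  have h1 := side_half (T := T) f
  have h2 := side_half (T := T) e
  have h1' := h1.compl
  have h2' := h2.compl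
  by_cases a : u ∈ T.half f <;> by_cases b : T.src f ∈ T.half e
  · exact key _ _ h1 h2' (by tauto) (by tauto) (by simp; tauto) (by simp; tauto) a (by tauto)
      (by simp only [Set.mem_compl_iff]; tauto)
  · exact key _ _ h1 h2 (by tauto) (by tauto) (by tauto) (by tauto) a (by tauto) (by tauto)
  · exact key _ _ h1' h2' (by simp; tauto) (by simp; tauto) (by simp; tauto) (by simp; tauto) a
      (by simp; tauto) (by simp only [Set.mem_compl_iff]; tauto)
  · exact key _ _ h1' h2 (by simp; tauto) (by simp; tauto) (by tauto) (by tauto) a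
      (by simp; tauto) (by tauto)

/-- The hull of an orbit. -/
def hull (T : GTree G V E) (H : Subgroup G) (v0 : V) : Set E :=
  {e | ∃ x ∈ H, ∃ y ∈ H, e ∈ T.sep (x • v0) (y • v0)}

theorem hull_mono {H H' : Subgroup G} (h : H ≤ H') (v0 : V) : T.hull H v0 ⊆ T.hull H' v0 := by
  rintro e ⟨x, hx, y, hy, he⟩
  exact ⟨x, h hx, y, h hy, he⟩

theorem hull_inv (H : Subgroup G) (v0 : V) : Inv H (T.hull H v0) := by
  rintro h hh e ⟨x, hx, y, hy, he⟩
  refine ⟨h * x, H.mul_mem hh hx, h * y, H.mul_mem hh hy, ?_⟩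
  rw [mul_smul, mul_smul, T.sep_smul]; exact he

theorem hull_base (H : Subgroup G) (v0 : V) : ∀ h ∈ H, h • v0 ∈ T.comp (T.hull H v0) v0 := by
  intro h hh e he
  exact ⟨1, H.one_mem, h, hh, by simpa using he⟩

theorem hull_src (H : Subgroup G) (v0 : V) :
    ∀ e ∈ T.hull H v0, T.src e ∈ T.comp (T.hull H v0) v0 := by
  rintro e ⟨x, hx, y, hy, he⟩
  refine comp_trans (hull_base H v0 x hx) ?_
  intro f hf
  exact ⟨x, hx, y, hy, sep_src_sub he hf⟩

theorem hull_fin_of_closure (F : Finset G) (v0 : V) :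
    (orb (Subgroup.closure (F : Set G)) (T.hull (Subgroup.closure (F : Set G)) v0)).Finite := by
  set H := Subgroup.closure (F : Set G) with hH
  have h0 : ∀ z ∈ H, ∀ e ∈ T.sep v0 (z • v0), ∃ h ∈ H, ∃ t ∈ F, h • e ∈ T.sep v0 (t • v0) := by
    intro z hz
    refine Subgroup.closure_induction (p := fun z _ => ∀ e ∈ T.sep v0 (z • v0),
      ∃ h ∈ H, ∃ t ∈ F, h • e ∈ T.sep v0 (t • v0)) ?_ ?_ ?_ ?_ hz
    · intro t ht e he
      exact ⟨1, H.one_mem, t, ht, by simpa using he⟩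
    · intro e he
      simp at he
    · intro x y hx hy ihx ihy e he
      rcases T.sep_tri v0 (x • v0) _ he with h1 | h1
      · exact ihx e h1
      · rw [mul_smul, T.sep_smul'] at h1
        obtain ⟨h, hh, t, ht, h2⟩ := ihy _ h1
        refine ⟨h * x⁻¹, H.mul_mem hh (H.inv_mem hx), t, ht, ?_⟩
        rw [mul_smul]; exact h2
    · intro x hx ih e he
      have h1 : x • e ∈ T.sep v0 (x • v0) := by
        rw [T.sep_comm, ← T.sep_smul (g := x⁻¹)]
        simpa using he
      obtain ⟨h, hh, t, ht, h2⟩ := ih _ h1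
      exact ⟨h * x, H.mul_mem hh hx, t, ht, by rw [mul_smul]; exact h2⟩
  have hfin : (⋃ t ∈ F, T.sep v0 (t • v0)).Finite :=
    F.finite_toSet.biUnion fun t _ => T.sep_finite _ _
  refine (hfin.image (fun e => MulAction.orbit H e)).subset ?_
  rintro _ ⟨e, ⟨x, hx, y, hy, he⟩, rfl⟩
  have h1 : x⁻¹ • e ∈ T.sep v0 ((x⁻¹ * y) • v0) := by
    rw [← T.sep_smul (g := x)]
    simpa [mul_smul] using he
  obtain ⟨h, hh, t, ht, h2⟩ := h0 _ (H.mul_mem (H.inv_mem hx) hy) _ h1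
  refine ⟨h • x⁻¹ • e, ?_, ?_⟩
  · simp only [Set.mem_iUnion]
    exact ⟨t, ht, h2⟩
  · exact orbit_eq_iff'.2 ⟨h * x⁻¹, H.mul_mem hh (H.inv_mem hx), by rw [mul_smul]⟩

theorem orb_inter {H K : Subgroup G} {A B C : Set E} (hA : A ⊆ B) (hA' : A ⊆ C)
    (hB : (orb H B).Finite) (hC : (orb K C).Finite) (T : GTree G V E) :
    (orb (H ⊓ K) A).Finite ∧ (orb (H ⊓ K) A).ncard ≤ (orb H B).ncard * (orb K C).ncard := by
  classical
  have hfin := hB.prod hC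
  rcases A.eq_empty_or_nonempty with rfl | ⟨x0, hx0⟩
  · simp [orb]
  have : Nonempty E := ⟨x0⟩
  have h1 : ∀ o ∈ orb (H ⊓ K) A, ∃ x, x ∈ A ∧ o = MulAction.orbit (H ⊓ K : Subgroup G) x := by
    rintro _ ⟨x, hx, rfl⟩
    exact ⟨x, hx, rfl⟩
  choose! f hf ho using h1
  have hm : Set.MapsTo (fun o => (MulAction.orbit H (f o), MulAction.orbit K (f o)))
      (orb (H ⊓ K) A) (orb H B ×ˢ orb K C) := by
    intro o hoA
    exact ⟨⟨_, hA (hf o hoA), rfl⟩, ⟨_, hA' (hf o hoA), rfl⟩⟩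
  have hi : Set.InjOn (fun o => (MulAction.orbit H (f o), MulAction.orbit K (f o)))
      (orb (H ⊓ K) A) := by
    intro o h1 o' h2 heq
    simp only [Prod.mk.injEq] at heq
    obtain ⟨h, hh, e⟩ := orbit_eq_iff'.1 heq.1
    obtain ⟨k, hk, e'⟩ := orbit_eq_iff'.1 heq.2
    have : h = k := by
      have h3 : (k⁻¹ * h) • f o' = f o' := by rw [mul_smul, e, ← e', inv_smul_smul]
      have := T.free _ _ h3
      rw [inv_mul_eq_one] at this
      exact this.symm
    rw [ho o h1, ho o' h2, orbit_eq_iff']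
    exact ⟨h, ⟨hh, this ▸ hk⟩, e⟩
  refine ⟨Set.Finite.of_injOn hm hi hfin, ?_⟩
  rw [← Set.ncard_prod]
  exact Set.ncard_le_ncard_of_injOn _ hm hi hfin

theorem hull_cof (F : Finset G) (v0 : V) :
    T.Cof (Subgroup.closure (F : Set G)) (T.hull (Subgroup.closure (F : Set G)) v0) v0 :=
  ⟨hull_inv _ _, hull_base _ _, hull_fin_of_closure F v0⟩

theorem hull_cof_inter {H K : Subgroup G} {v0 : V} (hH : T.Cof H (T.hull H v0) v0)
    (hK : T.Cof K (T.hull K v0) v0) : T.Cof (H ⊓ K) (T.hull (H ⊓ K) v0) v0 :=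
  ⟨hull_inv _ _, hull_base _ _,
    (orb_inter (hull_mono inf_le_left v0) (hull_mono inf_le_right v0) hH.fin hK.fin T).1⟩

theorem bridges_inter [LinearOrder E] {H K : Subgroup G} {v0 : V}
    (hH : T.Cof H (T.hull H v0) v0) (hK : T.Cof K (T.hull K v0) v0) :
    (orb (H ⊓ K) (T.bridges (H ⊓ K) (T.hull (H ⊓ K) v0))).ncard ≤
      (orb H (T.bridges H (T.hull H v0))).ncard * (orb K (T.bridges K (T.hull K v0))).ncard :=
  (orb_inter (bridges_mono inf_le_left (hull_mono inf_le_left v0))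
    (bridges_mono inf_le_right (hull_mono inf_le_right v0))
    (hH.fin.subset (orb_mono fun _ h => h.1)) (hK.fin.subset (orb_mono fun _ h => h.1)) T).2

end Hulls
end GTree
end HN

namespace HN

/-- generated by at most `m` elements -/
def GenLE {G : Type*} [Group G] (K : Subgroup G) (m : ℕ) : Prop :=
  ∃ F : Finset G, Subgroup.closure (F : Set G) = K ∧ F.card ≤ m

/-- surjects onto `ℤ^d` -/
def SurjZ {G : Type*} [Group G] (K : Subgroup G) (d : ℕ) : Prop :=
  ∃ (ι : Type) (_ : Fintype ι), Fintype.card ι = d ∧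
    ∃ φ : K →* Multiplicative (ι → ℤ), Function.Surjective φ

section
variable {G : Type*} [Group G]

theorem GenLE.mono {K : Subgroup G} {m m' : ℕ} (h : GenLE K m) (hm : m ≤ m') : GenLE K m' := by
  obtain ⟨F, h1, h2⟩ := h
  exact ⟨F, h1, h2.trans hm⟩

theorem genLE_bot : GenLE (⊥ : Subgroup G) 0 := ⟨∅, by simp, by simp⟩

theorem GenLE.sup {K L : Subgroup G} {m n : ℕ} (hK : GenLE K m) (hL : GenLE L n) :
    GenLE (K ⊔ L) (m + n) := by
  classical
  obtain ⟨F, rfl, h2⟩ := hK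
  obtain ⟨F', rfl, h2'⟩ := hL
  refine ⟨F ∪ F', ?_, (Finset.card_union_le _ _).trans (add_le_add h2 h2')⟩
  rw [Finset.coe_union, Subgroup.closure_union]

theorem genLE_zpowers (x : G) : GenLE (Subgroup.zpowers x) 1 :=
  ⟨{x}, by rw [Finset.coe_singleton, Subgroup.zpowers_eq_closure], by simp⟩

theorem GenLE.map {G' : Type*} [Group G'] {K : Subgroup G} {m : ℕ} (hK : GenLE K m) (f : G →* G') :
    GenLE (K.map f) m := by
  classical
  obtain ⟨F, rfl, h2⟩ := hK
  refine ⟨F.image f, ?_, Finset.card_image_le.trans h2⟩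
  rw [Finset.coe_image, MonoidHom.map_closure]

theorem surjZ_zero (K : Subgroup G) : SurjZ K 0 :=
  ⟨Empty, inferInstance, by simp, 1, fun x => ⟨1, by ext i; exact i.elim⟩⟩

theorem surjZ_one {K : Subgroup G} (φ : K →* Multiplicative ℤ) (hφ : Function.Surjective φ) :
    SurjZ K 1 := by
  refine ⟨Unit, inferInstance, by simp,
    (AddMonoidHom.toMultiplicative (Pi.constAddMonoidHom Unit ℤ)).comp φ, ?_⟩
  intro x
  obtain ⟨k, hk⟩ := hφ (Multiplicative.ofAdd (x.toAdd ()))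
  exact ⟨k, by
    apply Multiplicative.toAdd.injective
    funext i
    simp [hk]⟩

theorem SurjZ.map {G' : Type*} [Group G'] {K : Subgroup G} {d : ℕ} (hK : SurjZ K d) (f : G →* G')
    (hf : Function.Injective f) : SurjZ (K.map f) d := by
  obtain ⟨ι, _, hd, φ, hφ⟩ := hK
  refine ⟨ι, _, hd, φ.comp (K.equivMapOfInjective f hf).symm.toMonoidHom, ?_⟩
  exact hφ.comp (K.equivMapOfInjective f hf).symm.surjective

theorem SurjZ.le {K : Subgroup G} {d n : ℕ} (hK : SurjZ K d) (hn : GenLE K n) : d ≤ n := by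
  classical
  obtain ⟨ι, _, hd, φ, hφ⟩ := hK
  obtain ⟨F, hKF, hF⟩ := hn
  let g : G → (ι → ℤ) := fun x => if h : x ∈ K then (φ ⟨x, h⟩).toAdd else 0
  let W : Submodule ℤ (ι → ℤ) := Submodule.span ℤ ((F.image g : Finset (ι → ℤ)) : Set (ι → ℤ))
  have hg : ∀ x (h : x ∈ K), g x = (φ ⟨x, h⟩).toAdd := fun x h => by simp [g, h]
  have hW : ∀ x (h : x ∈ K), g x ∈ W := by
    intro x hx
    rw [← hKF] at hx
    refine Subgroup.closure_induction (p := fun x _ => g x ∈ W) ?_ ?_ ?_ ?_ hx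
    · intro x hx
      apply Submodule.subset_span
      simp only [Finset.coe_image]
      exact ⟨x, hx, rfl⟩
    · rw [hg 1 K.one_mem]
      have : (⟨1, K.one_mem⟩ : K) = 1 := rfl
      rw [this, map_one]; exact W.zero_mem
    · intro x y hx hy h1 h2
      rw [hKF] at hx hy
      rw [hg (x * y) (K.mul_mem hx hy)]
      have : (⟨x * y, K.mul_mem hx hy⟩ : K) = ⟨x, hx⟩ * ⟨y, hy⟩ := rfl
      rw [this, map_mul]
      rw [hg x hx] at h1
      rw [hg y hy] at h2
      exact W.add_mem h1 h2
    · intro x hx h1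
      rw [hKF] at hx
      rw [hg x⁻¹ (K.inv_mem hx)]
      have : (⟨x⁻¹, K.inv_mem hx⟩ : K) = ⟨x, hx⟩⁻¹ := rfl
      rw [this, map_inv]
      rw [hg x hx] at h1
      exact W.neg_mem h1
  have htop : W = ⊤ := by
    rw [eq_top_iff]
    intro y _
    obtain ⟨k, hk⟩ := hφ (Multiplicative.ofAdd y)
    have := hW k.1 k.2
    have e : (⟨k.1, k.2⟩ : K) = k := rfl
    rw [hg k.1 k.2, e, hk] at this
    exact this
  have h1 : Module.finrank ℤ W ≤ (F.image g).card := finrank_span_finset_le_card _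
  rw [htop, finrank_top, Module.finrank_fintype_fun_eq_card] at h1
  have := Finset.card_image_le (s := F) (f := g)
  omega

theorem surjZ_zpowers {x : G} (hx : ¬ IsOfFinOrder x) : SurjZ (Subgroup.zpowers x) 1 := by
  have hinj : Function.Injective (zpowersHom G x) := by
    intro a b hab
    have := (injective_zpow_iff_not_isOfFinOrder.2 hx) (a₁ := a.toAdd) (a₂ := b.toAdd)
      (by simpa [zpowersHom_apply] using hab)
    exact Multiplicative.toAdd.injective this
  have hr : Subgroup.zpowers x = Subgroup.map (zpowersHom G x) ⊤ := by
    ext y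
    simp [Subgroup.mem_zpowers_iff, zpowersHom_apply, Multiplicative.exists]
  rw [hr]
  refine SurjZ.map ?_ _ hinj
  exact surjZ_one (Subgroup.topEquiv (G := Multiplicative ℤ)).toMonoidHom
    (Subgroup.topEquiv (G := Multiplicative ℤ)).surjective

/-- Extending homomorphisms through ping-pong. -/
theorem pingpong_ext {V : Type*} [MulAction G V] (htf : ∀ x : G, x ≠ 1 → ¬ IsOfFinOrder x)
    {K L : Subgroup G} {X Y : Set V} (hX : X.Nonempty) (hY : Y.Nonempty)
    (hXY : ∀ w, w ∈ X → w ∈ Y → False) (hK : ∀ k ∈ K, k ≠ 1 → ∀ w ∈ Y, k • w ∈ X)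
    (hL : ∀ k ∈ L, k ≠ 1 → ∀ w ∈ X, k • w ∈ Y) {A : Type*} [CommGroup A] (φ : K →* A) (ψ : L →* A) :
    ∃ χ : (K ⊔ L : Subgroup G) →* A, (∀ k : K, χ ⟨k, le_sup_left (a := K) k.2⟩ = φ k) ∧
      ∀ k : L, χ ⟨k, le_sup_right (a := K) k.2⟩ = ψ k := by
  classical
  by_cases htriv : K = ⊥ ∧ L = ⊥
  · obtain ⟨rfl, rfl⟩ := htriv
    refine ⟨1, fun k => ?_, fun k => ?_⟩
    · rw [Subsingleton.elim k 1]; simp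
    · rw [Subsingleton.elim k 1]; simp
  let P : Bool → Subgroup G := fun b => cond b K L
  let Z : Bool → Set V := fun b => cond b X Y
  have hcard : 3 ≤ Cardinal.mk Bool ∨ ∃ i, 3 ≤ Cardinal.mk (P i) := by
    right
    have key : ∀ Q : Subgroup G, Q ≠ ⊥ → 3 ≤ Cardinal.mk Q := by
      intro Q hQ
      have : Infinite Q := by
        obtain ⟨x, hx⟩ := Subgroup.ne_bot_iff_exists_ne_one.1 hQ
        have h1 : ¬ IsOfFinOrder x.1 := htf x.1 (fun h => hx (Subtype.ext h))
        have h2 : ¬ IsOfFinOrder x := fun h => h1 (Q.subtype.isOfFinOrder h)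
        exact Infinite.of_injective _ (injective_zpow_iff_not_isOfFinOrder.2 h2)
      calc (3 : Cardinal) ≤ Cardinal.aleph0 := by
            exact_mod_cast (Cardinal.natCast_lt_aleph0 (n := 3)).le
        _ ≤ _ := Cardinal.aleph0_le_mk Q
    by_cases h1 : K = ⊥
    · exact ⟨false, key L (fun h => htriv ⟨h1, h⟩)⟩
    · exact ⟨true, key K h1⟩
  let f : ∀ b, P b →* G := fun b => (P b).subtype
  have hinj : Function.Injective (Monoid.CoprodI.lift f) := by
    refine Monoid.CoprodI.lift_injective_of_ping_pong f hcard Z ?_ ?_ ?_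
    · rintro (_ | _)
      · exact hY
      · exact hX
    · rintro (_ | _) (_ | _) h
      · exact absurd rfl h
      · exact Set.disjoint_left.2 fun w h1 h2 => hXY w h2 h1
      · exact Set.disjoint_left.2 fun w h1 h2 => hXY w h1 h2
      · exact absurd rfl h
    · rintro (_ | _) (_ | _) h x hx
      · exact absurd rfl h
      · rintro _ ⟨w, hw, rfl⟩
        exact hL x.1 x.2 (fun h => hx (Subtype.ext h)) w hw
      · rintro _ ⟨w, hw, rfl⟩
        exact hK x.1 x.2 (fun h => hx (Subtype.ext h)) w hw
      · exact absurd rfl h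
  let F : Monoid.CoprodI (fun b => P b) →* A :=
    Monoid.CoprodI.lift (fun b => match b with
      | true => φ
      | false => ψ)
  have hle : ∀ x : (K ⊔ L : Subgroup G), x.1 ∈ (Monoid.CoprodI.lift f).range := by
    have : K ⊔ L ≤ (Monoid.CoprodI.lift f).range := by
      refine sup_le ?_ ?_
      · intro k hk
        exact ⟨Monoid.CoprodI.of (i := true) ⟨k, hk⟩, by simp [f]⟩
      · intro k hk
        exact ⟨Monoid.CoprodI.of (i := false) ⟨k, hk⟩, by simp [f]⟩
    exact fun x => this x.2
  choose s hs using hle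
  refine ⟨⟨⟨fun x => F (s x), ?_⟩, ?_⟩, ?_, ?_⟩
  · have : s 1 = 1 := hinj (by rw [hs]; simp)
    rw [this, map_one]
  · intro x y
    have : s (x * y) = s x * s y := hinj (by rw [hs, map_mul, hs, hs]; simp)
    simp only [this, map_mul]
  · intro k
    have : s ⟨k, le_sup_left (a := K) k.2⟩ = Monoid.CoprodI.of (M := fun b => P b) (i := true) k :=
      hinj (by rw [hs]; simp [f])
    change F (s _) = _
    rw [this]
    simp [F]
  · intro k
    have : s ⟨k, le_sup_right (a := K) k.2⟩ = Monoid.CoprodI.of (M := fun b => P b) (i := false) k :=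
      hinj (by rw [hs]; simp [f])
    change F (s _) = _
    rw [this]
    simp [F]

theorem SurjZ.sup {V : Type*} [MulAction G V] (htf : ∀ x : G, x ≠ 1 → ¬ IsOfFinOrder x)
    {K L : Subgroup G} {X Y : Set V} (hX : X.Nonempty) (hY : Y.Nonempty)
    (hXY : ∀ w, w ∈ X → w ∈ Y → False) (hK : ∀ k ∈ K, k ≠ 1 → ∀ w ∈ Y, k • w ∈ X)
    (hL : ∀ k ∈ L, k ≠ 1 → ∀ w ∈ X, k • w ∈ Y) {d d' : ℕ} (h : SurjZ K d) (h' : SurjZ L d') :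
    SurjZ (K ⊔ L) (d + d') := by
  obtain ⟨ι, _, rfl, φ, hφ⟩ := h
  obtain ⟨κ, _, rfl, ψ, hψ⟩ := h'
  let i1 : (ι → ℤ) →+ (ι ⊕ κ → ℤ) :=
    { toFun := fun a => Sum.elim a 0, map_zero' := by ext (_ | _) <;> simp
      map_add' := fun a b => by ext (_ | _) <;> simp }
  let i2 : (κ → ℤ) →+ (ι ⊕ κ → ℤ) :=
    { toFun := fun a => Sum.elim 0 a, map_zero' := by ext (_ | _) <;> simp
      map_add' := fun a b => by ext (_ | _) <;> simp }
  obtain ⟨χ, h1, h2⟩ := pingpong_ext htf hX hY hXY hK hL (i1.toMultiplicative.comp φ)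
    (i2.toMultiplicative.comp ψ)
  refine ⟨ι ⊕ κ, inferInstance, by simp, χ, ?_⟩
  intro y
  obtain ⟨k, hk⟩ := hφ (Multiplicative.ofAdd fun a => y.toAdd (Sum.inl a))
  obtain ⟨l, hl⟩ := hψ (Multiplicative.ofAdd fun a => y.toAdd (Sum.inr a))
  refine ⟨⟨k, le_sup_left (a := K) k.2⟩ * ⟨l, le_sup_right (a := K) l.2⟩, ?_⟩
  rw [map_mul, h1, h2]
  apply Multiplicative.toAdd.injective
  funext a
  rcases a with a | a <;> simp [hk, hl, i1, i2]

end
end HN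


namespace HN
namespace GTree
section Blocks

variable {G V E : Type*} [Group G] [MulAction G V] [MulAction G E] {T : GTree G V E}
  {H : Subgroup G} {S : Set E} {u v w : V}

theorem side_disjoint' {f g : E} {A B : Set V} (hA : T.Side f A) (hB : T.Side g B) (hne : f ≠ g)
    (hf : T.src f ∉ B ∨ T.tgt f ∉ B) (hg : T.src g ∉ A ∨ T.tgt g ∉ A)
    {w : V} (h1 : w ∈ A) (h2 : w ∈ B) : False := by
  have h3 := hA g (Ne.symm hne)
  have h4 := hB f hne
  exact side_disjoint hA hB (by tauto) (by tauto) (by tauto) (by tauto) h1 h2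

theorem half_smul' {g : G} {v : V} {e : E} : v ∈ T.half (g • e) ↔ g⁻¹ • v ∈ T.half e := by
  rw [← T.half_smul g (g⁻¹ • v) e, smul_inv_smul]

/-- stabilizer of a block -/
def Kst (T : GTree G V E) (H : Subgroup G) (S : Set E) (hS : Inv H S) (u : V) : Subgroup G where
  carrier := {h | h ∈ H ∧ h • u ∈ T.comp S u}
  one_mem' := ⟨H.one_mem, by rw [one_smul]; exact self_mem_comp⟩
  mul_mem' := by
    rintro a b ⟨ha, ha'⟩ ⟨hb, hb'⟩
    refine ⟨H.mul_mem ha hb, ?_⟩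
    rw [mul_smul]
    exact comp_trans ha' ((hS.smul_comp ha).2 hb')
  inv_mem' := by
    rintro a ⟨ha, ha'⟩
    refine ⟨H.inv_mem ha, ?_⟩
    have := (hS.smul_comp (H.inv_mem ha)).2 ha'
    rw [inv_smul_smul] at this
    exact comp_symm this

theorem mem_Kst {hS : Inv H S} {h : G} : h ∈ T.Kst H S hS u ↔ h ∈ H ∧ h • u ∈ T.comp S u := Iff.rfl

theorem Kst_smul {hS : Inv H S} {h : G} (hh : h ∈ T.Kst H S hS u) (hw : w ∈ T.comp S u) :
    h • w ∈ T.comp S u :=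
  comp_trans hh.2 ((hS.smul_comp hh.1).2 hw)

theorem mem_Kst_of {hS : Inv H S} {h : G} (hh : h ∈ H) (hw : w ∈ T.comp S u)
    (hhw : h • w ∈ T.comp S u) : h ∈ T.Kst H S hS u := by
  refine ⟨hh, comp_trans hhw (comp_symm ?_)⟩
  exact (hS.smul_comp hh).2 hw

/-- the edges of a block -/
def Ed (T : GTree G V E) (S : Set E) (u : V) : Set E := {f | f ∈ S ∧ T.src f ∈ T.comp S u}

/-- the inductive claim -/
def Concl (T : GTree G V E) (H : Subgroup G) (M : ℕ) (S : Set E) (u : V) : Prop :=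
  ∃ K : Subgroup G, (∀ h, h ∈ K ↔ h ∈ H ∧ h • u ∈ T.comp S u) ∧
    (∃ d, SurjZ K d ∧
      (orb H (T.Ed S u)).ncard + 1 ≤ d + (orb H (freeV H (T.comp S u))).ncard) ∧
    ∃ m, GenLE K m ∧
      m + M * (orb H (freeV H (T.comp S u))).ncard ≤ M * ((orb H (T.Ed S u)).ncard + 1)

theorem Concl.rebase {M : ℕ} (hS : Inv H S) (hv : v ∈ T.comp S u) (h : T.Concl H M S v) :
    T.Concl H M S u := by
  obtain ⟨K, hK, h⟩ := h
  have he := comp_eq hv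
  have he' : T.Ed S v = T.Ed S u := by unfold Ed; rw [he]
  rw [he, he'] at h
  refine ⟨K, fun x => ?_, h⟩
  rw [hK, he]
  constructor
  · rintro ⟨hx, hxv⟩
    exact (mem_Kst_of (hS := hS) hx hv hxv)
  · rintro hx
    exact ⟨hx.1, Kst_smul (hS := hS) hx hv⟩

theorem comp_fin (hfin : (orb H S).Finite) (u : V) : (orb H (T.comp S u)).Finite := by
  have h1 := orb_image_finite T.src T.src_smul hfin
  have h2 := orb_image_finite T.tgt T.tgt_smul hfin
  refine (((Set.finite_singleton (MulAction.orbit H u)).union h1).union h2).subset ?_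
  rintro _ ⟨w, hw, rfl⟩
  by_cases h : w = u
  · subst h; simp
  · obtain ⟨e, b, hj, he⟩ := T.geo h
    have heX : e ∈ S := by
      rw [T.sep_comm] at he; exact hw he
    rcases hj with ⟨rfl, -⟩ | ⟨-, rfl⟩
    · left; right; exact ⟨_, ⟨e, heX, rfl⟩, rfl⟩
    · right; exact ⟨_, ⟨e, heX, rfl⟩, rfl⟩

theorem freeV_fin (hfin : (orb H S).Finite) (u : V) : (orb H (freeV H (T.comp S u))).Finite :=
  (comp_fin hfin u).subset (orb_mono fun _ h => h.1)

theorem Ed_fin (hfin : (orb H S).Finite) (u : V) : (orb H (T.Ed S u)).Finite :=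
  hfin.subset (orb_mono fun _ h => h.1)

theorem concl_empty {M : ℕ} (u : V)
    (hst : ∀ K : Subgroup G, K ≠ ⊥ → (∃ v : V, ∀ k ∈ K, k • v = v) → GenLE K M ∧ SurjZ K 1) :
    T.Concl H M ∅ u := by
  have hc : T.comp ∅ u = {u} := by
    ext w
    simp only [mem_comp, Set.mem_singleton_iff]
    constructor
    · intro h
      by_contra hne
      obtain ⟨e, _, _, he⟩ := T.geo (Ne.symm hne)
      exact h he
    · rintro rfl; simp
  have hE : T.Ed ∅ u = ∅ := by ext f; simp [Ed]
  have hS : Inv H (∅ : Set E) := fun _ _ _ h => h.elim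
  refine ⟨T.Kst H ∅ hS u, fun h => mem_Kst, ?_⟩
  rw [hE, hc]
  have hE' : (orb H (∅ : Set E)).ncard = 0 := by simp [orb]
  rw [hE']
  by_cases hK : T.Kst H ∅ hS u = ⊥
  · have hf : freeV H {u} = {u} := by
      ext w
      simp only [freeV, Set.mem_singleton_iff, Set.mem_ofPred_eq, and_iff_left_iff_imp]
      rintro rfl x hx hxw
      have : x ∈ T.Kst H ∅ hS w := ⟨hx, by rw [hxw]; exact self_mem_comp⟩
      rw [hK] at this
      exact this
    have h1 : (orb H (freeV H {u})).ncard = 1 := by rw [hf]; simp [orb]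
    rw [h1, hK]
    exact ⟨⟨0, surjZ_zero _, le_rfl⟩, 0, genLE_bot, by omega⟩
  · have hf : freeV H {u} = ∅ := by
      ext w
      simp only [freeV, Set.mem_singleton_iff, Set.mem_ofPred_eq, Set.mem_empty_iff_false, iff_false]
      rintro ⟨rfl, h⟩
      refine hK ?_
      rw [eq_bot_iff]
      rintro x ⟨hx, hxw⟩
      rw [hc] at hxw
      exact h x hx hxw
    have h1 : (orb H (freeV H {u})).ncard = 0 := by rw [hf]; simp [orb]
    rw [h1]
    obtain ⟨h2, h3⟩ := hst _ hK ⟨u, fun k hk => by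
      have := hk.2
      rw [hc] at this
      exact this⟩
    exact ⟨⟨1, h3, le_rfl⟩, M, h2, by omega⟩

theorem freeV_smul {A B : Set V} {k : G} (hk : k ∈ H) (hw : w ∈ freeV H A) (hB : k • w ∈ B) :
    k • w ∈ freeV H B := by
  refine ⟨hB, fun x hx hxw => ?_⟩
  have h1 := hw.2 (k⁻¹ * x * k) (H.mul_mem (H.mul_mem (H.inv_mem hk) hx) hk)
    (by rw [mul_smul, mul_smul, hxw, inv_smul_smul])
  have : x = k * (k⁻¹ * x * k) * k⁻¹ := by group
  rw [this, h1]; group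

/-- gluing: everything about a block is read off a fundamental piece `Z` -/
theorem glue (hS : Inv H S) {e : E} (he : e ∈ S) {K : Subgroup G}
    {Z : Set V} (hK : K ≤ T.Kst H S hS (T.src e)) (z1 : T.src e ∈ Z)
    (z1' : Z ⊆ T.comp S (T.src e))
    (z2 : ∀ z ∈ Z, T.comp (S \ MulAction.orbit H e) z ⊆ Z)
    (z3 : ∀ h ∈ H, h • T.src e ∈ Z → h ∈ K ∧ ∃ k ∈ K, k⁻¹ • h • T.tgt e ∈ Z)
    (z4 : ∀ h ∈ H, h • T.tgt e ∈ Z → ∃ k ∈ K, k⁻¹ • h • T.src e ∈ Z) :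
    (∀ h, h ∈ K ↔ h ∈ H ∧ h • T.src e ∈ T.comp S (T.src e)) ∧
    orb H (T.Ed S (T.src e)) = insert (MulAction.orbit H e)
      (orb H {f | f ∈ S \ MulAction.orbit H e ∧ T.src f ∈ Z}) ∧
    orb H (freeV H (T.comp S (T.src e))) = orb H (freeV H Z) := by
  have c0 : ∀ w ∈ T.comp S (T.src e), ∃ k ∈ K, k⁻¹ • w ∈ Z := by
    intro w
    refine T.path_ind (T.src e) (fun w => w ∈ T.comp S (T.src e) → ∃ k ∈ K, k⁻¹ • w ∈ Z) ?_ ?_ w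
    · intro _
      exact ⟨1, K.one_mem, by simpa using z1⟩
    · intro x y f hj hf hsub ih hx
      have hx' : T.sep x (T.src e) ⊆ S := by rw [T.sep_comm]; exact hx
      obtain ⟨k, hk, hky⟩ := ih (comp_symm (hsub.trans hx'))
      have hkH := (hK hk).1
      have hj' := hj.smul k⁻¹
      by_cases hfe : k⁻¹ • f ∈ S \ MulAction.orbit H e
      · exact ⟨k, hk, z2 _ hky (hj'.symm.mem_comp hfe)⟩
      · have h1 : k⁻¹ • f ∈ MulAction.orbit H e := by
          by_contra hn
          exact hfe ⟨hS _ (H.inv_mem hkH) _ (hx' hf), hn⟩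
        obtain ⟨⟨h, hh⟩, h2⟩ := h1
        have h3 : h • e = k⁻¹ • f := h2
        rw [← h3] at hj'
        rcases hj' with ⟨h4, h5⟩ | ⟨h4, h5⟩
        · rw [T.src_smul] at h4
          rw [T.tgt_smul] at h5
          rw [← h5] at hky
          obtain ⟨k', hk', h6⟩ := z4 h hh hky
          refine ⟨k * k', K.mul_mem hk hk', ?_⟩
          rw [mul_inv_rev, mul_smul, ← h4]; exact h6
        · rw [T.src_smul] at h4
          rw [T.tgt_smul] at h5
          rw [← h4] at hky
          obtain ⟨k', hk', h6⟩ := (z3 h hh hky).2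
          refine ⟨k * k', K.mul_mem hk hk', ?_⟩
          rw [mul_inv_rev, mul_smul, ← h5]; exact h6
  refine ⟨fun h => ⟨fun hh => hK hh, ?_⟩, ?_, ?_⟩
  · rintro ⟨hh, hhe⟩
    obtain ⟨k, hk, hkz⟩ := c0 _ hhe
    rw [← mul_smul] at hkz
    have := (z3 _ (H.mul_mem (H.inv_mem (hK hk).1) hh) hkz).1
    have h2 := K.mul_mem hk this
    simpa using h2
  · ext o
    constructor
    · rintro ⟨f, ⟨hf, hfs⟩, rfl⟩
      obtain ⟨k, hk, hkz⟩ := c0 _ hfs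
      have hkH := (hK hk).1
      by_cases hfe : f ∈ MulAction.orbit H e
      · left
        exact MulAction.orbit_eq_iff.2 hfe
      · right
        refine mem_orb.2 ⟨k⁻¹, H.inv_mem hkH, ⟨hS _ (H.inv_mem hkH) _ hf, ?_⟩, ?_⟩
        · rintro ⟨⟨h, hh⟩, h2⟩
          have h3 : h • e = k⁻¹ • f := h2
          exact hfe ⟨⟨k * h, H.mul_mem hkH hh⟩, by
            change (k * h) • e = f
            rw [mul_smul, h3, smul_inv_smul]⟩
        · rw [T.src_smul]; exact hkz
    · rintro (rfl | ⟨f, ⟨hf, hfs⟩, rfl⟩)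
      · exact ⟨e, ⟨he, self_mem_comp⟩, rfl⟩
      · exact ⟨f, ⟨hf.1, z1' hfs⟩, rfl⟩
  · ext o
    constructor
    · rintro ⟨w, hw, rfl⟩
      obtain ⟨k, hk, hkz⟩ := c0 _ hw.1
      have hkH := (hK hk).1
      exact mem_orb.2 ⟨k⁻¹, H.inv_mem hkH, freeV_smul (H.inv_mem hkH) hw hkz⟩
    · rintro ⟨w, hw, rfl⟩
      exact ⟨w, ⟨z1' hw.1, hw.2⟩, rfl⟩

theorem orbit_notMem {e : E} (Z : Set V) :
    MulAction.orbit H e ∉ orb H {f | f ∈ S \ MulAction.orbit H e ∧ T.src f ∈ Z} := by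
  rintro ⟨f, ⟨hf, -⟩, h⟩
  exact hf.2 (MulAction.orbit_eq_iff.1 h)

theorem inv_sdiff (hS : Inv H S) (e : E) : Inv H (S \ MulAction.orbit H e) := by
  rintro h hh f ⟨hf, hfe⟩
  refine ⟨hS h hh f hf, fun hn => hfe ?_⟩
  obtain ⟨⟨k, hk⟩, h2⟩ := hn
  have h3 : k • e = h • f := h2
  exact ⟨⟨h⁻¹ * k, H.mul_mem (H.inv_mem hh) hk⟩, by
    change (h⁻¹ * k) • e = f
    rw [mul_smul, h3, inv_smul_smul]⟩

end Blocks
end GTree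
end HN


namespace HN
namespace GTree
section Blocks2

variable {G V E : Type*} [Group G] [MulAction G V] [MulAction G E] {T : GTree G V E}
  {H : Subgroup G} {S : Set E} {u v w : V}

/-- separated edge: membership in a half is constant on a block not using the edge -/
theorem half_const {S0 : Set E} {e : E} (he : e ∉ S0) (hw : w ∈ T.comp S0 u) :
    (u ∈ T.half e ↔ w ∈ T.half e) := by
  by_contra h
  exact he (hw h)

theorem orbit_self_notMem {h : G} (hh : h ∈ H) (e : E) : h • e ∉ S \ MulAction.orbit H e :=
  fun hn => hn.2 ⟨⟨h, hh⟩, rfl⟩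

theorem concl_case1 {M : ℕ} (htf : ∀ x : G, x ≠ 1 → ¬ IsOfFinOrder x)
    (hS : Inv H S) (hfin : (orb H S).Finite) {e : E} (he : e ∈ S)
    (ih1 : T.Concl H M (S \ MulAction.orbit H e) (T.src e))
    (ih2 : T.Concl H M (S \ MulAction.orbit H e) (T.tgt e))
    (hx : ∀ x ∈ H, x • T.tgt e ∉ T.comp (S \ MulAction.orbit H e) (T.src e)) :
    T.Concl H M S (T.src e) := by
  have hS0 : Inv H (S \ MulAction.orbit H e) := inv_sdiff hS e
  have hfin0 : (orb H (S \ MulAction.orbit H e)).Finite := hfin.subset (orb_mono Set.sdiff_subset)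
  have heS : ∀ h ∈ H, h • e ∉ S \ MulAction.orbit H e := fun h hh => orbit_self_notMem hh e
  have hsub : S \ MulAction.orbit H e ⊆ S := Set.sdiff_subset
  have hnm := fun Z => orbit_notMem (T := T) (H := H) (S := S) (e := e) Z
  have hglue := fun K Z => glue (T := T) hS he (K := K) (Z := Z)
  generalize S \ MulAction.orbit H e = S0 at *
  obtain ⟨K1, hK1, ⟨d1, hd1, hd1'⟩, m1, hm1, hm1'⟩ := ih1
  obtain ⟨K2, hK2, ⟨d2, hd2, hd2'⟩, m2, hm2, hm2'⟩ := ih2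
  have he0 : e ∉ S0 := by simpa using heS 1 H.one_mem
  have hb : T.tgt e ∈ T.comp S (T.src e) := (joins_src_tgt e).mem_comp he
  have hx' : ∀ x ∈ H, x • T.src e ∉ T.comp S0 (T.tgt e) := by
    intro x hxH h
    refine hx x⁻¹ (H.inv_mem hxH) ?_
    have := (hS0.smul_comp (H.inv_mem hxH)).2 (comp_symm h)
    rwa [inv_smul_smul] at this
  have hY1 : ∀ w ∈ T.comp S0 (T.src e), w ∉ T.half e := fun w hw =>
    fun h => T.src_not e ((half_const he0 hw).2 h)
  have hY2 : ∀ w ∈ T.comp S0 (T.tgt e), w ∈ T.half e := fun w hw =>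
    (half_const he0 hw).1 (T.tgt_mem e)
  have hK1le : K1 ≤ T.Kst H S hS (T.src e) := by
    intro k hk
    rw [hK1] at hk
    exact ⟨hk.1, comp_mono hsub hk.2⟩
  have hK2le : K2 ≤ T.Kst H S hS (T.src e) := by
    intro k hk
    rw [hK2] at hk
    exact mem_Kst_of hk.1 hb (comp_trans hb (comp_mono hsub hk.2))
  have hsd : ∀ A : Set V, ∀ k : G, k ≠ 1 → T.Side e A → T.Side (k • e) {w | k⁻¹ • w ∈ A} := by
    intro A k hk hA f hf
    have := hA (k⁻¹ • f) (fun h => hf (by rw [← h, smul_inv_smul]))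
    simpa [T.src_smul, T.tgt_smul] using this
  have hke : ∀ k : G, k ≠ 1 → k • e ≠ e := fun k hk h => hk (T.free k e h)
  have hsurj : SurjZ (K1 ⊔ K2) (d1 + d2) := by
    refine SurjZ.sup (V := V) htf (X := (T.half e)ᶜ) (Y := T.half e) ⟨_, T.src_not e⟩
      ⟨_, T.tgt_mem e⟩ (fun w h1 h2 => h1 h2) ?_ ?_ hd1 hd2
    · intro k hk hk1 w hw hkw
      refine side_disjoint' (side_half (T := T) (k • e)) (side_half e) (hke k hk1) ?_ ?_
        ((T.half_smul k w e).2 hw) hkw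
      · left
        rw [T.src_smul]
        exact hY1 _ ((hK1 k).1 hk).2
      · left
        rw [half_smul']
        exact hY1 _ ((hK1 _).1 (K1.inv_mem hk)).2
    · intro k hk hk1 w hw
      by_contra hkw
      refine side_disjoint' (side_half (T := T) (k • e)).compl (side_half e).compl (hke k hk1) ?_ ?_
        (w := k • w) (fun h => hw ((T.half_smul k w e).1 h)) hkw
      · right
        rw [T.tgt_smul]
        exact not_not.2 (hY2 _ ((hK2 k).1 hk).2)
      · right
        rw [Set.mem_compl_iff, half_smul']
        exact not_not.2 (hY2 _ ((hK2 _).1 (K2.inv_mem hk)).2)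
  obtain ⟨g1, g2, g3⟩ := hglue (K1 ⊔ K2) (T.comp S0 (T.src e) ∪ T.comp S0 (T.tgt e))
    (sup_le hK1le hK2le) (Or.inl self_mem_comp)
    (Set.union_subset (comp_mono hsub) (fun w hw => comp_trans hb (comp_mono hsub hw)))
    (by
      rintro z (hz | hz) y hy
      · exact Or.inl (comp_trans hz hy)
      · exact Or.inr (comp_trans hz hy))
    (by
      rintro h hh (h1 | h1)
      · have h2 : h ∈ K1 := (hK1 h).2 ⟨hh, h1⟩
        have h3 : h ∈ K1 ⊔ K2 := le_sup_left (a := K1) h2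
        exact ⟨h3, h, h3, Or.inr (by rw [inv_smul_smul]; exact self_mem_comp)⟩
      · exact absurd h1 (hx' h hh))
    (by
      rintro h hh (h1 | h1)
      · exact absurd h1 (hx h hh)
      · have h2 : h ∈ K2 := (hK2 h).2 ⟨hh, h1⟩
        have h3 : h ∈ K1 ⊔ K2 := le_sup_right (a := K1) h2
        exact ⟨h, h3, Or.inl (by rw [inv_smul_smul]; exact self_mem_comp)⟩)
  have htr : ∀ h ∈ H, ∀ w ∈ T.comp S0 (T.tgt e), h • w ∈ T.comp S0 (T.src e) → False := by
    intro h hh w hw hw'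
    exact hx h hh (comp_trans hw' ((hS0.smul_comp hh).2 (comp_symm hw)))
  have hE : (orb H (T.Ed S (T.src e))).ncard =
      (orb H (T.Ed S0 (T.src e))).ncard + (orb H (T.Ed S0 (T.tgt e))).ncard + 1 := by
    rw [g2]
    have h1 : orb H {f | f ∈ S0 ∧ T.src f ∈ T.comp S0 (T.src e) ∪ T.comp S0 (T.tgt e)} =
        orb H (T.Ed S0 (T.src e)) ∪ orb H (T.Ed S0 (T.tgt e)) := by
      unfold orb
      rw [← Set.image_union]
      congr 1
      ext f
      simp only [Ed, Set.mem_union, Set.mem_ofPred_eq]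
      tauto
    have h2 := hnm (T.comp S0 (T.src e) ∪ T.comp S0 (T.tgt e))
    rw [h1] at h2 ⊢
    rw [Set.ncard_insert_of_notMem h2 ((Ed_fin hfin0 _).union (Ed_fin hfin0 _)),
      Set.ncard_union_eq ?_ (Ed_fin hfin0 _) (Ed_fin hfin0 _)]
    rw [Set.disjoint_right]
    rintro _ ⟨f, hf, rfl⟩ h3
    obtain ⟨h, hh, h4⟩ := mem_orb.1 h3
    refine htr h hh _ hf.2 ?_
    rw [← T.src_smul]; exact h4.2
  have hV : (orb H (freeV H (T.comp S (T.src e)))).ncard =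
      (orb H (freeV H (T.comp S0 (T.src e)))).ncard +
        (orb H (freeV H (T.comp S0 (T.tgt e)))).ncard := by
    rw [g3]
    have h1 : orb H (freeV H (T.comp S0 (T.src e) ∪ T.comp S0 (T.tgt e))) =
        orb H (freeV H (T.comp S0 (T.src e))) ∪ orb H (freeV H (T.comp S0 (T.tgt e))) := by
      unfold orb
      rw [← Set.image_union]
      congr 1
      ext f
      simp only [freeV, Set.mem_union, Set.mem_ofPred_eq]
      tauto
    rw [h1, Set.ncard_union_eq ?_ (freeV_fin hfin0 _) (freeV_fin hfin0 _)]
    rw [Set.disjoint_right]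
    rintro _ ⟨f, hf, rfl⟩ h3
    obtain ⟨h, hh, h4⟩ := mem_orb.1 h3
    exact htr h hh _ hf.1 h4.1
  refine ⟨K1 ⊔ K2, g1, ⟨d1 + d2, hsurj, ?_⟩, m1 + m2, hm1.sup hm2, ?_⟩
  · rw [hE, hV]; omega
  · rw [hE, hV]; nlinarith

theorem concl_case2 {M : ℕ} (hM : 1 ≤ M) (htf : ∀ x : G, x ≠ 1 → ¬ IsOfFinOrder x)
    (hS : Inv H S) (hfin : (orb H S).Finite) {e : E} (he : e ∈ S)
    (ih1 : T.Concl H M (S \ MulAction.orbit H e) (T.src e))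
    {x : G} (hxH : x ∈ H)
    (hx : x • T.tgt e ∈ T.comp (S \ MulAction.orbit H e) (T.src e)) :
    T.Concl H M S (T.src e) := by
  have hS0 : Inv H (S \ MulAction.orbit H e) := inv_sdiff hS e
  have hfin0 : (orb H (S \ MulAction.orbit H e)).Finite := hfin.subset (orb_mono Set.sdiff_subset)
  have heS : ∀ h ∈ H, h • e ∉ S \ MulAction.orbit H e := fun h hh => orbit_self_notMem hh e
  have hsub : S \ MulAction.orbit H e ⊆ S := Set.sdiff_subset
  have hnm := fun Z => orbit_notMem (T := T) (H := H) (S := S) (e := e) Z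
  have hglue := fun K Z => glue (T := T) hS he (K := K) (Z := Z)
  generalize S \ MulAction.orbit H e = S0 at *
  obtain ⟨K1, hK1, ⟨d1, hd1, hd1'⟩, m1, hm1, hm1'⟩ := ih1
  have he0 : e ∉ S0 := by simpa using heS 1 H.one_mem
  have hY1 : ∀ w ∈ T.comp S0 (T.src e), w ∉ T.half e := fun w hw =>
    fun h => T.src_not e ((half_const he0 hw).2 h)
  have hY2 : ∀ w ∈ T.comp S0 (T.src e), w ∈ T.half (x • e) := by
    intro w hw
    rw [← half_const (heS x hxH) hw, half_const (heS x hxH) hx, T.half_smul]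
    exact T.tgt_mem e
  have hKs : ∀ k ∈ K1, ∀ w ∈ T.comp S0 (T.src e), k • w ∈ T.comp S0 (T.src e) := by
    intro k hk w hw
    exact Kst_smul (hS := hS0) ((hK1 k).1 hk) hw
  have hx1 : x ≠ 1 := by
    rintro rfl
    rw [one_smul] at hx
    exact hY1 _ hx (T.tgt_mem e)
  have hke : ∀ k : G, k ≠ 1 → k • e ≠ e := fun k hk h => hk (T.free k e h)
  have hK1le : K1 ≤ T.Kst H S hS (T.src e) := by
    intro k hk
    rw [hK1] at hk
    exact ⟨hk.1, comp_mono hsub hk.2⟩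
  have hxK : x ∈ T.Kst H S hS (T.src e) := by
    refine ⟨hxH, comp_trans (comp_mono hsub hx) ?_⟩
    exact ((joins_src_tgt e).smul x).symm.mem_comp (hS x hxH e he)
  have hDD : ∀ w, w ∈ T.half e → w ∈ T.half (x • e) := by
    intro w h1
    by_contra h2
    refine side_disjoint' (side_half (T := T) e) (side_half (x • e)).compl (hke x hx1).symm ?_ ?_
      h1 h2
    · left
      exact not_not.2 (hY2 _ self_mem_comp)
    · right
      rw [T.tgt_smul]
      exact hY1 _ hx
  -- powers
  have hpos : ∀ n : ℕ, ∀ w, w ∉ T.half e → x ^ (n + 1) • w ∉ T.half (x • e) := by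
    intro n
    induction n with
    | zero => intro w hw; rw [zero_add, pow_one, T.half_smul]; exact hw
    | succ n ih =>
      intro w hw
      rw [pow_succ', mul_smul, T.half_smul]
      exact fun h => ih w hw (hDD _ h)
  have hneg : ∀ n : ℕ, ∀ w, w ∈ T.half (x • e) → x⁻¹ ^ (n + 1) • w ∈ T.half e := by
    intro n
    induction n with
    | zero => intro w hw; rw [zero_add, pow_one, ← half_smul']; exact hw
    | succ n ih =>
      intro w hw
      rw [pow_succ', mul_smul, ← half_smul']
      exact hDD _ (ih w hw)
  have hkx : ∀ k ∈ K1, k • e ≠ x • e := by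
    intro k hk h
    have h1 : k = x := by
      have : (x⁻¹ * k) • e = e := by rw [mul_smul, h, inv_smul_smul]
      have := T.free _ _ this
      rw [inv_mul_eq_one] at this
      exact this.symm
    subst h1
    have h2 : k • T.tgt e ∈ T.comp S0 (k • T.src e) :=
      comp_trans (comp_symm (hKs k hk _ self_mem_comp)) hx
    refine heS k hxH (h2 ?_)
    rw [((joins_src_tgt e).smul k).sep]; rfl
  have hp1 : ∀ k ∈ K1, k ≠ 1 → ∀ w ∈ T.half e, k • w ∉ T.half e := by
    intro k hk hk1 w hw hkw
    refine side_disjoint' (side_half (T := T) (k • e)) (side_half e) (hke k hk1) ?_ ?_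
      ((T.half_smul k w e).2 hw) hkw
    · left
      rw [T.src_smul]
      exact hY1 _ ((hK1 k).1 hk).2
    · left
      rw [half_smul']
      exact hY1 _ ((hK1 _).1 (K1.inv_mem hk)).2
  have hp2 : ∀ k ∈ K1, ∀ w ∈ T.half e, k • w ∈ T.half (x • e) := by
    intro k hk w hw
    by_contra hkw
    refine side_disjoint' (side_half (T := T) (k • e)) (side_half (x • e)).compl (hkx k hk) ?_ ?_
      ((T.half_smul k w e).2 hw) hkw
    · left
      rw [T.src_smul]
      exact not_not.2 (hY2 _ ((hK1 k).1 hk).2)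
    · right
      rw [T.tgt_smul, half_smul']
      exact hY1 _ (hKs _ (K1.inv_mem hk) _ hx)
  have hp3 : ∀ k ∈ K1, ∀ w, w ∉ T.half (x • e) → k • w ∉ T.half e := by
    intro k hk w hw hkw
    have := hp2 _ (K1.inv_mem hk) _ hkw
    rw [inv_smul_smul] at this
    exact hw this
  have hp4 : ∀ k ∈ K1, k ≠ 1 → ∀ w, w ∉ T.half (x • e) → k • w ∈ T.half (x • e) := by
    intro k hk hk1 w hw
    by_contra hkw
    refine side_disjoint' (side_half (T := T) (k • x • e)).compl (side_half (x • e)).compl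
      (fun h => hk1 (T.free _ _ h)) ?_ ?_ (w := k • w)
      (fun h => hw ((T.half_smul k w _).1 h)) hkw
    · right
      rw [T.tgt_smul, T.tgt_smul]
      exact not_not.2 (hY2 _ (hKs k hk _ hx))
    · right
      rw [Set.mem_compl_iff, half_smul', T.tgt_smul]
      exact not_not.2 (hY2 _ (hKs _ (K1.inv_mem hk) _ hx))
  have hsurj : SurjZ (K1 ⊔ Subgroup.zpowers x) (d1 + 1) := by
    refine SurjZ.sup (V := V) htf (X := {w | w ∉ T.half e ∧ w ∈ T.half (x • e)})
      (Y := {w | w ∈ T.half e ∨ w ∉ T.half (x • e)})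
      ⟨T.src e, T.src_not e, hY2 _ self_mem_comp⟩
      ⟨_, Or.inl (T.tgt_mem e)⟩ (fun w h1 h2 => h2.elim h1.1 (fun h => h h1.2)) ?_ ?_ hd1
      (surjZ_zpowers (htf x hx1))
    · rintro k hk hk1 w (hw | hw)
      · exact ⟨hp1 k hk hk1 w hw, hp2 k hk w hw⟩
      · exact ⟨hp3 k hk w hw, hp4 k hk hk1 w hw⟩
    · rintro k hk hk1 w ⟨hw1, hw2⟩
      obtain ⟨n, rfl⟩ := Subgroup.mem_zpowers_iff.1 hk
      obtain ⟨n, rfl | rfl⟩ := n.eq_nat_or_neg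
      · rcases n with _ | n
        · simp at hk1
        · right
          rw [zpow_natCast]
          exact hpos n w hw1
      · rcases n with _ | n
        · simp at hk1
        · left
          rw [zpow_neg, zpow_natCast, ← inv_pow]
          exact hneg n w hw2
  have hle1 : K1 ≤ K1 ⊔ Subgroup.zpowers x := le_sup_left
  have hxm : x ∈ K1 ⊔ Subgroup.zpowers x := le_sup_right (a := K1) (Subgroup.mem_zpowers x)
  obtain ⟨g1, g2, g3⟩ := hglue (K1 ⊔ Subgroup.zpowers x) (T.comp S0 (T.src e))
    (sup_le hK1le (by rw [Subgroup.zpowers_le]; exact hxK)) self_mem_comp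
    (comp_mono hsub) (fun z hz y hy => comp_trans hz hy)
    (by
      intro h hh h1
      have h3 := hle1 ((hK1 h).2 ⟨hh, h1⟩)
      refine ⟨h3, h * x⁻¹, Subgroup.mul_mem _ h3 (Subgroup.inv_mem _ hxm), ?_⟩
      rw [mul_inv_rev, inv_inv, mul_smul, inv_smul_smul]
      exact hx)
    (by
      intro h hh h1
      have h2 : h * x⁻¹ ∈ K1 := by
        refine (hK1 _).2 (mem_Kst_of (hS := hS0) (H.mul_mem hh (H.inv_mem hxH)) hx ?_)
        rw [mul_smul, inv_smul_smul]; exact h1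
      have h3 := Subgroup.mul_mem _ (hle1 h2) hxm
      rw [inv_mul_cancel_right] at h3
      exact ⟨h, h3, by rw [inv_smul_smul]; exact self_mem_comp⟩)
  have hE : (orb H (T.Ed S (T.src e))).ncard = (orb H (T.Ed S0 (T.src e))).ncard + 1 := by
    rw [g2]
    exact Set.ncard_insert_of_notMem (hnm (T.comp S0 (T.src e))) (Ed_fin hfin0 _)
  refine ⟨_, g1, ⟨d1 + 1, hsurj, ?_⟩, m1 + 1, hm1.sup (genLE_zpowers x), ?_⟩
  · rw [hE, g3]; omega
  · rw [hE, g3]; nlinarith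

theorem concl_all {M : ℕ} (hM : 1 ≤ M) (htf : ∀ x : G, x ≠ 1 → ¬ IsOfFinOrder x)
    (hst : ∀ K : Subgroup G, K ≠ ⊥ → (∃ v : V, ∀ k ∈ K, k • v = v) → GenLE K M ∧ SurjZ K 1) :
    ∀ n : ℕ, ∀ S : Set E, Inv H S → (orb H S).Finite → (orb H S).ncard = n → ∀ u,
      T.Concl H M S u := by
  intro n
  induction n with
  | zero =>
    intro S hS hfin hn u
    rw [Set.ncard_eq_zero hfin] at hn
    have : S = ∅ := by
      simpa [orb] using hn
    subst this
    exact concl_empty u hst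
  | succ n ih =>
    intro S hS hfin hn u
    have hne : S.Nonempty := by
      by_contra h
      rw [Set.not_nonempty_iff_eq_empty] at h
      subst h
      simp [orb] at hn
    obtain ⟨e0, he0⟩ := hne
    have hIH : ∀ e ∈ S, ∀ u, T.Concl H M (S \ MulAction.orbit H e) u := by
      intro e he u
      have h1 : orb H S = insert (MulAction.orbit H e) (orb H (S \ MulAction.orbit H e)) := by
        ext o
        constructor
        · rintro ⟨f, hf, rfl⟩
          by_cases hfe : f ∈ MulAction.orbit H e
          · left; exact MulAction.orbit_eq_iff.2 hfe
          · right; exact ⟨f, ⟨hf, hfe⟩, rfl⟩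
        · rintro (rfl | ⟨f, hf, rfl⟩)
          · exact ⟨e, he, rfl⟩
          · exact ⟨f, hf.1, rfl⟩
      have h2 : MulAction.orbit H e ∉ orb H (S \ MulAction.orbit H e) := by
        rintro ⟨f, hf, h⟩
        exact hf.2 (MulAction.orbit_eq_iff.1 h)
      have hf0 : (orb H (S \ MulAction.orbit H e)).Finite :=
        hfin.subset (orb_mono Set.sdiff_subset)
      refine ih _ (inv_sdiff hS e) hf0 ?_ u
      rw [h1, Set.ncard_insert_of_notMem h2 hf0] at hn
      omega
    by_cases hex : ∃ h ∈ H, T.src (h • e0) ∈ T.comp S u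
    · obtain ⟨h, hh, hs⟩ := hex
      have he : h • e0 ∈ S := hS h hh _ he0
      generalize h • e0 = e at *
      refine Concl.rebase hS hs ?_
      by_cases hx : ∃ x ∈ H, x • T.tgt e ∈ T.comp (S \ MulAction.orbit H e) (T.src e)
      · obtain ⟨x, hxH, hx⟩ := hx
        exact concl_case2 hM htf hS hfin he (hIH e he _) hxH hx
      · push Not at hx
        exact concl_case1 htf hS hfin he (hIH e he _) (hIH e he _) hx
    · push Not at hex
      have hsub : S \ MulAction.orbit H e0 ⊆ S := Set.sdiff_subset
      have hc : T.comp (S \ MulAction.orbit H e0) u = T.comp S u := by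
        refine Set.Subset.antisymm (comp_mono hsub) ?_
        intro w hw
        by_contra hwn
        obtain ⟨f, a, b, hj, ha, hb, hf⟩ := T.exit _ (self_mem_comp (u := u)) hwn
        have hfS : f ∈ S := by
          rw [T.sep_comm] at hf; exact hw hf
        have hf' : f ∈ MulAction.orbit H e0 := by
          by_contra hn'
          exact hb (comp_trans ha (hj.mem_comp ⟨hfS, hn'⟩))
        obtain ⟨⟨h, hh⟩, h2⟩ := hf'
        have h3 : h • e0 = f := h2
        have haS := comp_mono hsub ha
        have hbS := comp_trans haS (hj.mem_comp hfS)
        refine hex h hh ?_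
        rw [h3]
        rcases hj with ⟨h4, -⟩ | ⟨h4, -⟩
        · rw [h4]; exact haS
        · rw [h4]; exact hbS
      have hE : T.Ed (S \ MulAction.orbit H e0) u = T.Ed S u := by
        ext f
        simp only [Ed, hc, Set.mem_ofPred_eq, and_congr_left_iff, Set.mem_sdiff, and_iff_left_iff_imp]
        rintro hf1 hf2 ⟨⟨h, hh⟩, h2⟩
        have h3 : h • e0 = f := h2
        exact hex h hh (h3 ▸ hf1)
      have := hIH e0 he0 u
      unfold Concl at this ⊢
      rwa [hc, hE] at this

/-- The two main estimates. -/
theorem main_est {M : ℕ} (hM : 1 ≤ M) (htf : ∀ x : G, x ≠ 1 → ¬ IsOfFinOrder x)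
    (hst : ∀ K : Subgroup G, K ≠ ⊥ → (∃ v : V, ∀ k ∈ K, k • v = v) → GenLE K M ∧ SurjZ K 1)
    {v0 : V} (hc : T.Cof H (T.hull H v0) v0) :
    (∃ d, SurjZ H d ∧ (orb H (T.hull H v0)).ncard + 1 ≤
      d + (orb H (freeV H (T.comp (T.hull H v0) v0))).ncard) ∧
    ∃ m, GenLE H m ∧ m + M * (orb H (freeV H (T.comp (T.hull H v0) v0))).ncard ≤
      M * ((orb H (T.hull H v0)).ncard + 1) := by
  obtain ⟨K, hK, h⟩ := concl_all (T := T) hM htf hst _ _ hc.inv hc.fin rfl v0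
  have h1 : K = H := by
    ext x
    rw [hK]
    exact ⟨fun h => h.1, fun h => ⟨h, hc.base x h⟩⟩
  have h2 : T.Ed (T.hull H v0) v0 = T.hull H v0 := by
    ext f
    exact ⟨fun h => h.1, fun h => ⟨h, hull_src H v0 f h⟩⟩
  rw [h1, h2] at h
  exact h

/-- Abstract form of the theorem. -/
theorem main_abstract [LinearOrder E] (hord : ∀ (g : G) (e f : E), e < f → g • e < g • f)
    (T : GTree G V E) (v0 : V) {M : ℕ} (hM : 1 ≤ M) (htf : ∀ x : G, x ≠ 1 → ¬ IsOfFinOrder x)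
    (hst : ∀ K : Subgroup G, K ≠ ⊥ → (∃ v : V, ∀ k ∈ K, k • v = v) → GenLE K M ∧ SurjZ K 1)
    {H₁ H₂ : Subgroup G} {n₁ n₂ : ℕ} (h₁ : GenLE H₁ n₁) (h₂ : GenLE H₂ n₂) :
    GenLE (H₁ ⊓ H₂) (M * (n₁ - 1) * (n₂ - 1) + M) := by
  by_cases hL : H₁ ⊓ H₂ = ⊥
  · rw [hL]
    exact genLE_bot.mono (Nat.zero_le _)
  have key : ∀ (H : Subgroup G) (n : ℕ), GenLE H n → H ≠ ⊥ → T.Cof H (T.hull H v0) v0 ∧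
      (orb H (T.bridges H (T.hull H v0))).ncard + 1 ≤ n := by
    intro H n hn hH
    have hc : T.Cof H (T.hull H v0) v0 := by
      obtain ⟨F, rfl, -⟩ := hn
      exact hull_cof F v0
    refine ⟨hc, ?_⟩
    obtain ⟨⟨d, hd, hd'⟩, -⟩ := main_est hM htf hst hc
    have h1 := hd.le hn
    have h2 := card_ge hord hc hH
    omega
  have hne1 : H₁ ≠ ⊥ := by
    rintro rfl; simp at hL
  have hne2 : H₂ ≠ ⊥ := by
    rintro rfl; simp at hL
  obtain ⟨hc1, hr1⟩ := key H₁ n₁ h₁ hne1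
  obtain ⟨hc2, hr2⟩ := key H₂ n₂ h₂ hne2
  have hc := hull_cof_inter hc1 hc2
  have hb := bridges_inter hc1 hc2
  obtain ⟨-, m, hm, hm'⟩ := main_est hM htf hst hc
  have h3 := card_le hord hc (hull_src _ _)
  refine hm.mono ?_
  have h4 : (orb (H₁ ⊓ H₂) (T.bridges (H₁ ⊓ H₂) (T.hull (H₁ ⊓ H₂) v0))).ncard ≤
      (n₁ - 1) * (n₂ - 1) := hb.trans (Nat.mul_le_mul (by omega) (by omega))
  have h5 : m + M * (orb (H₁ ⊓ H₂) (freeV (H₁ ⊓ H₂) (T.comp (T.hull (H₁ ⊓ H₂) v0) v0))).ncard ≤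
      M * ((n₁ - 1) * (n₂ - 1) + 1) +
        M * (orb (H₁ ⊓ H₂) (freeV (H₁ ⊓ H₂) (T.comp (T.hull (H₁ ⊓ H₂) v0) v0))).ncard := by
    refine hm'.trans ?_
    rw [← mul_add]
    exact Nat.mul_le_mul_left _ (by omega)
  have h6 : m ≤ M * ((n₁ - 1) * (n₂ - 1) + 1) := by omega
  rw [mul_assoc]
  linarith

end Blocks2
end GTree
end HN


namespace HN
section Poly

/-- positive cone of a left order -/
structure IsCone {G : Type*} [Group G] (P : Set G) : Prop where
  mul : ∀ x ∈ P, ∀ y ∈ P, x * y ∈ P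
  one : (1 : G) ∉ P
  tot : ∀ x, x ≠ 1 → x ∈ P ∨ x⁻¹ ∈ P

variable {G : Type*} [Group G]

theorem SurjZ.comp {G' : Type*} [Group G'] {K : Subgroup G} {K' : Subgroup G'} {d : ℕ}
    (h : SurjZ K' d) (f : K →* K') (hf : Function.Surjective f) : SurjZ K d := by
  obtain ⟨ι, _, hd, φ, hφ⟩ := h
  exact ⟨ι, _, hd, φ.comp f, hφ.comp hf⟩

theorem exists_char {n : ℕ} {c : Fin (n + 1) → Subgroup G} (hc : IsInfiniteCyclicSeries n c)
    (i : Fin n) : ∃ χ : c i.castSucc →* Multiplicative ℤ, ∀ x, χ x = 1 ↔ x.1 ∈ c i.succ := by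
  obtain ⟨hle, hN, h1, h2⟩ := hc.2.2 i
  refine ⟨(intCyclicMulEquiv (G := c i.castSucc ⧸ (c i.succ).subgroupOf (c i.castSucc))).symm.toMonoidHom.comp
    (QuotientGroup.mk' _), fun x => ?_⟩
  rw [MonoidHom.comp_apply]
  simp only [MulEquiv.coe_toMonoidHom, EmbeddingLike.map_eq_one_iff]
  rw [QuotientGroup.mk'_apply, QuotientGroup.eq_one_iff, Subgroup.mem_subgroupOf]

theorem poly_step {A B : Subgroup G} (χ : A →* Multiplicative ℤ)
    (hχ : ∀ x, χ x = 1 ↔ x.1 ∈ B) {m : ℕ}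
    (h1 : ∀ K ≤ B, GenLE K m) (h2 : ∀ K ≤ B, K ≠ ⊥ → SurjZ K 1)
    (h3 : ∃ P : Set G, P ⊆ B ∧ (∀ x ∈ P, ∀ y ∈ P, x * y ∈ P) ∧ (1 : G) ∉ P ∧
      ∀ x ∈ B, x ≠ 1 → x ∈ P ∨ x⁻¹ ∈ P) :
    (∀ K ≤ A, GenLE K (m + 1)) ∧ (∀ K ≤ A, K ≠ ⊥ → SurjZ K 1) ∧
    (∃ P : Set G, P ⊆ A ∧ (∀ x ∈ P, ∀ y ∈ P, x * y ∈ P) ∧ (1 : G) ∉ P ∧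
      ∀ x ∈ A, x ≠ 1 → x ∈ P ∨ x⁻¹ ∈ P) := by
  have hcyc : ∀ K (hK : K ≤ A), ∃ k : K, ∀ y : K, ∃ m : ℤ,
      (χ (Subgroup.inclusion hK k)) ^ m = χ (Subgroup.inclusion hK y) := by
    intro K hK
    obtain ⟨⟨g, k, rfl⟩, hg⟩ :=
      (inferInstance : IsCyclic (χ.comp (Subgroup.inclusion hK)).range).exists_generator
    refine ⟨k, fun y => ?_⟩
    obtain ⟨m, hm⟩ := Subgroup.mem_zpowers_iff.1 (hg ⟨_, y, rfl⟩)
    exact ⟨m, congrArg Subtype.val hm⟩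
  refine ⟨?_, ?_, ?_⟩
  · intro K hK
    obtain ⟨k, hk⟩ := hcyc K hK
    have h4 := (h1 (K ⊓ B) inf_le_right).sup (genLE_zpowers k.1)
    convert h4
    refine le_antisymm ?_ (sup_le inf_le_left (by rw [Subgroup.zpowers_le]; exact k.2))
    intro y hy
    obtain ⟨m, hm⟩ := hk ⟨y, hy⟩
    have h5 : y * (k.1 ^ m)⁻¹ ∈ K ⊓ B := by
      refine ⟨K.mul_mem hy (K.inv_mem (K.zpow_mem k.2 m)), ?_⟩
      have h6 : χ (Subgroup.inclusion hK ⟨y, hy⟩ * (Subgroup.inclusion hK k ^ m)⁻¹) = 1 := by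
        rw [map_mul, map_inv, map_zpow, hm, mul_inv_cancel]
      rw [hχ] at h6
      simpa using h6
    have h7 := Subgroup.mul_mem _ (le_sup_left (b := Subgroup.zpowers k.1) h5)
      (le_sup_right (a := K ⊓ B) (Subgroup.zpow_mem _ (Subgroup.mem_zpowers k.1) m))
    simpa using h7
  · intro K hK hne
    by_cases hKB : K ≤ B
    · exact h2 K hKB hne
    obtain ⟨k, hk⟩ := hcyc K hK
    have hg : χ (Subgroup.inclusion hK k) ≠ 1 := by
      intro h
      refine hKB fun y hy => ?_
      obtain ⟨m, hm⟩ := hk ⟨y, hy⟩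
      rw [h, one_zpow] at hm
      exact (hχ _).1 hm.symm
    have hfo : ¬ IsOfFinOrder (χ (Subgroup.inclusion hK k)) :=
      not_isOfFinOrder_of_isMulTorsionFree hg
    refine (surjZ_zpowers hfo).comp
      ((χ.comp (Subgroup.inclusion hK)).codRestrict _ (fun y => ?_)) ?_
    · obtain ⟨m, hm⟩ := hk y
      exact ⟨m, hm⟩
    · rintro ⟨_, m, rfl⟩
      exact ⟨k ^ m, Subtype.ext (by simp)⟩
  · obtain ⟨P, hPB, hPm, hP1, hPt⟩ := h3
    refine ⟨{x | ∃ h : x ∈ A, 1 < χ ⟨x, h⟩ ∨ (χ ⟨x, h⟩ = 1 ∧ x ∈ P)}, fun x hx => hx.1, ?_, ?_, ?_⟩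
    · rintro x ⟨hx, hx'⟩ y ⟨hy, hy'⟩
      refine ⟨A.mul_mem hx hy, ?_⟩
      have e : (⟨x * y, A.mul_mem hx hy⟩ : A) = ⟨x, hx⟩ * ⟨y, hy⟩ := rfl
      rw [e, map_mul]
      rcases hx' with hx' | ⟨hx', hxP⟩ <;> rcases hy' with hy' | ⟨hy', hyP⟩
      · left; exact one_lt_mul'' hx' hy'
      · left; rw [hy', mul_one]; exact hx'
      · left; rw [hx', one_mul]; exact hy'
      · right; rw [hx', hy', one_mul]; exact ⟨rfl, hPm x hxP y hyP⟩
    · rintro ⟨h, h' | h'⟩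
      · have e : (⟨1, h⟩ : A) = 1 := rfl
        rw [e, map_one] at h'
        exact lt_irrefl _ h'
      · exact hP1 h'.2
    · intro x hx hx1
      have e : (⟨x⁻¹, A.inv_mem hx⟩ : A) = ⟨x, hx⟩⁻¹ := rfl
      rcases lt_trichotomy (χ ⟨x, hx⟩) 1 with h | h | h
      · right
        refine ⟨A.inv_mem hx, Or.inl ?_⟩
        rw [e, map_inv]
        exact one_lt_inv'.2 h
      · rcases hPt x ((hχ _).1 h) hx1 with h5 | h5
        · left; exact ⟨hx, Or.inr ⟨h, h5⟩⟩
        · right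
          refine ⟨A.inv_mem hx, Or.inr ⟨?_, h5⟩⟩
          rw [e, map_inv, h, inv_one]
      · left; exact ⟨hx, Or.inl h⟩

theorem poly_main {n : ℕ} {c : Fin (n + 1) → Subgroup G} (hc : IsInfiniteCyclicSeries n c) :
    (∀ K : Subgroup G, GenLE K n) ∧ (∀ K : Subgroup G, K ≠ ⊥ → SurjZ K 1) ∧
      ∃ P : Set G, IsCone P := by
  have key : ∀ j : Fin (n + 1), (∀ K ≤ c j, GenLE K (n - j)) ∧ (∀ K ≤ c j, K ≠ ⊥ → SurjZ K 1) ∧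
    (∃ P : Set G, P ⊆ c j ∧ (∀ x ∈ P, ∀ y ∈ P, x * y ∈ P) ∧ (1 : G) ∉ P ∧
      ∀ x ∈ c j, x ≠ 1 → x ∈ P ∨ x⁻¹ ∈ P) := by
    intro j
    induction j using Fin.reverseInduction with
    | last =>
      rw [hc.2.1]
      refine ⟨fun K hK => ?_, fun K hK hne => ?_, ∅, by simp, by simp, by simp, ?_⟩
      · rw [le_bot_iff.1 hK]; exact genLE_bot.mono (Nat.zero_le _)
      · exact absurd (le_bot_iff.1 hK) hne
      · intro x hx hx1; exact absurd hx hx1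
    | cast i ih =>
      obtain ⟨χ, hχ⟩ := exists_char hc i
      have := poly_step χ hχ ih.1 ih.2.1 ih.2.2
      have h4 : n - (i.succ : Fin (n + 1)).val + 1 = n - (i.castSucc : Fin (n + 1)).val := by
        have := i.2
        simp only [Fin.val_succ, Fin.val_castSucc]
        omega
      rw [h4] at this
      exact this
  obtain ⟨h1, h2, P, -, h3, h4, h5⟩ := key 0
  rw [hc.1] at h1 h2 h5
  exact ⟨fun K => by simpa using h1 K le_top, fun K hK => h2 K le_top hK, P, h3, h4,
    fun x hx => h5 x trivial hx⟩

end Poly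
end HN


namespace HN
namespace FP

open Monoid

section
variable {ι : Type*} {S : ι → Type*} [∀ i, Group (S i)]

/-- product of a list of letters -/
def lprod (l : List (Σ i, S i)) : CoprodI S := (l.map fun x => CoprodI.of x.2).prod

/-- index of the first letter -/
def hd : List (Σ i, S i) → Option ι
  | [] => none
  | x :: _ => some x.1

/-- reduced lists -/
def Red : List (Σ i, S i) → Prop
  | [] => True
  | x :: l => x.2 ≠ 1 ∧ hd l ≠ some x.1 ∧ Red l

theorem red_iff (l : List (Σ i, S i)) :
    Red l ↔ (∀ x ∈ l, x.2 ≠ 1) ∧ l.IsChain (fun a b => a.1 ≠ b.1) := by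
  induction l with
  | nil => simp [Red]
  | cons x l ih =>
    rw [Red, ih]
    cases l with
    | nil => simp [hd]
    | cons y l =>
      simp only [hd, List.isChain_cons_cons, List.mem_cons, forall_eq_or_imp, ne_eq, Option.some.injEq]
      constructor
      · rintro ⟨a, b, c, d⟩; exact ⟨⟨a, c⟩, fun h => b h.symm, d⟩
      · rintro ⟨⟨a, c⟩, b, d⟩; exact ⟨a, fun h => b h.symm, c, d⟩

theorem exists_red (g : CoprodI S) : ∃ l, Red l ∧ lprod l = g := by
  classical
  refine ⟨(CoprodI.Word.equiv g).toList, (red_iff _).2 ⟨(CoprodI.Word.equiv g).ne_one, (CoprodI.Word.equiv g).chain_ne⟩, ?_⟩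
  exact CoprodI.Word.equiv.symm_apply_apply g

theorem lprod_inj {l l' : List (Σ i, S i)} (h : Red l) (h' : Red l') (e : lprod l = lprod l') :
    l = l' := by
  classical
  rw [red_iff] at h h'
  have := CoprodI.Word.equiv.symm.injective
    (a₁ := ⟨l, h.1, h.2⟩) (a₂ := ⟨l', h'.1, h'.2⟩) e
  exact congrArg CoprodI.Word.toList this

/-- normal form -/
noncomputable def nf (g : CoprodI S) : List (Σ i, S i) := (exists_red g).choose

theorem red_nf (g : CoprodI S) : Red (nf g) := (exists_red g).choose_spec.1
@[simp] theorem lprod_nf (g : CoprodI S) : lprod (nf g) = g := (exists_red g).choose_spec.2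
theorem nf_lprod {l : List (Σ i, S i)} (h : Red l) : nf (lprod l) = l :=
  lprod_inj (red_nf _) h (lprod_nf _)
theorem nf_eq {l : List (Σ i, S i)} {g : CoprodI S} (h : Red l) (e : lprod l = g) : nf g = l := by
  rw [← e, nf_lprod h]
@[simp] theorem lprod_nil : lprod ([] : List (Σ i, S i)) = 1 := rfl
@[simp] theorem lprod_cons (x : Σ i, S i) (l) : lprod (x :: l) = CoprodI.of x.2 * lprod l := rfl
theorem nf_one : nf (1 : CoprodI S) = [] := nf_eq trivial rfl
theorem nf_eq_nil {g : CoprodI S} : nf g = [] ↔ g = 1 :=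
  ⟨fun h => by rw [← lprod_nf g, h, lprod_nil], fun h => by rw [h, nf_one]⟩
theorem hd_eq_none {l : List (Σ i, S i)} : hd l = none ↔ l = [] := by
  cases l <;> simp [hd]

/-- `A⁻¹ B` without reduction -/
def iapp : List (Σ i, S i) → List (Σ i, S i) → List (Σ i, S i)
  | [], B => B
  | x :: A, B => iapp A (⟨x.1, x.2⁻¹⟩ :: B)

theorem lprod_iapp (A B : List (Σ i, S i)) : lprod (iapp A B) = (lprod A)⁻¹ * lprod B := by
  induction A generalizing B with
  | nil => simp [iapp]
  | cons x A ih => simp [iapp, ih, mul_assoc]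

theorem red_iapp (A B : List (Σ i, S i)) (hA : Red A) (hB : Red B)
    (h : hd A ≠ hd B ∨ hd A = none) : Red (iapp A B) := by
  induction A generalizing B with
  | nil => exact hB
  | cons x A ih =>
    obtain ⟨h1, h2, h3⟩ := hA
    have h' : hd B ≠ some x.1 := by
      rcases h with h | h
      · exact fun e => h (by rw [e]; rfl)
      · simp [hd] at h
    exact ih _ h3 ⟨inv_ne_one.2 h1, h', hB⟩ (Or.inl h2)

section tau
variable [LinearOrder ι]

/-- jump -/
def J : Option ι → Option ι → ℤ
  | some i, some j => if i < j then 1 else if j < i then -1 else 0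
  | _, _ => 0

theorem J_anti (a b : Option ι) : J a b = - J b a := by
  cases a <;> cases b <;> simp only [J, neg_zero]
  rename_i i j
  rcases lt_trichotomy i j with h | h | h
  · simp [h, h.not_gt]
  · simp [h]
  · simp [h, h.not_gt]

theorem J_cyc (i : ι) (a b : Option ι) (ha : a ≠ some i) (hb : b ≠ some i) (h : a ≠ b ∨ a = none) :
    |J (some i) a + J a b - J (some i) b| ≤ 1 := by
  rcases a with _ | j <;> rcases b with _ | k
  · simp [J]
  · simp only [J]; split_ifs <;> simp
  · simp only [J]; split_ifs <;> simp
  · have h1 : j ≠ i := fun e => ha (by rw [e])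
    have h2 : k ≠ i := fun e => hb (by rw [e])
    have h3 : j ≠ k := by
      rcases h with h | h
      · exact fun e => h (by rw [e])
      · simp at h
    simp only [J]
    rcases lt_or_gt_of_ne h1 with h4 | h4 <;> rcases lt_or_gt_of_ne h2 with h5 | h5 <;>
      rcases lt_or_gt_of_ne h3 with h6 | h6 <;>
      first
      | exact absurd (h6.trans h5) h4.not_gt
      | exact absurd (h6.trans h4) h5.not_gt
      | simp [h4, h5, h6, h4.not_gt, h5.not_gt, h6.not_gt]

theorem J_odd (i j : ι) (h : j ≠ i) : Odd (J (some i) (some j)) := by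
  rcases lt_trichotomy i j with h' | h' | h'
  · simp [J, h']
  · exact absurd h'.symm h
  · simp [J, h', h'.not_gt]

variable (P : ∀ i, Set (S i))

open Classical in
/-- sign of a letter -/
noncomputable def sg (x : Σ i, S i) : ℤ := if x.2 ∈ P x.1 then 1 else -1

/-- the quasimorphism -/
noncomputable def tau : List (Σ i, S i) → ℤ
  | [] => 0
  | x :: A => sg P x + J (some x.1) (hd A) + tau A

variable {P} (hP : ∀ i, IsCone (P i))

theorem cone_not {G : Type*} [Group G] {Q : Set G} (hQ : IsCone Q) {x : G} (h : x ∈ Q) : x⁻¹ ∉ Q :=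
  fun h' => hQ.one (by simpa using hQ.mul _ h _ h')

theorem sg_inv (hP : ∀ i, IsCone (P i)) (x : Σ i, S i) (hx : x.2 ≠ 1) :
    sg P ⟨x.1, x.2⁻¹⟩ = - sg P x := by
  unfold sg
  rcases (hP x.1).tot _ hx with h | h
  · simp [h, cone_not (hP _) h]
  · have := cone_not (hP _) h
    rw [inv_inv] at this
    simp [h, this]

theorem sg_tri (hP : ∀ i, IsCone (P i)) (i : ι) (x y : S i) (hx : x ≠ 1) :
    |sg P ⟨i, x⟩ - sg P ⟨i, y⟩ + sg P ⟨i, x⁻¹ * y⟩| ≤ 1 := by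
  unfold sg
  by_cases h1 : x ∈ P i <;> by_cases h2 : y ∈ P i <;> by_cases h3 : x⁻¹ * y ∈ P i <;> simp [h1, h2, h3]
  · exact absurd ((hP i).mul _ h1 _ h3) (by simpa using h2)
  · rcases (hP i).tot x hx with h | h
    · exact absurd h h1
    · exact absurd ((hP i).mul _ h _ h2) h3

theorem tau_iapp (hP : ∀ i, IsCone (P i)) (A B : List (Σ i, S i)) (hA : Red A) :
    tau P (iapp A B) = - tau P A + J (hd A) (hd B) + tau P B := by
  induction A generalizing B with
  | nil => simp [iapp, tau, hd, J]
  | cons x A ih =>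
    obtain ⟨h1, h2, h3⟩ := hA
    rw [iapp, ih _ h3, tau, tau, sg_inv hP x h1, J_anti (hd A)]
    simp only [hd]
    ring

theorem tau_odd (A : List (Σ i, S i)) (hA : Red A) (hne : A ≠ []) : Odd (tau P A) := by
  induction A with
  | nil => exact absurd rfl hne
  | cons x A ih =>
    obtain ⟨h1, h2, h3⟩ := hA
    have hs : Odd (sg P x) := by unfold sg; split_ifs <;> simp
    rw [tau]
    cases A with
    | nil => simpa [hd, J, tau] using hs
    | cons y A =>
      have := J_odd x.1 y.1 (fun e => h2 (by rw [← e]; rfl))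
      exact (hs.add_odd this).add_odd (ih h3 (by simp))

theorem tau_main (hP : ∀ i, IsCone (P i)) (A B : List (Σ i, S i)) (hA : Red A) (hB : Red B) :
    |tau P (nf ((lprod A)⁻¹ * lprod B)) + tau P A - tau P B| ≤ 1 := by
  have direct : ∀ A B : List (Σ i, S i), Red A → Red B → (hd A ≠ hd B ∨ hd A = none) →
      tau P (nf ((lprod A)⁻¹ * lprod B)) = - tau P A + J (hd A) (hd B) + tau P B := by
    intro A B hA hB h
    rw [nf_eq (red_iapp A B hA hB h) (lprod_iapp A B), tau_iapp hP A B hA]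
  have Jle : ∀ a b : Option ι, |J a b| ≤ 1 := by
    intro a b
    cases a <;> cases b <;> simp only [J] <;> (try split_ifs) <;> simp
  induction A generalizing B with
  | nil =>
    rw [direct _ _ hA hB (Or.inr rfl)]
    simp [hd, J]
  | cons x A ih =>
    by_cases hh : hd (x :: A) = hd B
    swap
    · rw [direct _ _ hA hB (Or.inl hh)]
      have := Jle (hd (x :: A)) (hd B)
      rw [abs_le] at this ⊢
      constructor <;> linarith
    cases B with
    | nil => simp [hd] at hh
    | cons y B =>
      obtain ⟨i, x⟩ := x
      obtain ⟨j, y⟩ := y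
      simp only [hd, Option.some.injEq] at hh
      subst hh
      obtain ⟨a1, a2, a3⟩ := hA
      obtain ⟨b1, b2, b3⟩ := hB
      simp only at a1 a2 b1 b2
      by_cases hxy : x = y
      · subst hxy
        have e : (lprod (⟨i, x⟩ :: A))⁻¹ * lprod (⟨i, x⟩ :: B) = (lprod A)⁻¹ * lprod B := by
          simp [mul_assoc]
        rw [e]
        by_cases h2 : hd A ≠ hd B ∨ hd A = none
        · rw [direct _ _ a3 b3 h2]
          have := J_cyc i _ _ a2 b2 h2
          simp only [tau]
          rw [abs_le] at this ⊢
          constructor <;> linarith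
        · push Not at h2
          have := ih B a3 b3
          simp only [tau]
          rw [h2.1]
          rw [abs_le] at this ⊢
          constructor <;> linarith
      · have hr : Red (⟨i, x⁻¹ * y⟩ :: B) := ⟨by
          simp only
          intro h
          exact hxy (inv_mul_eq_one.1 h), b2, b3⟩
        have e : (lprod (⟨i, x⟩ :: A))⁻¹ * lprod (⟨i, y⟩ :: B) = (lprod A)⁻¹ * lprod (⟨i, x⁻¹ * y⟩ :: B) := by
          simp [mul_assoc]
        rw [e, direct _ _ a3 hr (Or.inl a2)]
        have := sg_tri hP i x y a1
        have h5 := J_anti (hd A) (some i)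
        simp only [tau]
        rw [show hd (⟨i, x⁻¹ * y⟩ :: B) = some i from rfl]
        rw [abs_le] at this ⊢
        constructor <;> linarith

theorem tau_nf_inv (hP : ∀ i, IsCone (P i)) (g : CoprodI S) : tau P (nf g⁻¹) = - tau P (nf g) := by
  have : nf g⁻¹ = iapp (nf g) [] :=
    nf_eq (red_iapp _ _ (red_nf g) trivial (by
      cases h : hd (nf g)
      · exact Or.inr rfl
      · left; simp [hd])) (by rw [lprod_iapp]; simp)
  rw [this, tau_iapp hP _ _ (red_nf g)]
  cases hd (nf g) <;> simp [tau, hd, J]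

/-- a free product of left-ordered groups is left orderable -/
theorem exists_cone (hP : ∀ i, IsCone (P i)) : ∃ Q : Set (CoprodI S), IsCone Q := by
  refine ⟨{g | 0 < tau P (nf g)}, ?_, ?_, ?_⟩
  · intro x hx y hy
    simp only [Set.mem_ofPred_eq] at hx hy ⊢
    have := tau_main hP (nf x⁻¹) (nf y) (red_nf _) (red_nf _)
    rw [lprod_nf, lprod_nf, inv_inv, tau_nf_inv hP, abs_le] at this
    omega
  · simp [nf_one, tau]
  · intro x hx
    simp only [Set.mem_ofPred_eq]
    rw [tau_nf_inv hP]
    have := tau_odd (P := P) (nf x) (red_nf x) (fun h => hx (nf_eq_nil.1 h))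
    obtain ⟨k, hk⟩ := this
    omega

end tau
end
end FP

theorem IsCone.torsionFree {G : Type*} [Group G] {Q : Set G} (hQ : IsCone Q) (x : G) (hx : x ≠ 1) :
    ¬ IsOfFinOrder x := by
  have key : ∀ y ∈ Q, ∀ n : ℕ, y ^ (n + 1) ∈ Q := by
    intro y hy n
    induction n with
    | zero => simpa using hy
    | succ n ih => rw [pow_succ]; exact hQ.mul _ ih _ hy
  have key2 : ∀ y ∈ Q, ¬ IsOfFinOrder y := by
    intro y hy h
    obtain ⟨n, hn, h⟩ := isOfFinOrder_iff_pow_eq_one.1 h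
    obtain ⟨m, rfl⟩ := Nat.exists_eq_add_of_lt hn
    have := key y hy m
    rw [show m + 1 = 0 + m + 1 by omega, h] at this
    exact hQ.one this
  rcases hQ.tot x hx with h | h
  · exact key2 x h
  · exact fun h' => key2 _ h h'.inv

end HN


namespace HN
namespace FP

open Monoid

section
variable {ι : Type*} {S : ι → Type*} [∀ i, Group (S i)]

/-- the right multiplication lemma -/
theorem exists_red_mul (l : List (Σ i, S i)) (hl : Red l) (hne : l ≠ []) (j : ι) (s : S j) :
    ∃ l', Red l' ∧ lprod l' = lprod l * CoprodI.of s ∧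
      ((l' = [] ∧ hd l = some j) ∨ hd l' = hd l) := by
  induction l with
  | nil => exact absurd rfl hne
  | cons x l ih =>
    obtain ⟨h1, h2, h3⟩ := hl
    by_cases hs : s = 1
    · exact ⟨x :: l, ⟨h1, h2, h3⟩, by simp [hs], Or.inr rfl⟩
    cases l with
    | nil =>
      by_cases hj : j = x.1
      · obtain ⟨i, x⟩ := x
        simp only at hj
        subst hj
        by_cases hx : x * s = 1
        · refine ⟨[], trivial, ?_, Or.inl ⟨rfl, rfl⟩⟩
          simp [← map_mul, hx]
        · refine ⟨[⟨j, x * s⟩], ⟨hx, by simp [hd], trivial⟩, ?_, Or.inr rfl⟩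
          simp
      · refine ⟨[x, ⟨j, s⟩], ⟨h1, ?_, hs, by simp [hd], trivial⟩, by simp, Or.inr rfl⟩
        simpa [hd] using hj
    | cons y l =>
      obtain ⟨l', r, e, h⟩ := ih h3 (by simp)
      refine ⟨x :: l', ⟨h1, ?_, r⟩, by simp [e, mul_assoc], Or.inr rfl⟩
      rcases h with ⟨h, _⟩ | h
      · rw [h]; simp [hd]
      · rw [h]; exact h2

theorem hd_nf_mul {g : CoprodI S} {i : ι} (hg : hd (nf g) = some i) (j : ι) (s : S j) :
    (g * CoprodI.of s = 1 ∧ j = i) ∨ hd (nf (g * CoprodI.of s)) = some i := by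
  have hne : nf g ≠ [] := fun h => by rw [h] at hg; simp [hd] at hg
  obtain ⟨l', r, e, h⟩ := exists_red_mul (nf g) (red_nf g) hne j s
  rw [lprod_nf] at e
  rcases h with ⟨h, h'⟩ | h
  · left
    refine ⟨by rw [← e, h, lprod_nil], ?_⟩
    rw [hg] at h'
    exact (Option.some.inj h').symm
  · right
    rw [nf_eq r e, h, hg]

variable (S) in
/-- edges of the Bass-Serre tree -/
structure Edge where
  /-- index -/
  i : ι
  /-- element -/
  g : CoprodI S

theorem Edge.ext' {e f : Edge S} (h : e.i = f.i) (h' : e.g = f.g) : e = f := by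
  cases e; cases f; simp_all

instance : MulAction (CoprodI S) (Edge S) where
  smul x e := ⟨e.i, x * e.g⟩
  one_smul e := Edge.ext' rfl (one_mul _)
  mul_smul x y e := Edge.ext' rfl (mul_assoc _ _ _)

@[simp] theorem smul_i (x : CoprodI S) (e : Edge S) : (x • e).i = e.i := rfl
@[simp] theorem smul_g (x : CoprodI S) (e : Edge S) : (x • e).g = x * e.g := rfl

variable (S) in
/-- vertices of the Bass-Serre tree -/
abbrev Vert := CoprodI S ⊕ (Σ i : ι, CoprodI S ⧸ (CoprodI.of (M := S) (i := i)).range)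

/-- coset -/
def cos (i : ι) (g : CoprodI S) : CoprodI S ⧸ (CoprodI.of (M := S) (i := i)).range := QuotientGroup.mk g

theorem cos_eq (i : ι) (g k : CoprodI S) : cos i g = cos i k ↔ ∃ s : S i, g * CoprodI.of s = k := by
  unfold cos
  rw [QuotientGroup.eq, MonoidHom.mem_range]
  constructor
  · rintro ⟨s, h⟩; exact ⟨s, by rw [h]; simp⟩
  · rintro ⟨s, rfl⟩; exact ⟨s, by simp⟩

theorem smul_cos (i : ι) (x g : CoprodI S) : x • cos i g = cos i (x * g) := rfl

/-- the half tree -/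
def halfP (e : Edge S) : Vert S → Prop
  | Sum.inl x => hd (nf (e.g⁻¹ * x)) = some e.i
  | Sum.inr ⟨j, c⟩ => (∃ h : j = e.i, c = h ▸ cos e.i e.g) ∨
      ∃ z, cos j z = c ∧ hd (nf (e.g⁻¹ * z)) = some e.i

theorem halfP_inr (e : Edge S) (j : ι) (k : CoprodI S) :
    halfP e (Sum.inr ⟨j, cos j k⟩) ↔ (j = e.i ∧ cos j k = cos j e.g) ∨
      ∃ s : S j, hd (nf (e.g⁻¹ * (k * CoprodI.of s))) = some e.i := by
  obtain ⟨i, g⟩ := e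
  simp only [halfP]
  refine or_congr ?_ ?_
  · constructor
    · rintro ⟨h, h'⟩
      subst h
      exact ⟨rfl, h'⟩
    · rintro ⟨h, h'⟩
      subst h
      exact ⟨rfl, h'⟩
  · constructor
    · rintro ⟨z, h, h'⟩
      obtain ⟨s, rfl⟩ := (cos_eq _ _ _).1 h.symm
      exact ⟨s, h'⟩
    · rintro ⟨s, h⟩
      exact ⟨_, ((cos_eq _ _ _).2 ⟨s, rfl⟩).symm, h⟩

variable (S) in
/-- The Bass-Serre tree of the free product -/
def tree : GTree (CoprodI S) (Vert S) (Edge S) where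
  src e := Sum.inl e.g
  tgt e := Sum.inr ⟨e.i, cos e.i e.g⟩
  half e := {v | halfP e v}
  src_not e := by
    simp [halfP, nf_one, hd]
  tgt_mem e := by
    rw [Set.mem_ofPred_eq, halfP_inr]
    exact Or.inl ⟨rfl, rfl⟩
  cross e f hne := by
    rw [Set.mem_ofPred_eq, Set.mem_ofPred_eq, halfP_inr]
    constructor
    · intro h
      exact Or.inr ⟨1, by simpa [halfP] using h⟩
    · obtain ⟨i, g⟩ := e
      obtain ⟨j, k⟩ := f
      simp only
      rintro (⟨h, h'⟩ | ⟨s, h⟩)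
      · subst h
        obtain ⟨s, rfl⟩ := (cos_eq _ _ _).1 h'.symm
        have hs : s ≠ 1 := by
          rintro rfl
          exact hne (by simp)
        change hd (nf (g⁻¹ * (g * CoprodI.of s))) = some j
        rw [inv_mul_cancel_left, nf_eq (l := [⟨j, s⟩]) ⟨hs, by simp [hd], trivial⟩ (by simp)]
        rfl
      · rcases hd_nf_mul h j s⁻¹ with ⟨h1, h2⟩ | h1
        · exfalso
          apply hne
          subst h2
          have : g⁻¹ * k = 1 := by simpa [mul_assoc] using h1
          rw [inv_mul_eq_one.1 this]
        · change hd (nf (g⁻¹ * k)) = some i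
          simpa [mul_assoc] using h1
  conn p hp := by
    have h1 : ∀ (j : ι) (s : S j) (x : CoprodI S), p (Sum.inl x) ↔ p (Sum.inl (x * CoprodI.of s)) := by
      intro j s x
      have a := hp ⟨j, x⟩
      have b := hp ⟨j, x * CoprodI.of s⟩
      simp only at a b
      rw [a, b, (cos_eq j x _).2 ⟨s, rfl⟩]
    have h2 : ∀ y x : CoprodI S, p (Sum.inl x) ↔ p (Sum.inl (x * y)) := by
      intro y
      induction y using CoprodI.induction_on with
      | one => simp
      | of j s => exact h1 j s
      | mul a b ha hb => intro x; rw [ha x, hb (x * a), mul_assoc]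
    have h3 : ∀ v, p v ↔ p (Sum.inl 1) := by
      have h4 : ∀ x, p (Sum.inl x) ↔ p (Sum.inl 1) := by
        intro x
        simpa using (h2 x 1).symm
      rintro (x | ⟨j, c⟩)
      · exact h4 x
      · obtain ⟨x, rfl⟩ := QuotientGroup.mk_surjective c
        have := hp ⟨j, x⟩
        rw [← h4 x]
        exact this.symm
    intro u v hu
    rwa [h3 v, ← h3 u]
  src_smul g e := rfl
  tgt_smul g e := rfl
  half_smul g v e := by
    rw [Set.mem_ofPred_eq, Set.mem_ofPred_eq]
    rcases v with x | ⟨j, c⟩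
    · change hd (nf ((g * e.g)⁻¹ * (g * x))) = some e.i ↔ _
      simp [mul_assoc, halfP]
    · obtain ⟨x, rfl⟩ := QuotientGroup.mk_surjective c
      change halfP (g • e) (Sum.inr ⟨j, cos j (g * x)⟩) ↔ halfP e (Sum.inr ⟨j, cos j x⟩)
      rw [halfP_inr, halfP_inr]
      simp only [smul_i, smul_g, cos_eq, mul_assoc, mul_inv_rev, inv_mul_cancel_left, mul_right_inj]
  free g e h := by
    have := congrArg Edge.g h
    simpa using this

open Classical in
/-- left order on the edges -/
noncomputable def edgeOrder [LinearOrder ι] {Q : Set (CoprodI S)} (hQ : IsCone Q) :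
    LinearOrder (Edge S) :=
  letI r : Edge S → Edge S → Prop := fun e f => e.g⁻¹ * f.g ∈ Q ∨ (e.g = f.g ∧ e.i < f.i)
  haveI : IsStrictTotalOrder (Edge S) r :=
    { irrefl := by
        rintro e (h | h)
        · exact hQ.one (by simpa using h)
        · exact lt_irrefl _ h.2
      trans := by
        rintro a b c (h | h) (h' | h')
        · left; simpa [mul_assoc] using hQ.mul _ h _ h'
        · left; rwa [← h'.1]
        · left; rwa [h.1]
        · right; exact ⟨h.1.trans h'.1, h.2.trans h'.2⟩
      trichotomous := by
        intro a b h1 h2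
        by_contra hne
        by_cases hg : a.g = b.g
        · rcases lt_trichotomy a.i b.i with h | h | h
          · exact h1 (Or.inr ⟨hg, h⟩)
          · exact hne (Edge.ext' h hg)
          · exact h2 (Or.inr ⟨hg.symm, h⟩)
        · rcases hQ.tot (a.g⁻¹ * b.g) (fun h => hg (inv_mul_eq_one.1 h)) with h | h
          · exact h1 (Or.inl h)
          · exact h2 (Or.inl (by simpa using h)) }
  linearOrderOfSTO r

theorem edgeOrder_smul [LinearOrder ι] {Q : Set (CoprodI S)} (hQ : IsCone Q) (g : CoprodI S)
    (e f : Edge S) (h : (edgeOrder hQ).lt e f) : (edgeOrder hQ).lt (g • e) (g • f) := by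
  change _ ∨ _ at h
  change _ ∨ _
  simpa [mul_assoc] using h

theorem stab {m : ℕ} (hgen : ∀ (i : ι) (K : Subgroup (S i)), GenLE K m)
    (hsurj : ∀ (i : ι) (K : Subgroup (S i)), K ≠ ⊥ → SurjZ K 1)
    (K : Subgroup (CoprodI S)) (hK : K ≠ ⊥) (hv : ∃ v : Vert S, ∀ k ∈ K, k • v = v) :
    GenLE K m ∧ SurjZ K 1 := by
  obtain ⟨x | ⟨i, c⟩, hv⟩ := hv
  · exfalso
    apply hK
    rw [Subgroup.eq_bot_iff_forall]
    intro k hk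
    have := Sum.inl.inj (hv k hk)
    simpa using this
  · obtain ⟨g, rfl⟩ := QuotientGroup.mk_surjective c
    let f : S i →* CoprodI S := (MulAut.conj g).toMonoidHom.comp CoprodI.of
    have hf : Function.Injective f := (MulAut.conj g).injective.comp (CoprodI.of_injective i)
    have hle : K ≤ f.range := by
      intro k hk
      have h1 : (⟨i, cos i (k * g)⟩ : Σ i : ι, CoprodI S ⧸ (CoprodI.of (M := S) (i := i)).range) = ⟨i, cos i g⟩ :=
        Sum.inr.inj (hv k hk)
      rw [Sigma.mk.injEq] at h1
      obtain ⟨s, hs⟩ := (cos_eq _ _ _).1 (eq_of_heq h1.2).symm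
      refine ⟨s, ?_⟩
      simp [f, hs]
    have hmap : (K.comap f).map f = K := by
      rw [Subgroup.map_comap_eq]
      exact inf_eq_right.2 hle
    rw [← hmap]
    refine ⟨(hgen i _).map f, (hsurj i _ ?_).map f hf⟩
    intro h
    rw [h, Subgroup.map_bot] at hmap
    exact hK hmap.symm

end
end FP

theorem final
    (t : ℕ) (S : Fin t → Type*) [∀ i, Group (S i)]
    (h : Fin t → ℕ)
    (hsp : ∀ i, ∃ c : Fin (h i + 1) → Subgroup (S i), IsInfiniteCyclicSeries (h i) c)
    (M : ℕ) (hM : M = Finset.univ.sup h)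
    (n₁ n₂ : ℕ) (H₁ H₂ : Subgroup (Monoid.CoprodI S))
    (hH₁ : GenLE H₁ n₁) (hH₂ : GenLE H₂ n₂) :
    GenLE (H₁ ⊓ H₂) (M * (n₁ - 1) * (n₂ - 1) + M) := by
  have hle : ∀ i, h i ≤ M := fun i => hM ▸ Finset.le_sup (Finset.mem_univ i)
  choose c hc using hsp
  have hp := fun i => poly_main (hc i)
  have hgen : ∀ (i : Fin t) (K : Subgroup (S i)), GenLE K M := fun i K => ((hp i).1 K).mono (hle i)
  have hsurj : ∀ (i : Fin t) (K : Subgroup (S i)), K ≠ ⊥ → SurjZ K 1 := fun i => (hp i).2.1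
  choose P hP using fun i => (hp i).2.2
  by_cases h0 : M = 0
  · subst h0
    have htriv : ∀ i (s : S i), s = 1 := by
      intro i s
      obtain ⟨F, hF, hF0⟩ := hgen i ⊤
      rw [Nat.le_zero, Finset.card_eq_zero] at hF0
      subst hF0
      have : s ∈ (⊤ : Subgroup (S i)) := trivial
      rw [← hF] at this
      simpa using this
    have hG : ∀ g : Monoid.CoprodI S, g = 1 := by
      intro g
      induction g using Monoid.CoprodI.induction_on with
      | one => rfl
      | of i s => rw [htriv i s, map_one]
      | mul a b ha hb => rw [ha, hb, one_mul]
    have : H₁ ⊓ H₂ = ⊥ := by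
      rw [Subgroup.eq_bot_iff_forall]
      exact fun x _ => hG x
    rw [this]
    exact genLE_bot.mono (Nat.zero_le _)
  · obtain ⟨Q, hQ⟩ := FP.exists_cone hP
    let _ := FP.edgeOrder (S := S) hQ
    exact GTree.main_abstract (fun g e f h => FP.edgeOrder_smul hQ g e f h) (FP.tree S) (Sum.inl 1)
      (Nat.one_le_iff_ne_zero.2 h0) hQ.torsionFree (FP.stab hgen hsurj) hH₁ hH₂

end HN

/-- let `G = S 1 ∗ … ∗ S t` be a free product of strongly polycyclic groups,
where `S i` has Hirsch number `h i`, and let `M = max {h 1, …, h t}`. Then for all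
`n₁, n₂ ≥ 1` and all subgroups `H₁, H₂` of `G` generated by at most `n₁` and `n₂`
elements respectively, `H₁ ⊓ H₂` is generated by at most `M(n₁ − 1)(n₂ − 1) + M`
elements. In particular `G` is strongly Howson. -/
theorem inter_genLE_of_free_product_strongly_polycyclic
    (t : ℕ) (ht : 0 < t) (S : Fin t → Type*) [∀ i, Group (S i)]
    (h : Fin t → ℕ)
    (hsp : ∀ i, ∃ c : Fin (h i + 1) → Subgroup (S i), IsInfiniteCyclicSeries (h i) c)
    (M : ℕ) (hM : M = Finset.univ.sup h)
    (n₁ n₂ : ℕ) (hn₁ : 1 ≤ n₁) (hn₂ : 1 ≤ n₂)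
    (H₁ H₂ : Subgroup (Monoid.CoprodI S))
    (hH₁ : ∃ T : Finset (Monoid.CoprodI S),
      Subgroup.closure (T : Set (Monoid.CoprodI S)) = H₁ ∧ T.card ≤ n₁)
    (hH₂ : ∃ T : Finset (Monoid.CoprodI S),
      Subgroup.closure (T : Set (Monoid.CoprodI S)) = H₂ ∧ T.card ≤ n₂) :
    ∃ T : Finset (Monoid.CoprodI S),
      Subgroup.closure (T : Set (Monoid.CoprodI S)) = H₁ ⊓ H₂ ∧
        T.card ≤ M * (n₁ - 1) * (n₂ - 1) + M := by
  exact HN.final t S h hsp M hM n₁ n₂ H₁ H₂ hH₁ hH₂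
end

section
/- Let G be a group with a subgroup F of finite index such that F is a Takahasi group, i.e., for every M ∈ ℕ, every ascending chain K_1 ≤ K_2 ≤ K_3 ≤ ... of subgroups of F, each generated by at most M elements, is eventually constant. Then G is a Takahasi group: for every M ∈ ℕ, every ascending chain H_1 ≤ H_2 ≤ H_3 ≤ ... of subgroups of G, each generated by at most M elements, is eventually constant. -/
/-- A group `G` is a Takahasi group if for every `M : ℕ`, every ascending chain of
subgroups of `G`, each generated by at most `M` elements, is eventually constant. -/
def IsTakahasiGroup (G : Type*) [Group G] : Prop :=
  ∀ M : ℕ, ∀ H : ℕ → Subgroup G, (∀ i, H i ≤ H (i + 1)) →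
    (∀ i, ∃ S : Finset G, Subgroup.closure (S : Set G) = H i ∧ S.card ≤ M) →
    ∃ p, ∀ i, p ≤ i → H i = H p

theorem takahasi_schreier_aux {G : Type*} [Group G] (F : Subgroup G) [F.FiniteIndex]
    (M : ℕ) (S : Finset G) (hM : S.card ≤ M) :
    ∃ T : Finset F, Subgroup.closure (T : Set F) =
      (Subgroup.closure (S : Set G)).subgroupOf F ∧ T.card ≤ F.index * M := by
  classical
  set H := Subgroup.closure (S : Set G) with hH
  let S' : Finset H := S.preimage (↑) Subtype.val_injective.injOn
  have hS' : Subgroup.closure (S' : Set H) = ⊤ := by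
    rw [Finset.coe_preimage]
    exact Subgroup.closure_closure_coe_preimage
  have hcard : S'.card ≤ S.card :=
    Finset.card_le_card_of_injOn (fun x => (x : G)) (fun x hx => by simpa [S'] using hx)
      Subtype.val_injective.injOn
  obtain ⟨T, hT, hT'⟩ := Subgroup.exists_finset_card_le_mul (F.subgroupOf H) hS'
  let φ : F.subgroupOf H →* F :=
    { toFun := fun x => ⟨((x : H) : G), x.2⟩
      map_one' := rfl
      map_mul' := fun _ _ => rfl }
  refine ⟨T.image φ, ?_, ?_⟩
  · rw [Finset.coe_image, ← MonoidHom.map_closure, hT']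
    ext x
    constructor
    · rintro ⟨y, -, rfl⟩
      exact y.1.2
    · intro hx
      exact ⟨⟨⟨x, hx⟩, x.2⟩, trivial, rfl⟩
  · have hi : (F.subgroupOf H).index ≤ F.index := by
      have h := Subgroup.relIndex_le_of_le_right (H := F) (K := H) (L := ⊤) le_top
        (by simpa using Subgroup.FiniteIndex.index_ne_zero)
      rwa [Subgroup.relIndex_top_right] at h
    exact Finset.card_image_le.trans (hT.trans (Nat.mul_le_mul hi (hcard.trans hM)))

/-- a finite extension of a Takahasi group is a Takahasi group. -/
theorem isTakahasiGroup_of_finite_extension {G : Type*} [Group G] (F : Subgroup G)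
    [F.FiniteIndex] (hF : IsTakahasiGroup ↥F) : IsTakahasiGroup G := by
  intro M H hH hgen
  have hmono : Monotone H := monotone_nat_of_le_succ hH
  obtain ⟨p, hp⟩ := hF (F.index * M) (fun i => (H i).subgroupOf F)
    (fun i => Subgroup.comap_mono (hH i)) (fun i => by
      obtain ⟨S, hS, hM⟩ := hgen i
      simpa only [hS] using takahasi_schreier_aux F M S hM)
  have : Finite (G ⧸ F) := inferInstance
  obtain ⟨q, hq⟩ := WellFoundedGT.monotone_chain_condition
    (⟨fun i => (QuotientGroup.mk '' (H i : Set G) : Set (G ⧸ F)),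
      fun i j h => Set.image_mono (hmono h)⟩ : ℕ →o Set (G ⧸ F))
  refine ⟨max p q, fun i hi => le_antisymm (fun x hx => ?_) (hmono hi)⟩
  have h1 : (QuotientGroup.mk x : G ⧸ F) ∈ (QuotientGroup.mk '' (H q : Set G) : Set (G ⧸ F)) := by
    have := hq i (le_of_max_le_right hi)
    change QuotientGroup.mk '' (H q : Set G) = QuotientGroup.mk '' (H i : Set G) at this
    rw [this]
    exact ⟨x, hx, rfl⟩
  obtain ⟨y, hy, hyx⟩ := h1
  have h2 : y⁻¹ * x ∈ F := QuotientGroup.eq.mp hyx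
  have h3 : (⟨y⁻¹ * x, h2⟩ : F) ∈ (H i).subgroupOf F :=
    (H i).mul_mem ((H i).inv_mem (hmono (le_of_max_le_right hi) hy)) hx
  have h4 : (⟨y⁻¹ * x, h2⟩ : F) ∈ (H p).subgroupOf F := by
    have := hp i (le_of_max_le_left hi)
    exact this ▸ h3
  have h5 : y⁻¹ * x ∈ H (max p q) := hmono (le_max_left p q) h4
  have h6 := (H (max p q)).mul_mem (hmono (le_max_right p q) hy) h5
  simpa using h6
end

section
/- Let G be a group having a free subgroup of finite index. Then G is a Takahasi group: for every natural number M, every ascending chain H_1 ≤ H_2 ≤ H_3 ≤ ... of subgroups of G, each generated by at most M elements, is eventually constant. -/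
/-- A finite family of elements, each in some member of a chain, lies in one member. -/
theorem exists_common_index {G : Type*} [Group G] {H : ℕ → Subgroup G} (hH : Monotone H)
    {A : Type*} [Finite A] (f : A → G) (hf : ∀ a, ∃ i, f a ∈ H i) :
    ∃ p, ∀ a, f a ∈ H p := by
  cases nonempty_fintype A
  choose g hg using hf
  exact ⟨Finset.univ.sup g, fun a => hH (Finset.le_sup (Finset.mem_univ a)) (hg a)⟩

/-- A free group in which every finite subset lies in an `M`-generated subgroup is
finitely generated. -/
theorem free_fg_of_locally_bounded {K : Type*} [Group K] [IsFreeGroup K] (M : ℕ)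
    (h : ∀ T : Finset K, ∃ S : Finset K, S.card ≤ M ∧ (T : Set K) ⊆ Subgroup.closure (S : Set K)) :
    ∃ T : Finset K, Subgroup.closure (T : Set K) = ⊤ := by
  classical
  let X := IsFreeGroup.Generators K
  let b : FreeGroupBasis X K := IsFreeGroup.basis K
  let φ : K →* Multiplicative (X →₀ ℚ) :=
    b.lift (fun x => Multiplicative.ofAdd (Finsupp.single x (1 : ℚ)))
  have hφ : ∀ x, (φ (b x)).toAdd = Finsupp.single x (1 : ℚ) := by
    intro x
    have := congr_fun (b.lift.symm_apply_apply
      (fun x => Multiplicative.ofAdd (Finsupp.single x (1 : ℚ)))) x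
    exact congrArg Multiplicative.toAdd this
  have hbound : ∀ T : Finset X, T.card ≤ M := by
    intro T
    obtain ⟨S, hS, hTS⟩ := h (T.image b)
    let W : Submodule ℚ (X →₀ ℚ) :=
      Submodule.span ℚ ((S.image (fun s => (φ s).toAdd) : Finset (X →₀ ℚ)) : Set (X →₀ ℚ))
    have hW : Module.finrank ℚ W ≤ M :=
      (finrank_span_finset_le_card _).trans (Finset.card_image_le.trans hS)
    have hcl : ∀ k ∈ Subgroup.closure (S : Set K), (φ k).toAdd ∈ W := by
      intro k hk
      have : Subgroup.closure (S : Set K) ≤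
          (AddSubgroup.toSubgroup W.toAddSubgroup).comap φ := by
        rw [Subgroup.closure_le]
        intro s hs
        exact Submodule.subset_span (Finset.mem_coe.2 (Finset.mem_image_of_mem _ hs))
      exact this hk
    have hmem : ∀ x : T, Finsupp.single (x : X) (1 : ℚ) ∈ W := by
      intro x
      rw [← hφ]
      exact hcl _ (hTS (Finset.mem_coe.2 (Finset.mem_image_of_mem _ x.2)))
    have hli : LinearIndependent ℚ (fun x : T => (⟨_, hmem x⟩ : W)) := by
      apply LinearIndependent.of_comp W.subtype
      have h0 := (Finsupp.basisSingleOne (R := ℚ) (ι := X)).linearIndependent.comp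
        (fun x : T => (x : X)) Subtype.val_injective
      convert h0 using 1
      ext1 x
      simp
    have := hli.fintype_card_le_finrank
    simpa using this.trans hW
  have hfin : Finite X := by
    by_contra hinf
    rw [not_finite_iff_infinite] at hinf
    obtain ⟨T, hT⟩ := Infinite.exists_subset_card_eq X (M + 1)
    have := hbound T
    omega
  cases nonempty_fintype X
  refine ⟨Finset.univ.image b, ?_⟩
  rw [eq_top_iff]
  have h1 : (⊤ : Subgroup K) = (⊤ : Subgroup (FreeGroup X)).map b.repr.symm.toMonoidHom := by
    rw [← MonoidHom.range_eq_map, eq_comm, MonoidHom.range_eq_top]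
    exact b.repr.symm.surjective
  rw [h1, ← FreeGroup.closure_range_of, MonoidHom.map_closure, ← Set.range_comp]
  apply Subgroup.closure_mono
  rintro _ ⟨x, rfl⟩
  exact Finset.mem_coe.2 (Finset.mem_image_of_mem b (Finset.mem_univ x))

/-- every group with a free subgroup of finite index (i.e. every virtually
free group) is a Takahasi group. -/
theorem isTakahasiGroup_of_virtually_free {G : Type*} [Group G] (F : Subgroup G)
    [IsFreeGroup ↥F] [F.FiniteIndex] : IsTakahasiGroup G := by
  classical
  intro M H hstep hgen
  have hmono : Monotone H := monotone_nat_of_le_succ hstep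
  let U : Subgroup G := ⨆ i, H i
  have hU : ∀ g, g ∈ U ↔ ∃ i, g ∈ H i := fun g =>
    Subgroup.mem_iSup_of_directed hmono.directed_le
  have hleU : ∀ i, H i ≤ U := le_iSup H
  let K : Subgroup F := U.subgroupOf F
  obtain ⟨T, hT⟩ : ∃ T : Finset K, Subgroup.closure (T : Set K) = ⊤ := by
    apply free_fg_of_locally_bounded (F.index * M)
    intro T
    obtain ⟨p, hp⟩ := exists_common_index hmono (fun t : T => (((t : K) : F) : G))
      (fun t => (hU _).1 t.1.2)
    obtain ⟨S, hS, hSM⟩ := hgen p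
    obtain ⟨S', hS', hS'M⟩ : ∃ S' : Finset (H p),
        Subgroup.closure (S' : Set (H p)) = ⊤ ∧ S'.card ≤ M := by
      have hsub : ∀ s ∈ S, s ∈ H p := fun s hs => hS ▸ Subgroup.subset_closure hs
      refine ⟨S.subtype (· ∈ H p), ?_, ?_⟩
      · apply Subgroup.map_injective (H p).subtype_injective
        rw [MonoidHom.map_closure, ← MonoidHom.range_eq_map, Subgroup.range_subtype]
        conv_rhs => rw [← hS]
        congr 1
        ext s
        constructor
        · rintro ⟨x, hx, rfl⟩
          simpa using hx
        · intro hs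
          exact ⟨⟨s, hsub s hs⟩, by simpa using hs, rfl⟩
      · rw [Finset.card_subtype]
        exact (Finset.card_filter_le _ _).trans hSM
    obtain ⟨R, hR, hRtop⟩ := Subgroup.exists_finset_card_le_mul (F.subgroupOf (H p)) hS'
    let φ : F.subgroupOf (H p) →* K :=
      { toFun := fun x => ⟨⟨((x : H p) : G), x.2⟩, hleU p x.1.2⟩
        map_one' := rfl
        map_mul' := fun _ _ => rfl }
    refine ⟨R.image φ, ?_, ?_⟩
    · refine Finset.card_image_le.trans (hR.trans (Nat.mul_le_mul ?_ hS'M))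
      have h1 : F.relIndex (H p) ≤ F.relIndex ⊤ :=
        Subgroup.relIndex_le_of_le_right le_top
          (by rw [Subgroup.relIndex_top_right]; exact Subgroup.FiniteIndex.index_ne_zero)
      rwa [Subgroup.relIndex_top_right] at h1
    · intro t ht
      rw [Finset.coe_image, ← MonoidHom.map_closure, hRtop]
      exact ⟨⟨⟨t.1.1, hp ⟨t, ht⟩⟩, t.1.2⟩, trivial, rfl⟩
  obtain ⟨p, hp⟩ := exists_common_index hmono (fun t : T => (((t : K) : F) : G))
      (fun t => (hU _).1 t.1.2)
  obtain ⟨q, hq⟩ := exists_common_index hmono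
    (fun c : U ⧸ F.subgroupOf U => ((Quotient.out c : U) : G))
      (fun c => (hU _).1 (Quotient.out c : U).2)
  have hK : ∀ k : K, ((k : F) : G) ∈ H (max p q) := by
    intro k
    have : Subgroup.closure (T : Set K) ≤
        (H (max p q)).comap (F.subtype.comp K.subtype) := by
      rw [Subgroup.closure_le]
      intro t ht
      exact hmono (le_max_left p q) (hp ⟨t, ht⟩)
    rw [hT] at this
    exact this (Subgroup.mem_top k)
  have hUle : U ≤ H (max p q) := by
    intro u hu
    have h1 : (QuotientGroup.mk (s := F.subgroupOf U) (⟨u, hu⟩ : U)).out⁻¹ * ⟨u, hu⟩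
        ∈ F.subgroupOf U := QuotientGroup.eq.1 (QuotientGroup.out_eq' _)
    have h2 := hK ⟨⟨_, h1⟩, SetLike.coe_mem ((QuotientGroup.mk (s := F.subgroupOf U) (⟨u, hu⟩ : U)).out⁻¹ * ⟨u, hu⟩)⟩
    have h3 := mul_mem (hmono (le_max_right p q)
      (hq (QuotientGroup.mk (s := F.subgroupOf U) (⟨u, hu⟩ : U)))) h2
    simpa using h3
  exact ⟨max p q, fun i hi => le_antisymm ((hleU i).trans hUle) (hmono hi)⟩
end

section
/- Let N = S_1 ∗ ... ∗ S_t be the free product of finitely many groups S_1, ..., S_t, where each S_i admits a subnormal series with all quotients infinite cyclic (i.e., each S_i is strongly polycyclic). Then N is a Takahasi group: for every natural number M, every ascending chain H_1 ≤ H_2 ≤ H_3 ≤ ... of subgroups of N, each generated by at most M elements, is eventually constant. -/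
def SubgroupsGood {G : Type*} [Group G] (B : Subgroup G) : Prop :=
  ∀ K : Subgroup G, K ≤ B → K.FG ∧
    (K ≠ ⊥ → ∃ φ : K →* Multiplicative ℤ, ∃ k, φ k ≠ 1)

theorem SubgroupsGood.extend {G : Type*} [Group G] {A B : Subgroup G}
    (hA : SubgroupsGood A) (π : B →* Multiplicative ℤ)
    (hπ : ∀ x : B, π x = 1 ↔ (x : G) ∈ A) : SubgroupsGood B := by
  intro K hK
  by_cases hKA : K ≤ A
  · exact hA K hKA
  let φ : K →* Multiplicative ℤ := π.comp (Subgroup.inclusion hK)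
  have hφ : ∀ x : K, φ x = 1 ↔ (x : G) ∈ A := fun x => hπ _
  refine ⟨?_, fun _ => ⟨φ, ?_⟩⟩
  · obtain ⟨g, hg⟩ := (inferInstance : IsCyclic φ.range).exists_generator
    obtain ⟨k0, hk0⟩ := g.2
    obtain ⟨T, hT⟩ := (hA (K ⊓ A) inf_le_right).1
    classical
    refine ⟨insert (k0 : G) T, le_antisymm ?_ ?_⟩
    · rw [Subgroup.closure_le]
      intro x hx
      simp only [Finset.coe_insert, Set.mem_insert_iff, Finset.mem_coe] at hx
      rcases hx with rfl | hx
      · exact k0.2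
      · have : x ∈ K ⊓ A := hT ▸ Subgroup.subset_closure hx
        exact this.1
    · intro x hx
      obtain ⟨n, hn⟩ := Subgroup.mem_zpowers_iff.1 (hg ⟨φ ⟨x, hx⟩, ⟨_, rfl⟩⟩)
      have hn' : φ k0 ^ n = φ ⟨x, hx⟩ := by
        have := congrArg Subtype.val hn
        simpa [hk0] using this
      have h1 : φ (⟨x, hx⟩ * (k0 ^ n)⁻¹) = 1 := by
        rw [map_mul, map_inv, map_zpow, hn', mul_inv_cancel]
      have h2 := (hφ _).1 h1
      have h3 : x * ((k0 : G) ^ n)⁻¹ ∈ Subgroup.closure (T : Set G) := by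
        rw [hT]
        exact ⟨K.mul_mem hx (K.inv_mem (K.zpow_mem k0.2 n)), by simpa using h2⟩
      have h4 : x = x * ((k0 : G) ^ n)⁻¹ * (k0 : G) ^ n := by group
      rw [h4]
      refine Subgroup.mul_mem _ (Subgroup.closure_mono (by simp) h3)
        (Subgroup.zpow_mem _ (Subgroup.subset_closure (by simp)) n)
  · obtain ⟨k, hk, hkA⟩ := SetLike.not_le_iff_exists.1 hKA
    exact ⟨⟨k, hk⟩, fun h => hkA ((hφ _).1 h)⟩

theorem IsInfiniteCyclicSeries.good {G : Type*} [Group G] {n : ℕ}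
    {c : Fin (n + 1) → Subgroup G} (h : IsInfiniteCyclicSeries n c) :
    SubgroupsGood (⊤ : Subgroup G) := by
  obtain ⟨h0, hl, hs⟩ := h
  rw [← h0]
  suffices ∀ i, SubgroupsGood (c i) from this 0
  intro i
  induction i using Fin.reverseInduction with
  | last =>
    rw [hl]
    intro K hK
    have : K = ⊥ := le_bot_iff.1 hK
    subst this
    exact ⟨⟨∅, by simp⟩, fun h => (h rfl).elim⟩
  | cast i ih =>
    obtain ⟨hle, hn, hc, hi⟩ := hs i
    obtain ⟨g, hg⟩ := hc.exists_generator
    have ho : orderOf g = 0 := by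
      rw [orderOf_eq_card_of_forall_mem_zpowers hg, Nat.card_eq_zero_of_infinite]
    have hbij : Function.Bijective (zpowersHom _ g) := by
      constructor
      · intro a b hab
        have h1 : g ^ a.toAdd = g ^ b.toAdd := hab
        have h2 := injective_zpow_iff_not_isOfFinOrder.2 (orderOf_eq_zero_iff.1 ho) h1
        exact h2
      · intro x
        obtain ⟨n, hn⟩ := Subgroup.mem_zpowers_iff.1 (hg x)
        exact ⟨Multiplicative.ofAdd n, hn⟩
    let e := (MulEquiv.ofBijective _ hbij).symm
    refine ih.extend (e.toMonoidHom.comp (QuotientGroup.mk' _)) ?_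
    intro x
    show e (QuotientGroup.mk' _ x) = 1 ↔ _
    rw [map_eq_one_iff e e.injective]
    show (QuotientGroup.mk x : _ ⧸ _) = 1 ↔ _
    rw [QuotientGroup.eq_one_iff, Subgroup.mem_subgroupOf]

theorem exists_cocycle {I : Type*} {S : I → Type*} [∀ i, Group (S i)] {X : Type*}
    [MulAction (Monoid.CoprodI S) X] (ci : ∀ i, S i → X → ℤ)
    (h : ∀ i s t x, ci i (s * t) x = ci i s (Monoid.CoprodI.of t • x) + ci i t x) :
    ∃ c : Monoid.CoprodI S → X → ℤ, (∀ m n x, c (m * n) x = c m (n • x) + c n x) ∧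
      ∀ i (s : S i) x, c (Monoid.CoprodI.of s) x = ci i s x := by
  have h1 : ∀ i x, ci i 1 x = 0 := by
    intro i x
    have := h i 1 1 x
    simpa using this
  let Φ : Monoid.CoprodI S →* Function.End (X × ℤ) := Monoid.CoprodI.lift (fun i =>
    { toFun := fun s => (fun p => (Monoid.CoprodI.of s • p.1, p.2 + ci i s p.1) : X × ℤ → X × ℤ)
      map_one' := by
        funext p
        simp [h1]
        rfl
      map_mul' := by
        intro s t
        funext p
        show _ = ((_, _) : X × ℤ)
        simp only [map_mul, mul_smul, h]
        congr 1
        ring })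
  have hof : ∀ i (s : S i) p,
      Φ (Monoid.CoprodI.of s) p = (Monoid.CoprodI.of s • p.1, p.2 + ci i s p.1) := by
    intro i s p
    simp only [Φ, Monoid.CoprodI.lift_of]
    rfl
  have hmul : ∀ m n p, Φ (m * n) p = Φ m (Φ n p) := by
    intro m n p
    rw [map_mul]; rfl
  have key : ∀ n x q, Φ n (x, q) = (n • x, q + (Φ n (x, 0)).2) := by
    intro n
    induction n using Monoid.CoprodI.induction_on with
    | one => intro x q; show (Φ 1) (x, q) = _; rw [map_one]; show (x, q) = (_, q + 0); simp
    | of i s => intro x q; simp [hof]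
    | mul m n hm hn =>
      intro x q
      rw [hmul, hmul, hn x q, hn x 0, hm _ (q + _), hm _ (0 + _), mul_smul]
      simp [add_assoc]
  refine ⟨fun n x => (Φ n (x, 0)).2, fun m n x => ?_, fun i s x => by simp [hof]⟩
  show (Φ (m * n) (x, 0)).2 = (Φ m (n • x, 0)).2 + (Φ n (x, 0)).2
  rw [hmul, key n x 0, key m]
  simp [add_comm]

open Monoid in
theorem exists_tree {I : Type*} {S : I → Type*} [∀ i, Group (S i)] {X : Type*}
    [MulAction (CoprodI S) X] (x0 : X) (htr : ∀ x : X, ∃ g : CoprodI S, g • x0 = x) :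
    ∃ (b : I → X → X) (τ : ∀ i, X → S i) (p : ∀ x, x ≠ x0 → I) (r : X → CoprodI S),
      (∀ i (s : S i) x, b i (CoprodI.of s • x) = b i x) ∧
      (∀ i x, CoprodI.of (τ i x) • b i x = x) ∧
      (∀ i x, b i (b i x) = b i x) ∧
      (∀ i x, τ i (b i x) = 1) ∧
      r x0 = 1 ∧
      (∀ x, r x • x0 = x) ∧
      (∀ i, b i x0 = x0) ∧
      (∀ x h, r x = CoprodI.of (τ (p x h) x) * r (b (p x h) x)) ∧
      -- induction principle along the tree
      (∀ P : X → Prop, P x0 → (∀ x h, P (b (p x h) x) → P x) → ∀ x, P x) := by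
  classical
  let W : X → ℕ → Prop := fun x n => ∃ l : List (Σ i, S i), l.length = n ∧
    (l.map (fun a => (CoprodI.of a.2 : CoprodI S))).prod • x0 = x
  have hW : ∀ x, ∃ n, W x n := by
    intro x
    obtain ⟨g, rfl⟩ := htr x
    suffices ∃ l : List (Σ i, S i), (l.map (fun a => (CoprodI.of a.2 : CoprodI S))).prod = g by
      obtain ⟨l, hl⟩ := this
      exact ⟨_, l, rfl, by rw [hl]⟩
    induction g using CoprodI.induction_on with
    | one => exact ⟨[], rfl⟩
    | of i s => exact ⟨[⟨i, s⟩], by simp⟩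
    | mul m n hm hn =>
      obtain ⟨l, hl⟩ := hm
      obtain ⟨l', hl'⟩ := hn
      exact ⟨l ++ l', by simp [hl, hl']⟩
  let d : X → ℕ := fun x => Nat.find (hW x)
  have hd0 : d x0 = 0 := (Nat.find_eq_zero (hW x0)).2 ⟨[], rfl, by simp⟩
  have hd0' : ∀ x, d x = 0 → x = x0 := by
    intro x hx
    obtain ⟨l, hl, h⟩ := (Nat.find_eq_zero (hW x)).1 hx
    have : l = [] := List.length_eq_zero_iff.1 hl
    subst this
    simpa using h.symm
  have hstep : ∀ x, x ≠ x0 → ∃ i, ∃ s : S i, d (CoprodI.of s • x) < d x := by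
    intro x hx
    obtain ⟨l, hl, h⟩ := Nat.find_spec (hW x)
    match l, hl, h with
    | [], hl, h => exact (hx (by simpa using h.symm)).elim
    | a :: l, hl, h =>
      refine ⟨a.1, a.2⁻¹, ?_⟩
      have h1 : d (CoprodI.of a.2⁻¹ • x) ≤ l.length := by
        refine Nat.find_min' _ ⟨l, rfl, ?_⟩
        rw [← h]
        simp [mul_smul]
      have h2 : l.length + 1 = d x := by simpa using hl
      omega
  let R : I → Setoid X := fun i =>
    { r := fun x y => ∃ s : S i, CoprodI.of s • x = y
      iseqv := 
      { refl := fun x => ⟨1, by simp⟩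
        symm := by
          rintro x y ⟨s, rfl⟩
          exact ⟨s⁻¹, by simp⟩
        trans := by
          rintro x y z ⟨s, rfl⟩ ⟨t, rfl⟩
          exact ⟨t * s, by simp [mul_smul]⟩ } }
  have hbase : ∀ i (q : Quotient (R i)), ∃ y, Quotient.mk (R i) y = q ∧
      ∀ z, Quotient.mk (R i) z = q → d y ≤ d z := by
    intro i q
    obtain ⟨y0, hy0⟩ := Quotient.exists_rep q
    have hne : {y | Quotient.mk (R i) y = q}.Nonempty := ⟨y0, hy0⟩
    exact ⟨Function.argminOn d _ hne, Function.argminOn_mem d _ hne,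
      fun z hz => Function.argminOn_le d _ hz⟩
  choose B hB hBmin using hbase
  let b : I → X → X := fun i x => B i (Quotient.mk (R i) x)
  have hb1 : ∀ i (s : S i) x, b i (CoprodI.of s • x) = b i x := by
    intro i s x
    have : Quotient.mk (R i) (CoprodI.of s • x) = Quotient.mk (R i) x :=
      (Quotient.sound ⟨s, rfl⟩ : Quotient.mk (R i) x = _).symm
    simp only [b, this]
  have hb2 : ∀ i x, ∃ s : S i, CoprodI.of s • b i x = x := fun i x =>
    Quotient.exact (hB i (Quotient.mk (R i) x))
  have hbb : ∀ i x, b i (b i x) = b i x := by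
    intro i x
    simp only [b, hB]
  have hτ : ∀ i x, ∃ s : S i, CoprodI.of s • b i x = x ∧ (x = b i x → s = 1) := by
    intro i x
    by_cases h : x = b i x
    · exact ⟨1, by simpa using h.symm, fun _ => rfl⟩
    · obtain ⟨s, hs⟩ := hb2 i x
      exact ⟨s, hs, fun h' => (h h').elim⟩
  choose τ hτ1 hτ2 using hτ
  have hbd : ∀ i x, d (b i x) ≤ d x := fun i x => hBmin i _ x rfl
  have hp : ∀ x, x ≠ x0 → ∃ i, d (b i x) < d x := by
    intro x hx
    obtain ⟨i, s, hs⟩ := hstep x hx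
    exact ⟨i, (hb1 i s x ▸ hbd i (CoprodI.of s • x)).trans_lt hs⟩
  choose p hp using hp
  let r : X → CoprodI S := (measure d).wf.fix (fun x ih =>
    if h : x = x0 then 1 else CoprodI.of (τ (p x h) x) * ih (b (p x h) x) (hp x h))
  have hr0 : r x0 = 1 := by
    simp only [r]
    rw [WellFounded.fix_eq]
    simp
  have hr1 : ∀ x h, r x = CoprodI.of (τ (p x h) x) * r (b (p x h) x) := by
    intro x h
    simp only [r]
    rw [WellFounded.fix_eq]
    simp [h]
  have hind : ∀ P : X → Prop, P x0 → (∀ x h, P (b (p x h) x) → P x) → ∀ x, P x := by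
    intro P h0 h1 x
    induction x using (measure d).wf.induction with
    | _ x ih =>
      by_cases h : x = x0
      · rw [h]; exact h0
      · exact h1 x h (ih _ (hp x h))
  refine ⟨b, τ, p, r, hb1, hτ1, hbb, fun i x => hτ2 i _ (hbb i x).symm, hr0, ?_, ?_, hr1, hind⟩
  · refine hind _ (by simp [hr0]) ?_
    intro x h ih
    rw [hr1 x h, mul_smul, ih, hτ1]
  · intro i
    apply hd0'
    have := hbd i x0
    omega

universe u v w

theorem takahasi_of_key {G : Type*} [Group G]
    (key : ∀ H : Subgroup G, ∃ (J : Type w) (h : J → G) (ψ : J → G → ℤ),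
      (∀ j, h j ∈ H) ∧ (∀ j, ∀ a ∈ H, ∀ b ∈ H, ψ j (a * b) = ψ j a + ψ j b) ∧
      (∀ j, ψ j (h j) ≠ 0) ∧ (∀ j k, j ≠ k → ψ j (h k) = 0) ∧ (Finite J → H.FG)) :
    IsTakahasiGroup G := by
  intro M H hmono hgen
  have hm : Monotone H := monotone_nat_of_le_succ hmono
  have hmem : ∀ x, x ∈ (⨆ n, H n) ↔ ∃ n, x ∈ H n := fun x =>
    Subgroup.mem_iSup_of_directed hm.directed_le
  have hle : ∀ n, H n ≤ ⨆ n, H n := fun n => le_iSup H n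
  have hfin : ∀ T : Finset G, (T : Set G) ⊆ (⨆ n, H n : Subgroup G) → ∃ n, (T : Set G) ⊆ H n := by
    classical
    intro T
    induction T using Finset.induction_on with
    | empty => intro _; exact ⟨0, by simp⟩
    | insert a T _ ih =>
      intro h
      rw [Finset.coe_insert, Set.insert_subset_iff] at h
      obtain ⟨n, hn⟩ := ih h.2
      obtain ⟨m, hm'⟩ := (hmem a).1 h.1
      refine ⟨max m n, ?_⟩
      rw [Finset.coe_insert, Set.insert_subset_iff]
      exact ⟨hm (le_max_left _ _) hm', fun x hx => hm (le_max_right _ _) (hn hx)⟩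
  obtain ⟨J, h, ψ, hh, hψ, hne, hz, hfg⟩ := key (⨆ n, H n)
  have hJ : Finite J := by
    by_contra hinf
    rw [not_finite_iff_infinite] at hinf
    let e : Fin (M + 1) ↪ J := (Fin.valEmbedding).trans (Infinite.natEmbedding J)
    classical
    obtain ⟨n, hn⟩ := hfin (Finset.univ.image (fun k => h (e k))) (by
      intro x hx
      simp only [Finset.coe_image, Set.mem_image] at hx
      obtain ⟨k, _, rfl⟩ := hx
      exact hh _)
    obtain ⟨T, hT, hTM⟩ := hgen n
    let Ψ : G → (Fin (M + 1) → ℚ) := fun a k => (ψ (e k) a : ℚ)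
    have hΨmul : ∀ a ∈ (⨆ n, H n), ∀ b ∈ (⨆ n, H n), Ψ (a * b) = Ψ a + Ψ b := by
      intro a ha b hb
      funext k
      simp [Ψ, hψ _ a ha b hb]
    have hΨ1 : Ψ 1 = 0 := by
      have := hΨmul 1 (one_mem _) 1 (one_mem _)
      simpa using this
    have hspan : ∀ a ∈ Subgroup.closure (T : Set G), Ψ a ∈ Submodule.span ℚ (Ψ '' T) := by
      have hc : ∀ a ∈ Subgroup.closure (T : Set G), a ∈ (⨆ n, H n) := fun a ha =>
        hle n (hT ▸ ha)
      intro a ha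
      induction ha using Subgroup.closure_induction with
      | mem x hx => exact Submodule.subset_span ⟨x, hx, rfl⟩
      | one => rw [hΨ1]; exact zero_mem _
      | mul x y hx hy ihx ihy => rw [hΨmul x (hc x hx) y (hc y hy)]; exact add_mem ihx ihy
      | inv x hx ih =>
        have := hΨmul x (hc x hx) x⁻¹ (inv_mem (hc x hx))
        rw [mul_inv_cancel, hΨ1] at this
        rw [← neg_eq_of_add_eq_zero_right this.symm]
        exact neg_mem ih
    have htop : Submodule.span ℚ (Ψ '' T) = ⊤ := by
      rw [eq_top_iff, ← (Pi.basisFun ℚ (Fin (M + 1))).span_eq, Submodule.span_le]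
      rintro _ ⟨k, rfl⟩
      have h1 : h (e k) ∈ Subgroup.closure (T : Set G) := by
        rw [hT]; exact hn (by simp)
      have h2 : Ψ (h (e k)) = (ψ (e k) (h (e k)) : ℚ) • Pi.basisFun ℚ (Fin (M + 1)) k := by
        funext l
        by_cases hl : l = k
        · subst hl; simp [Ψ]
        · have := hz (e l) (e k) (fun h => hl (e.injective h))
          simp [Ψ, this, hl]
      have h3 := hspan _ h1
      rw [h2] at h3
      exact (Submodule.smul_mem_iff _ (by exact_mod_cast hne (e k))).1 h3
    have hfr : Module.finrank ℚ (Submodule.span ℚ (Ψ '' T)) ≤ M := by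
      rw [← Finset.coe_image]
      exact (finrank_span_finset_le_card _).trans (Finset.card_image_le.trans hTM)
    rw [htop, finrank_top, Module.finrank_fin_fun] at hfr
    omega
  obtain ⟨T, hT⟩ := hfg hJ
  obtain ⟨p, hp⟩ := hfin T (by rw [← hT]; exact Subgroup.subset_closure)
  have hp' : (⨆ n, H n) ≤ H p := by rw [← hT, Subgroup.closure_le]; exact hp
  exact ⟨p, fun i hi => le_antisymm ((hle i).trans hp') (hm hi)⟩

open Monoid in
theorem key_lemma {I : Type u} {S : I → Type v} [∀ i, Group (S i)]
    (hS : ∀ i, SubgroupsGood (⊤ : Subgroup (S i))) (H : Subgroup (CoprodI S)) :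
    ∃ (J : Type (max u v)) (h : J → CoprodI S) (ψ : J → CoprodI S → ℤ),
      (∀ j, h j ∈ H) ∧ (∀ j, ∀ a ∈ H, ∀ b ∈ H, ψ j (a * b) = ψ j a + ψ j b) ∧
      (∀ j, ψ j (h j) ≠ 0) ∧ (∀ j k, j ≠ k → ψ j (h k) = 0) ∧ (Finite J → H.FG) := by
  classical
  let X := CoprodI S ⧸ H
  let x0 : X := ((1 : CoprodI S) : X)
  have hx0 : ∀ g : CoprodI S, g • x0 = x0 ↔ g ∈ H := by
    intro g
    have h1 : g • x0 = ((g : CoprodI S) : X) := by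
      simp [x0, X]
    rw [h1]
    show (QuotientGroup.mk g : CoprodI S ⧸ H) = QuotientGroup.mk 1 ↔ _
    rw [eq_comm, QuotientGroup.eq]
    simp
  have htr : ∀ x : X, ∃ g : CoprodI S, g • x0 = x := by
    intro x
    obtain ⟨g, rfl⟩ := QuotientGroup.mk_surjective x
    exact ⟨g, by simp [x0, X]⟩
  clear_value x0
  obtain ⟨b, τ, p, r, hb, hτ, hbb, hτ1, hr0, hr, hb0, hrp, hind⟩ := exists_tree x0 htr
  -- transfer elements
  have hstab : ∀ i (s : S i) x, CoprodI.of ((τ i (CoprodI.of s • x))⁻¹ * s * τ i x) • b i x =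
      b i x := by
    intro i s x
    rw [map_mul, map_mul, mul_smul, mul_smul, hτ, map_inv, inv_smul_eq_iff]
    conv_rhs => rw [← hb i s x, hτ]
  -- homs from data
  have hcoc : ∀ (φ : ∀ i, X → S i → ℤ) (f : I → X → ℤ),
      (∀ i x s t, CoprodI.of s • x = x → CoprodI.of t • x = x →
        φ i x (s * t) = φ i x s + φ i x t) →
      (∀ i x, (x = b i x ∨ ∃ h, i = p x h) → f i x = 0) →
      ∃ ψ : CoprodI S → ℤ, (∀ a ∈ H, ∀ b ∈ H, ψ (a * b) = ψ a + ψ b) ∧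
        (∀ i x, ψ ((r x)⁻¹ * CoprodI.of (τ i x) * r (b i x)) = f i x) ∧
        (∀ i x s, b i x = x → CoprodI.of s • x = x →
          ψ ((r x)⁻¹ * CoprodI.of s * r x) = φ i x s) := by
    intro φ f hφ hf
    obtain ⟨c, hc, hci⟩ := exists_cocycle (X := X) (fun i s x =>
      φ i (b i x) ((τ i (CoprodI.of s • x))⁻¹ * s * τ i x) + f i (CoprodI.of s • x) - f i x) (by
        intro i s t x
        have h1 := hφ i (b i x) ((τ i (CoprodI.of s • CoprodI.of t • x))⁻¹ * s *
          τ i (CoprodI.of t • x)) ((τ i (CoprodI.of t • x))⁻¹ * t * τ i x)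
          (by have := hstab i s (CoprodI.of t • x); rwa [hb] at this) (hstab i t x)
        have h2 : (τ i (CoprodI.of s • CoprodI.of t • x))⁻¹ * s *
          τ i (CoprodI.of t • x) * ((τ i (CoprodI.of t • x))⁻¹ * t * τ i x) =
          (τ i (CoprodI.of s • CoprodI.of t • x))⁻¹ * (s * t) * τ i x := by group
        rw [h2] at h1
        simp only [map_mul, mul_smul, hb, h1]
        ring)
    have hφ1 : ∀ i x, φ i x 1 = 0 := by
      intro i x
      have := hφ i x 1 1 (by simp) (by simp)
      simpa using this
    have hfb : ∀ i x, f i (b i x) = 0 := fun i x => hf i _ (Or.inl (hbb i x).symm)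
    have hcτ : ∀ i x, c (CoprodI.of (τ i x)) (b i x) = f i x := by
      intro i x
      rw [hci, hτ, hτ1, hbb, hfb]
      simp [hφ1]
    have hc1 : ∀ x, c 1 x = 0 := by
      intro x
      have := hc 1 1 x
      simpa using this
    have hcr : ∀ x, c (r x) x0 = 0 := by
      refine hind _ (by rw [hr0, hc1]) ?_
      intro x h ih
      rw [hrp x h, hc, ih, hr, hcτ, hf _ _ (Or.inr ⟨h, rfl⟩), add_zero]
    have hcrg : ∀ x y g, g • x = y → c ((r y)⁻¹ * g * r x) x0 = c g x := by
      intro x y g hg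
      have h1 : c ((r y)⁻¹) y = 0 := by
        have := hc (r y)⁻¹ (r y) x0
        rw [inv_mul_cancel, hc1, hr, hcr] at this
        omega
      rw [hc, hcr, hr, hc, hg, h1]
      ring
    refine ⟨fun g => c g x0, ?_, ?_, ?_⟩
    · intro a ha g hg
      show c _ _ = _
      rw [hc, (hx0 g).2 hg]
    · intro i x
      show c _ _ = _
      rw [hcrg _ _ _ (hτ i x), hcτ]
    · intro i x s hx hs
      show c _ _ = _
      have h1 : τ i x = 1 := by
        have := hτ1 i x
        rwa [hx] at this
      rw [hcrg _ _ _ hs, hci, hs, hx, h1]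
      simp
  have hmemH : ∀ x y g, g • x = y → (r y)⁻¹ * g * r x ∈ H := by
    intro x y g hg
    rw [← hx0, mul_smul, mul_smul, hr, hg, inv_smul_eq_iff, hr]
  let St : ∀ i, X → Subgroup (S i) := fun i x =>
    (MulAction.stabilizer (CoprodI S) x).comap CoprodI.of
  have hSt : ∀ i x s, s ∈ St i x ↔ CoprodI.of s • x = x := fun i x s => Iff.rfl
  let J1 := {e : I × X // ¬ (e.2 = b e.1 e.2 ∨ ∃ h, e.1 = p e.2 h)}
  let J2 := {e : I × X // b e.1 e.2 = e.2 ∧ St e.1 e.2 ≠ ⊥}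
  have hphi : ∀ j : J2, ∃ φ : S j.1.1 → ℤ, (∀ s t, s ∈ St j.1.1 j.1.2 → t ∈ St j.1.1 j.1.2 →
      φ (s * t) = φ s + φ t) ∧ ∃ s ∈ St j.1.1 j.1.2, φ s ≠ 0 := by
    intro j
    obtain ⟨φ, k, hk⟩ := ((hS j.1.1) (St j.1.1 j.1.2) le_top).2 j.2.2
    refine ⟨fun s => if h : s ∈ St j.1.1 j.1.2 then (φ ⟨s, h⟩).toAdd else 0, ?_, k, k.2, ?_⟩
    · intro s t hs ht
      beta_reduce
      rw [dif_pos hs, dif_pos ht, dif_pos (mul_mem hs ht), ← toAdd_mul, ← map_mul]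
      rfl
    · beta_reduce
      rw [dif_pos k.2]
      intro h
      exact hk (toAdd_eq_zero.1 h)
  choose φ hφ s hs hsne using hphi
  let h : J1 ⊕ J2 → CoprodI S := Sum.elim
    (fun e => (r e.1.2)⁻¹ * CoprodI.of (τ e.1.1 e.1.2) * r (b e.1.1 e.1.2))
    (fun j => (r j.1.2)⁻¹ * CoprodI.of (s j) * r j.1.2)
  have hψ : ∀ j : J1 ⊕ J2, ∃ ψ : CoprodI S → ℤ,
      (∀ a ∈ H, ∀ b ∈ H, ψ (a * b) = ψ a + ψ b) ∧ ψ (h j) ≠ 0 ∧ ∀ k, j ≠ k → ψ (h k) = 0 := by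
    rintro (e | j)
    · obtain ⟨ψ, h1, h2, h3⟩ := hcoc (fun _ _ _ => 0)
        (fun i x => if (i, x) = e.1 then 1 else 0) (by simp) (by
          intro i x hix
          rw [if_neg]
          intro h
          apply e.2
          rw [← h]
          exact hix)
      refine ⟨ψ, h1, ?_, ?_⟩
      · simp only [h, Sum.elim_inl, h2]
        simp
      · rintro (k | k) hk
        · simp only [h, Sum.elim_inl, h2]
          rw [if_neg]
          intro h
          exact hk (congrArg _ (Subtype.ext h.symm))
        · simp only [h, Sum.elim_inr]
          rw [h3 k.1.1 _ _ k.2.1 (hs k)]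
    · obtain ⟨ψ, h1, h2, h3⟩ := hcoc
        (fun i x t => if h : (i, x) = j.1 then φ j (cast (by rw [← h]) t) else 0)
        (fun i x => 0) (by
          intro i x u v hu hv
          by_cases h : (i, x) = j.1
          · obtain ⟨⟨i', x'⟩, hj⟩ := j
            simp only [Prod.mk.injEq] at h
            obtain ⟨rfl, rfl⟩ := h
            simp only [dif_pos, cast_eq]
            exact hφ ⟨(i, x), hj⟩ u v hu hv
          · simp [h]) (by simp)
      refine ⟨ψ, h1, ?_, ?_⟩
      · simp only [h, Sum.elim_inr]
        rw [h3 j.1.1 _ _ j.2.1 (hs j)]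
        simpa using hsne j
      · rintro (k | k) hk
        · simp only [h, Sum.elim_inl, h2]
        · simp only [h, Sum.elim_inr]
          rw [h3 k.1.1 _ _ k.2.1 (hs k), dif_neg]
          intro h
          exact hk (congrArg _ (Subtype.ext h.symm))
  choose ψ hψ1 hψ2 hψ3 using hψ
  refine ⟨J1 ⊕ J2, h, ψ, ?_, hψ1, hψ2, hψ3, ?_⟩
  · rintro (e | j)
    · exact hmemH _ _ _ (hτ _ _)
    · exact hmemH _ _ _ (hs j)
  · intro hfin
    have hf1 : Finite J1 := Finite.sum_left J2
    have hf2 : Finite J2 := Finite.sum_right J1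
    have hT : ∀ j : J2, ∃ T : Finset (S j.1.1), Subgroup.closure (T : Set (S j.1.1)) =
      St j.1.1 j.1.2 := fun j => ((hS j.1.1) (St j.1.1 j.1.2) le_top).1
    choose T hT using hT
    let cj : ∀ i, X → S i →* CoprodI S := fun i x =>
      (MulAut.conj (r x)⁻¹).toMonoidHom.comp CoprodI.of
    have hcj : ∀ i x s, cj i x s = (r x)⁻¹ * CoprodI.of s * r x := by
      intro i x s
      simp [cj]
    let A : Set (CoprodI S) := Set.range (fun e : J1 => h (Sum.inl e)) ∪
      ⋃ j : J2, (cj j.1.1 j.1.2) '' (T j)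
    have hA : A.Finite := (Set.finite_range _).union
      (Set.finite_iUnion fun j => (T j).finite_toSet.image _)
    rw [Subgroup.fg_iff]
    refine ⟨A, le_antisymm ?_ ?_, hA⟩
    · rw [Subgroup.closure_le]
      rintro g (⟨e, rfl⟩ | hg)
      · exact hmemH _ _ _ (hτ _ _)
      · obtain ⟨j, u, hu, rfl⟩ := Set.mem_iUnion.1 hg
        rw [hcj]
        apply hmemH
        have : u ∈ St j.1.1 j.1.2 := by
          rw [← hT]; exact Subgroup.subset_closure hu
        exact this
    · have he : ∀ i x, (r x)⁻¹ * CoprodI.of (τ i x) * r (b i x) ∈ Subgroup.closure A := by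
        intro i x
        by_cases hix : x = b i x ∨ ∃ h, i = p x h
        · have : (r x)⁻¹ * CoprodI.of (τ i x) * r (b i x) = 1 := by
            rcases hix with hx | ⟨hx, rfl⟩
            · have h1 := hτ1 i x
              rw [← hx] at h1
              rw [← hx, h1]
              simp
            · rw [mul_assoc, ← hrp x hx, inv_mul_cancel]
          rw [this]; exact one_mem _
        · exact Subgroup.subset_closure (Or.inl ⟨⟨(i, x), hix⟩, rfl⟩)
      have hst : ∀ i x u, b i x = x → u ∈ St i x →
          (r x)⁻¹ * CoprodI.of u * r x ∈ Subgroup.closure A := by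
        intro i x u hx hu
        by_cases hbot : St i x = ⊥
        · rw [hbot, Subgroup.mem_bot] at hu
          simp [hu]
        · let j : J2 := ⟨(i, x), hx, hbot⟩
          have h1 : (St i x).map (cj i x) ≤ Subgroup.closure A := by
            rw [← hT j, MonoidHom.map_closure, Subgroup.closure_le]
            intro g hg
            exact Subgroup.subset_closure (Or.inr (Set.mem_iUnion.2 ⟨j, hg⟩))
          rw [← hcj]
          exact h1 ⟨u, hu, rfl⟩
      have hall : ∀ (g : CoprodI S) (x : X), (r (g • x))⁻¹ * g * r x ∈ Subgroup.closure A := by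
        intro g
        induction g using CoprodI.induction_on with
        | one => intro x; simp
        | of i u =>
          intro x
          have h1 := hst i (b i x) _ (hbb i x) (hstab i u x)
          have h2 := mul_mem (mul_mem (he i (CoprodI.of u • x)) h1) (inv_mem (he i x))
          convert h2 using 1
          rw [hb]
          simp only [map_mul, map_inv]
          group
        | mul m n hm hn =>
          intro x
          have := mul_mem (hm (n • x)) (hn x)
          convert this using 1
          rw [mul_smul]
          group
      intro g hg
      have := hall g x0
      rwa [(hx0 g).2 hg, hr0, inv_one, one_mul, mul_one] at this

/-- a free product `N = S 1 ∗ … ∗ S t` of finitely many strongly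
polycyclic groups is a Takahasi group. -/
theorem isTakahasiGroup_of_free_product_strongly_polycyclic
    (t : ℕ) (S : Fin t → Type*) [∀ i, Group (S i)]
    (hsp : ∀ i, ∃ (h : ℕ) (c : Fin (h + 1) → Subgroup (S i)), IsInfiniteCyclicSeries h c) :
    IsTakahasiGroup (Monoid.CoprodI S) := by
  refine takahasi_of_key (key_lemma ?_)
  intro i
  obtain ⟨n, c, hc⟩ := hsp i
  exact hc.good
end
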